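/- arXiv:1608.00857 — 2 statements merged into one kernel-verified Lean document; each statement's English description precedes it below -/
import Mathlib

section
/- Fix integers m > n ≥ 1 and a real γ ≥ 1. There exists a constant C̃ ≥ 1 depending only on m, n and γ such that for every nonempty closed set Z ⊊ ℝ^m there is an m-dimensional simplicial complex Σ with Σ^{(m)} = ℝ^m ∖ Z satisfying the Whitney triangulation conclusions, for which the following holds: for every metric space Y that is Lipschitz (n−1)-connected with constant γ, every L ≥ 0 and every L-Lipschitz map f : Z → Y, there is an extension f̃ : Z ∪ Σ^{(n)} → Y of f such that (1) f̃ is L·C̃-Lipschitz on every n-simplex of Σ, and (2) for every vertex a ∈ Σ^{(0)}, f̃(a) = f(z_a) for some point z_a ∈ Z with |z_a − a| = dist(a, Z). -/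
open MeasureTheory Metric Set
noncomputable section

/-- `Euc d` is `ℝ^d` with the Euclidean metric. -/
abbrev Euc (d : ℕ) := EuclideanSpace ℝ (Fin d)

/-- The `k`-skeleton (as a subset of `ℝ^m`) of a simplicial complex: the union of all of
its `k`-simplices (faces with `k+1` vertices). -/
def skel (m : ℕ) (K : Geometry.SimplicialComplex ℝ (Euc m)) (k : ℕ) : Set (Euc m) :=
  ⋃ s ∈ {s ∈ K.faces | s.card = k + 1}, convexHull ℝ (s : Set (Euc m))

/-- The diameter of the simplex spanned by the vertex set `s`. -/
def simpDiam (m : ℕ) (s : Finset (Euc m)) : ℝ :=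
  Metric.diam (convexHull ℝ (s : Set (Euc m)))

/-- The distance between two subsets of `ℝ^m`. -/
def setDist (m : ℕ) (A B : Set (Euc m)) : ℝ :=
  sInf (Set.image2 dist A B)

/-- `β(ω)` for the simplex with vertex set `ω`: the minimum distance from the barycenter
of `ω` to an affine plane spanned by a face of codimension one. -/
def faceBetaMin (m : ℕ) (ω : Finset (Euc m)) : ℝ :=
  sInf { d | ∃ t ⊆ ω, t.card = ω.card - 1 ∧
    d = Metric.infDist (ω.centroid ℝ id)
          ((affineSpan ℝ (t : Set (Euc m)) : AffineSubspace ℝ (Euc m)) : Set (Euc m)) }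

/-- `B(ω)` for the simplex with vertex set `ω`: the maximum distance from the barycenter
of `ω` to an affine plane spanned by a face of codimension one. -/
def faceBetaMax (m : ℕ) (ω : Finset (Euc m)) : ℝ :=
  sSup { d | ∃ t ⊆ ω, t.card = ω.card - 1 ∧
    d = Metric.infDist (ω.centroid ℝ id)
          ((affineSpan ℝ (t : Set (Euc m)) : AffineSubspace ℝ (Euc m)) : Set (Euc m)) }

/-- `β_σ`: the minimum of `β(ω)` over all faces `ω` of `σ` of dimension `≥ 1`. -/
def betaLow (m : ℕ) (σ : Finset (Euc m)) : ℝ :=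
  sInf { b | ∃ ω ⊆ σ, 2 ≤ ω.card ∧ b = faceBetaMin m ω }

/-- `B_σ`: the maximum of `B(ω)` over all faces `ω` of `σ` of dimension `≥ 1`. -/
def betaHigh (m : ℕ) (σ : Finset (Euc m)) : ℝ :=
  sSup { b | ∃ ω ⊆ σ, 2 ≤ ω.card ∧ b = faceBetaMax m ω }

/-- The conclusions of the Whitney triangulation lemma for the closed set `Z ⊂ ℝ^m`:
`K` is an `m`-dimensional simplicial complex whose `m`-skeleton is `ℝ^m ∖ Z`, all of
whose `m`-simplices `σ` satisfy `diam σ ≤ dist(σ,Z) ≤ 12√m diam σ` and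
`D₁ < diam σ / B_σ ≤ diam σ / β_σ < D₂`. -/
def WhitneyConclusions (m : ℕ) (D₁ D₂ : ℝ) (Z : Set (Euc m))
    (K : Geometry.SimplicialComplex ℝ (Euc m)) : Prop :=
  (∀ s ∈ K.faces, s.card ≤ m + 1) ∧
  skel m K m = Zᶜ ∧
  ∀ σ ∈ K.faces, σ.card = m + 1 →
    simpDiam m σ ≤ setDist m (convexHull ℝ (σ : Set (Euc m))) Z ∧
    setDist m (convexHull ℝ (σ : Set (Euc m))) Z ≤ 12 * Real.sqrt m * simpDiam m σ ∧
    D₁ < simpDiam m σ / betaHigh m σ ∧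
    simpDiam m σ / betaHigh m σ ≤ simpDiam m σ / betaLow m σ ∧
    simpDiam m σ / betaLow m σ < D₂

/-- A metric space `Y` is Lipschitz `(n−1)`-connected with constant `c ≥ 1`:
for `k = 0, 1, …, n−1`, every `L`-Lipschitz map from the unit sphere `S^k ⊂ ℝ^{k+1}`
into `Y` extends to a `cL`-Lipschitz map on the closed unit ball `B^{k+1}`. -/
def LipschitzConnected (n : ℕ) (c : ℝ) (Y : Type) [MetricSpace Y] : Prop :=
  ∀ k : ℕ, k < n → ∀ L : ℝ, 0 ≤ L →
    ∀ f : Euc (k+1) → Y,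
      (∀ x ∈ Metric.sphere (0 : Euc (k+1)) 1, ∀ y ∈ Metric.sphere (0 : Euc (k+1)) 1,
        dist (f x) (f y) ≤ L * dist x y) →
      ∃ F : Euc (k+1) → Y,
        (∀ x ∈ Metric.closedBall (0 : Euc (k+1)) 1,
          ∀ y ∈ Metric.closedBall (0 : Euc (k+1)) 1,
            dist (F x) (F y) ≤ c * L * dist x y) ∧
        ∀ x ∈ Metric.sphere (0 : Euc (k+1)) 1, F x = f x

namespace WT

variable {m : ℕ}

def inCl (k : ℤ) (x y : Euc m) : Prop :=
  ∀ i, ((⌊x i * 2 ^ k⌋ : ℤ) : ℝ) ≤ y i * 2 ^ k ∧ y i * 2 ^ k ≤ ((⌈x i * 2 ^ k⌉ : ℤ) : ℝ)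

lemma inCl_refl (k : ℤ) (x : Euc m) : inCl k x x := fun _ => ⟨Int.floor_le _, Int.le_ceil _⟩

lemma inCl_trans {k : ℤ} {x y z : Euc m} (h : inCl k x y) (h' : inCl k y z) : inCl k x z := by
  intro i
  obtain ⟨a, b⟩ := h i
  obtain ⟨a', b'⟩ := h' i
  constructor
  · exact le_trans (by exact_mod_cast Int.le_floor.2 a) a'
  · exact le_trans b' (Int.cast_le.2 (Int.ceil_le.2 b))

lemma two_zpow_succ (k : ℤ) : (2:ℝ) ^ (k+1) = 2 * 2 ^ k := by
  rw [zpow_add₀ (by norm_num)]; ring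

lemma inCl_succ {k : ℤ} {x y : Euc m} (h : inCl (k+1) x y) : inCl k x y := by
  intro i
  obtain ⟨a, b⟩ := h i
  rw [two_zpow_succ] at a b
  constructor
  · have h1 : ((2 * ⌊x i * 2 ^ k⌋ : ℤ) : ℝ) ≤ x i * (2 * 2 ^ k) := by
      push_cast
      have := Int.floor_le (x i * 2 ^ k)
      linarith
    have h2 := Int.le_floor.2 h1
    have h3 : ((2 * ⌊x i * 2 ^ k⌋ : ℤ) : ℝ) ≤ (⌊x i * (2 * 2 ^ k)⌋ : ℤ) := by exact_mod_cast h2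
    push_cast at h3
    linarith
  · have h1 : x i * (2 * 2 ^ k) ≤ ((2 * ⌈x i * 2 ^ k⌉ : ℤ) : ℝ) := by
      push_cast
      have := Int.le_ceil (x i * 2 ^ k)
      linarith
    have h2 := Int.ceil_le.2 h1
    have h3 : ((⌈x i * (2 * 2 ^ k)⌉ : ℤ) : ℝ) ≤ ((2 * ⌈x i * 2 ^ k⌉ : ℤ) : ℝ) := by exact_mod_cast h2
    push_cast at h3
    linarith

lemma inCl_mono {j k : ℤ} (hjk : j ≤ k) {x y : Euc m} (h : inCl k x y) : inCl j x y := by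
  obtain ⟨n, rfl⟩ := Int.le.dest hjk
  induction n with
  | zero => simpa using h
  | succ n ih =>
    apply ih (by omega)
    apply inCl_succ
    convert h using 1
    push_cast; ring

lemma ceil_le_floor_add (t : ℝ) : ((⌈t⌉ : ℤ) : ℝ) ≤ (⌊t⌋ : ℤ) + 1 := by
  exact_mod_cast Int.ceil_le_floor_add_one t

lemma coord_le {k : ℤ} {x y z : Euc m} (h : inCl k x y) (h' : inCl k x z) (i : Fin m) :
    |y i - z i| ≤ 2 ^ (-k) := by
  obtain ⟨a, b⟩ := h i
  obtain ⟨a', b'⟩ := h' i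
  have h1 := ceil_le_floor_add (x i * 2 ^ k)
  have hp : (0:ℝ) < 2 ^ k := by positivity
  rw [zpow_neg, ← one_div, le_div_iff₀ hp, ← abs_of_pos hp, ← abs_mul, abs_le]
  constructor <;> linarith

lemma norm_le_of_coord (x : Euc m) (r : ℝ) (hr : 0 ≤ r) (h : ∀ i, |x i| ≤ r) :
    ‖x‖ ≤ √m * r := by
  rw [EuclideanSpace.norm_eq, ← Real.sqrt_sq hr, ← Real.sqrt_mul (by positivity)]
  apply Real.sqrt_le_sqrt
  calc ∑ i, ‖x i‖ ^ 2 ≤ ∑ _i : Fin m, r ^ 2 := by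
        apply Finset.sum_le_sum
        intro i _
        exact pow_le_pow_left₀ (norm_nonneg _) (h i) 2
    _ = m * r ^ 2 := by simp

lemma coord_le_norm (x : Euc m) (i : Fin m) : |x i| ≤ ‖x‖ := by
  have := PiLp.norm_apply_le x i
  simpa using this

lemma dist_le {k : ℤ} {x y z : Euc m} (h : inCl k x y) (h' : inCl k x z) :
    dist y z ≤ √m * 2 ^ (-k) := by
  rw [dist_eq_norm]
  exact norm_le_of_coord _ _ (by positivity) (fun i => by simpa using coord_le h h' i)

lemma convex_inCl (k : ℤ) (x : Euc m) : Convex ℝ {y | inCl k x y} := by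
  intro y hy z hz a b ha hb hab i
  obtain ⟨h1, h2⟩ := hy i
  obtain ⟨h3, h4⟩ := hz i
  have e : (a • y + b • z) i * 2 ^ k = a * (y i * 2 ^ k) + b * (z i * 2 ^ k) := by
    simp; ring
  rw [e]
  have hb' : b = 1 - a := by linarith
  constructor
  · have := mul_le_mul_of_nonneg_left h1 ha
    have := mul_le_mul_of_nonneg_left h3 hb
    subst hb'; linarith
  · have := mul_le_mul_of_nonneg_left h2 ha
    have := mul_le_mul_of_nonneg_left h4 hb
    subst hb'; linarith

variable (Z : Set (Euc m))

def good (k : ℤ) (x : Euc m) : Prop := ∃ y, inCl k x y ∧ 2 * √m * 2 ^ (-k) ≤ infDist y Z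

variable {Z}

lemma two_zpow_neg_succ (k : ℤ) : (2:ℝ) ^ (-(k+1)) = 2 ^ (-k) / 2 := by
  rw [neg_add, zpow_add₀ (by norm_num)]; norm_num; ring

lemma good_of_inCl {k : ℤ} {x y : Euc m} (h : inCl k x y) (hg : good Z k y) : good Z k x := by
  obtain ⟨z, hz, h2⟩ := hg
  exact ⟨z, inCl_trans h hz, h2⟩

lemma good_infDist {k : ℤ} {x y : Euc m} (hg : good Z k x) (h : inCl k x y) :
    √m * 2 ^ (-k) ≤ infDist y Z := by
  obtain ⟨z, hz, h2⟩ := hg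
  have h3 := infDist_le_infDist_add_dist (s := Z) (x := z) (y := y)
  have h4 := dist_le hz h
  linarith

lemma good_succ {k : ℤ} {x : Euc m} (hg : good Z k x) : good Z (k+1) x := by
  refine ⟨x, inCl_refl _ _, ?_⟩
  rw [two_zpow_neg_succ]
  have := good_infDist hg (inCl_refl _ _)
  linarith

lemma good_mono {j k : ℤ} (hjk : j ≤ k) {x : Euc m} (h : good Z j x) : good Z k x := by
  obtain ⟨n, rfl⟩ := Int.le.dest hjk
  induction n with
  | zero => simpa using h
  | succ n ih =>
    have := good_succ (ih (by omega))
    convert this using 1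
    push_cast; ring

lemma sqrt_m_pos (hm : 0 < m) : 0 < √(m:ℝ) := by positivity

lemma infDist_pos (hZ : IsClosed Z) (hne : Z.Nonempty) {x : Euc m} (hx : x ∉ Z) :
    0 < infDist x Z := (hZ.notMem_iff_infDist_pos hne).1 hx

lemma exists_small (C : ℝ) {d : ℝ} (hd : 0 < d) : ∃ k : ℤ, C * 2 ^ (-k) ≤ d := by
  obtain ⟨n, hn⟩ := pow_unbounded_of_one_lt (C / d) (one_lt_two)
  refine ⟨n, ?_⟩
  rw [zpow_neg, zpow_natCast, ← div_eq_mul_inv, div_le_iff₀ (by positivity)]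
  rw [div_lt_iff₀ hd] at hn
  linarith

lemma exists_kk (hm : 0 < m) (hZ : IsClosed Z) (hne : Z.Nonempty) {x : Euc m} (hx : x ∉ Z) :
    ∃ k : ℤ, good Z k x ∧ ∀ j < k, ¬ good Z j x := by
  classical
  have hd := infDist_pos hZ hne hx
  have hs := sqrt_m_pos hm
  obtain ⟨n, hn⟩ := pow_unbounded_of_one_lt (infDist x Z / √m) (one_lt_two)
  have key : ∀ z : ℤ, good Z z x → -(n:ℤ) ≤ z := by
    intro z hz
    by_contra hlt
    push Not at hlt
    have h1 : good Z (-(n:ℤ)) x := good_mono hlt.le hz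
    have := good_infDist h1 (inCl_refl _ _)
    rw [neg_neg, zpow_natCast] at this
    rw [div_lt_iff₀ hs] at hn
    linarith
  have ex : ∃ z : ℤ, good Z z x := by
    obtain ⟨k, hk⟩ := exists_small (2 * √m) hd
    exact ⟨k, x, inCl_refl _ _, hk⟩
  obtain ⟨k, hk, hk2⟩ := Int.exists_least_of_bdd ⟨_, key⟩ ex
  exact ⟨k, hk, fun j hj hg => by have := hk2 j hg; omega⟩

variable (Z) in
open Classical in
def kk (x : Euc m) : ℤ :=
  if h : ∃ k : ℤ, good Z k x ∧ ∀ j < k, ¬ good Z j x then h.choose else 0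

/-- standing assumptions -/
structure Hyp (Z : Set (Euc m)) : Prop where
  hm : 0 < m
  cl : IsClosed Z
  ne : Z.Nonempty

lemma kk_good (H : Hyp Z) {x : Euc m} (hx : x ∉ Z) : good Z (kk Z x) x := by
  have h := exists_kk H.hm H.cl H.ne hx
  rw [kk, dif_pos h]; exact h.choose_spec.1

lemma kk_le_iff (H : Hyp Z) {x : Euc m} (hx : x ∉ Z) {j : ℤ} : kk Z x ≤ j ↔ good Z j x := by
  refine ⟨fun h => good_mono h (kk_good H hx), fun h => ?_⟩
  by_contra hlt
  push Not at hlt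
  have h' := exists_kk H.hm H.cl H.ne hx
  rw [kk, dif_pos h'] at hlt
  exact h'.choose_spec.2 _ hlt h

lemma infDist_lt (H : Hyp Z) {x : Euc m} (hx : x ∉ Z) :
    infDist x Z < 4 * √m * 2 ^ (-(kk Z x)) := by
  by_contra hlt
  push Not at hlt
  have : good Z (kk Z x - 1) x := by
    refine ⟨x, inCl_refl _ _, ?_⟩
    have := two_zpow_neg_succ (kk Z x - 1)
    rw [sub_add_cancel] at this
    rw [this] at hlt
    linarith
  have := (kk_le_iff H hx).2 this
  omega

lemma notMem_of_inCl (H : Hyp Z) {x y : Euc m} (hx : x ∉ Z) (h : inCl (kk Z x) x y) : y ∉ Z := by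
  rw [H.cl.notMem_iff_infDist_pos H.ne]
  have := good_infDist (kk_good H hx) h
  have hs := sqrt_m_pos H.hm
  have : (0:ℝ) < √m * 2 ^ (-kk Z x) := by positivity
  linarith

lemma kk_le_of_inCl (H : Hyp Z) {x y : Euc m} (hx : x ∉ Z) (h : inCl (kk Z x) x y) :
    kk Z x ≤ kk Z y := by
  by_contra hlt
  push Not at hlt
  have hy := notMem_of_inCl H hx h
  have h1 := kk_good H hy
  have h2 := (kk_le_iff H hx).2 (good_of_inCl (inCl_mono hlt.le h) h1)
  omega

lemma kk_le_succ_of_inCl (H : Hyp Z) {x y : Euc m} (hx : x ∉ Z) (h : inCl (kk Z x) x y) :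
    kk Z y ≤ kk Z x + 1 := by
  have hy := notMem_of_inCl H hx h
  rw [kk_le_iff H hy]
  refine ⟨y, inCl_refl _ _, ?_⟩
  have := good_infDist (kk_good H hx) h
  rw [two_zpow_neg_succ]
  linarith

lemma kk_eq (H : Hyp Z) {x y : Euc m} (hx : x ∉ Z) (h : inCl (kk Z x) x y)
    (h' : inCl (kk Z x) y x) : kk Z y = kk Z x := by
  apply le_antisymm _ (kk_le_of_inCl H hx h)
  rw [kk_le_iff H (notMem_of_inCl H hx h)]
  exact good_of_inCl h' (kk_good H hx)

lemma floor_eq {k : ℤ} {x y : Euc m} (h : inCl k x y) (h' : inCl k y x) (i : Fin m) :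
    ⌊y i * 2 ^ k⌋ = ⌊x i * 2 ^ k⌋ ∧ ⌈y i * 2 ^ k⌉ = ⌈x i * 2 ^ k⌉ :=
  ⟨le_antisymm (Int.le_floor.2 (h' i).1) (Int.le_floor.2 (h i).1),
   le_antisymm (Int.ceil_le.2 (h i).2) (Int.ceil_le.2 (h' i).2)⟩

variable (Z) in
def ctr (x : Euc m) : Euc m :=
  WithLp.toLp 2 fun i => ((⌊x i * 2 ^ kk Z x⌋ : ℤ) + (⌈x i * 2 ^ kk Z x⌉ : ℤ) : ℝ) / 2 / 2 ^ kk Z x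

lemma ctr_apply (x : Euc m) (i : Fin m) : ctr Z x i * 2 ^ kk Z x =
    ((⌊x i * 2 ^ kk Z x⌋ : ℤ) + (⌈x i * 2 ^ kk Z x⌉ : ℤ) : ℝ) / 2 := by
  have : (2:ℝ) ^ kk Z x ≠ 0 := by positivity
  simp only [ctr]
  field_simp

lemma ctr_eq (H : Hyp Z) {x y : Euc m} (hx : x ∉ Z) (h : inCl (kk Z x) x y)
    (h' : inCl (kk Z x) y x) : ctr Z y = ctr Z x := by
  have := kk_eq H hx h h'
  ext i
  simp only [ctr, this, (floor_eq h h' i).1, (floor_eq h h' i).2]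

lemma floor_ceil_cases (t : ℝ) : (⌈t⌉ = ⌊t⌋ ∧ t = (⌊t⌋ : ℤ)) ∨
    (⌈t⌉ = ⌊t⌋ + 1 ∧ ((⌊t⌋ : ℤ) : ℝ) < t ∧ t < (⌊t⌋ : ℤ) + 1) := by
  rcases (Int.floor_le t).eq_or_lt with h | h
  · left
    refine ⟨?_, h.symm⟩
    rw [← h]; simp
  · right
    refine ⟨?_, h, Int.lt_floor_add_one t⟩
    apply le_antisymm (Int.ceil_le_floor_add_one t)
    have := Int.le_ceil t
    have : ((⌊t⌋ : ℤ) : ℝ) < (⌈t⌉ : ℤ) := by linarith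
    exact_mod_cast this

lemma fc_of_mem {l : ℤ} {t : ℝ} (h1 : (l:ℝ) < t) (h2 : t < l + 1) : ⌊t⌋ = l ∧ ⌈t⌉ = l + 1 := by
  constructor
  · rw [Int.floor_eq_iff]; exact ⟨h1.le, h2⟩
  · rw [Int.ceil_eq_iff]; push_cast; exact ⟨by linarith, h2.le⟩

lemma ctr_inCl (x : Euc m) : inCl (kk Z x) x (ctr Z x) ∧ inCl (kk Z x) (ctr Z x) x := by
  constructor
  · intro i
    rw [ctr_apply]
    rcases floor_ceil_cases (x i * 2 ^ kk Z x) with ⟨h, _⟩ | ⟨h, _⟩ <;> rw [h] <;> push_cast <;>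
    constructor <;> linarith
  · intro i
    rw [ctr_apply]
    rcases floor_ceil_cases (x i * 2 ^ kk Z x) with ⟨h, h2⟩ | ⟨h, h2, h3⟩
    · rw [h]
      have : ((⌊x i * 2 ^ kk Z x⌋ : ℤ) + (⌊x i * 2 ^ kk Z x⌋ : ℤ) : ℝ) / 2 = (⌊x i * 2 ^ kk Z x⌋ : ℤ) := by ring
      rw [this, Int.floor_intCast, Int.ceil_intCast, ← h2]
      simp
    · rw [h]
      obtain ⟨e1, e2⟩ := fc_of_mem (l := ⌊x i * 2 ^ kk Z x⌋)
        (t := ((⌊x i * 2 ^ kk Z x⌋ : ℤ) + ((⌊x i * 2 ^ kk Z x⌋ + 1 : ℤ) : ℝ)) / 2)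
        (by push_cast; linarith) (by push_cast; linarith)
      rw [e1, e2]
      push_cast
      constructor <;> linarith

variable (Z) in
def Vx : Set (Euc m) := {v | v ∉ Z ∧ ctr Z v = v}

lemma ctr_notMem (H : Hyp Z) {x : Euc m} (hx : x ∉ Z) : ctr Z x ∉ Z :=
  notMem_of_inCl H hx (ctr_inCl x).1

lemma kk_ctr (H : Hyp Z) {x : Euc m} (hx : x ∉ Z) : kk Z (ctr Z x) = kk Z x :=
  kk_eq H hx (ctr_inCl x).1 (ctr_inCl x).2

lemma ctr_mem (H : Hyp Z) {x : Euc m} (hx : x ∉ Z) : ctr Z x ∈ Vx Z :=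
  ⟨ctr_notMem H hx, ctr_eq H hx (ctr_inCl x).1 (ctr_inCl x).2⟩

lemma Vx_apply {v : Euc m} (hv : v ∈ Vx Z) (i : Fin m) : v i * 2 ^ kk Z v =
    ((⌊v i * 2 ^ kk Z v⌋ : ℤ) + (⌈v i * 2 ^ kk Z v⌉ : ℤ) : ℝ) / 2 := by
  have := ctr_apply (Z := Z) v i
  rwa [hv.2] at this

/-- points strictly between the centre and a point of the closed cell are in the open cell -/
lemma open_of_segment {v y : Euc m} (hv : v ∈ Vx Z) (hy : inCl (kk Z v) v y) {θ : ℝ}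
    (h0 : 0 ≤ θ) (h1 : θ < 1) : inCl (kk Z v) v (v + θ • (y - v)) ∧
      inCl (kk Z v) (v + θ • (y - v)) v := by
  have key : ∀ i, ⌊(v + θ • (y - v)) i * 2 ^ kk Z v⌋ = ⌊v i * 2 ^ kk Z v⌋ ∧
      ⌈(v + θ • (y - v)) i * 2 ^ kk Z v⌉ = ⌈v i * 2 ^ kk Z v⌉ := by
    intro i
    have e : (v + θ • (y - v)) i * 2 ^ kk Z v =
      v i * 2 ^ kk Z v + θ * (y i * 2 ^ kk Z v - v i * 2 ^ kk Z v) := by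
        simp; ring
    have hc := Vx_apply hv i
    obtain ⟨a, b⟩ := hy i
    rw [e]
    generalize v i * 2 ^ kk Z v = t at *
    generalize y i * 2 ^ kk Z v = u at *
    rcases floor_ceil_cases t with ⟨h, h2⟩ | ⟨h, h2, h3⟩
    · rw [h] at b
      have : u = t := by linarith
      rw [this]; simp
    · rw [h] at b hc
      push_cast at b hc
      rw [h]
      apply fc_of_mem
      · nlinarith
      · nlinarith
  constructor
  · intro i
    rw [← (key i).1, ← (key i).2]
    exact inCl_refl _ _ i
  · intro i
    rw [(key i).1, (key i).2]
    exact inCl_refl _ _ i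

end WT

namespace WT

variable {m : ℕ} {Z : Set (Euc m)}

variable (Z) in
structure IsCh (s : Finset (Euc m)) : Prop where
  mem : ∀ v ∈ s, v ∈ Vx Z
  tot : ∀ v ∈ s, ∀ w ∈ s, inCl (kk Z w) w v ∨ inCl (kk Z v) v w

lemma IsCh.mono {s t : Finset (Euc m)} (h : IsCh Z s) (hts : t ⊆ s) : IsCh Z t :=
  ⟨fun v hv => h.mem v (hts hv), fun v hv w hw => h.tot v (hts hv) w (hts hw)⟩

lemma le_tr (H : Hyp Z) {u v w : Euc m} (hw : w ∉ Z) (h : inCl (kk Z w) w v)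
    (h' : inCl (kk Z v) v u) : inCl (kk Z w) w u :=
  inCl_trans h (inCl_mono (kk_le_of_inCl H hw h) h')

lemma le_anti (H : Hyp Z) {v w : Euc m} (hv : v ∈ Vx Z) (hw : w ∈ Vx Z)
    (h : inCl (kk Z w) w v) (h' : inCl (kk Z v) v w) : v = w := by
  have h1 := kk_le_of_inCl H hw.1 h
  have h2 := ctr_eq H hw.1 h (inCl_mono h1 h')
  rwa [hv.2, hw.2] at h2

lemma IsCh.top (H : Hyp Z) {s : Finset (Euc m)} (h : IsCh Z s) (hs : s.Nonempty) :
    ∃ w ∈ s, ∀ v ∈ s, inCl (kk Z w) w v := by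
  classical
  induction s using Finset.induction_on with
  | empty => simp at hs
  | insert a s ha ih =>
    rcases s.eq_empty_or_nonempty with rfl | hne
    · exact ⟨a, by simp, by simp [inCl_refl]⟩
    · obtain ⟨w, hw, hw2⟩ := ih (h.mono (Finset.subset_insert _ _)) hne
      have hwV := h.mem w (by simp [hw])
      have haV := h.mem a (by simp)
      rcases h.tot a (by simp) w (by simp [hw]) with h1 | h1
      · refine ⟨w, by simp [hw], ?_⟩
        intro v hv
        rcases Finset.mem_insert.1 hv with rfl | hv
        · exact h1
        · exact hw2 v hv
      · refine ⟨a, by simp, ?_⟩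
        intro v hv
        rcases Finset.mem_insert.1 hv with rfl | hv
        · exact inCl_refl _ _
        · exact le_tr H haV.1 h1 (hw2 v hv)

lemma hull_sub {s : Finset (Euc m)} {w : Euc m} (hw : ∀ v ∈ s, inCl (kk Z w) w v) {x : Euc m}
    (hx : x ∈ convexHull ℝ (s : Set (Euc m))) : inCl (kk Z w) w x :=
  convexHull_min (t := {y | inCl (kk Z w) w y}) hw (convex_inCl _ _) hx

lemma hull_notMem (H : Hyp Z) {s : Finset (Euc m)} (h : IsCh Z s) {x : Euc m}
    (hx : x ∈ convexHull ℝ (s : Set (Euc m))) : x ∉ Z := by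
  have hs : s.Nonempty := by
    by_contra hn
    rw [Finset.not_nonempty_iff_eq_empty] at hn
    simp [hn] at hx
  obtain ⟨w, hw, hw2⟩ := h.top H hs
  exact notMem_of_inCl H (h.mem w hw).1 (hull_sub hw2 hx)

open Classical in
lemma hull_top {s : Finset (Euc m)} {w : Euc m} (hw : w ∈ s) {x : Euc m}
    (hx : x ∈ convexHull ℝ (s : Set (Euc m))) :
    x = w ∨ ∃ z ∈ convexHull ℝ ((s.erase w : Finset (Euc m)) : Set (Euc m)), ∃ θ : ℝ, 0 < θ ∧ θ ≤ 1 ∧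
      x = w + θ • (z - w) := by
  rcases (s.erase w).eq_empty_or_nonempty with he | hne
  · left
    have : s = {w} := by
      rw [← Finset.insert_erase hw, he]; simp
    rw [this] at hx
    simpa using hx
  · rw [← Finset.insert_erase hw, Finset.coe_insert, convexHull_insert (by exact_mod_cast hne),
      mem_convexJoin] at hx
    obtain ⟨a, ha, z, hz, hx⟩ := hx
    rw [mem_singleton_iff] at ha
    subst ha
    rw [segment_eq_image'] at hx
    obtain ⟨θ, ⟨h0, h1⟩, rfl⟩ := hx
    rcases h0.eq_or_lt with h | h
    · left; simp [← h]
    · right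
      exact ⟨z, hz, θ, h, h1, rfl⟩

lemma ctr_mem_of_hull (H : Hyp Z) {s : Finset (Euc m)} (h : IsCh Z s) {x : Euc m}
    (hx : x ∈ convexHull ℝ (s : Set (Euc m))) : ctr Z x ∈ s := by
  classical
  induction s using Finset.strongInduction with
  | H s ih =>
    have hs : s.Nonempty := by
      by_contra hn
      rw [Finset.not_nonempty_iff_eq_empty] at hn
      simp [hn] at hx
    obtain ⟨w, hw, hw2⟩ := h.top H hs
    rcases hull_top hw hx with rfl | ⟨z, hz, θ, h0, h1, rfl⟩
    · rw [(h.mem _ hw).2]; exact hw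
    · rcases h1.eq_or_lt with h2 | h2
      · have : w + θ • (z - w) = z := by simp [h2]
        exact Finset.mem_of_mem_erase
          (ih _ (Finset.erase_ssubset hw) (h.mono (Finset.erase_subset _ _)) (by rw [this]; exact hz))
      · have hzc : inCl (kk Z w) w z := hull_sub (fun v hv => hw2 v (Finset.mem_of_mem_erase hv)) hz
        obtain ⟨a, b⟩ := open_of_segment (h.mem w hw) hzc h0.le h2
        rw [ctr_eq H (h.mem w hw).1 a b, (h.mem w hw).2]
        exact hw

open Classical in
/-- the core of the intersection property -/
lemma inter_aux (H : Hyp Z) {t' : Finset (Euc m)} (ht' : IsCh Z t') {w z z' : Euc m}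
    (hw : w ∈ Vx Z) (hwt : w ∉ t') (hz : inCl (kk Z w) w z)
    (hz' : z' ∈ convexHull ℝ (t' : Set (Euc m))) {θ θ' : ℝ} (h0 : 0 < θ) (hlt : θ < θ')
    (e : θ • (z - w) = θ' • (z' - w)) : False := by
  have h1 : z' = w + (θ / θ') • (z - w) := by
    have hp : θ' ≠ 0 := by linarith
    rw [div_eq_inv_mul, mul_smul, e, smul_smul, inv_mul_cancel₀ hp]; simp
  obtain ⟨a, b⟩ := open_of_segment hw hz (θ := θ / θ') (by apply div_nonneg <;> linarith)
    (by rw [div_lt_one (by linarith)]; exact hlt)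
  rw [← h1] at a b
  have h2 := ctr_eq H hw.1 a b
  rw [hw.2] at h2
  have := ctr_mem_of_hull H ht' hz'
  rw [h2] at this
  exact hwt this

open Classical in
lemma inter_hull (H : Hyp Z) : ∀ (N : ℕ) (s t : Finset (Euc m)), s.card + t.card ≤ N →
    IsCh Z s → IsCh Z t → ∀ x ∈ convexHull ℝ (s : Set (Euc m)),
    x ∈ convexHull ℝ (t : Set (Euc m)) →
    x ∈ convexHull ℝ ((s ∩ t : Finset (Euc m)) : Set (Euc m)) := by
  intro N
  induction N with
  | zero =>
    intro s t hN _ _ x hx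
    have : s = ∅ := by rw [← Finset.card_eq_zero]; omega
    simp [this] at hx
  | succ N ih =>
    intro s t hN hs ht x hxs hxt
    have hsn : s.Nonempty := by
      by_contra hn
      rw [Finset.not_nonempty_iff_eq_empty] at hn
      simp [hn] at hxs
    have htn : t.Nonempty := by
      by_contra hn
      rw [Finset.not_nonempty_iff_eq_empty] at hn
      simp [hn] at hxt
    have hxm := ctr_mem_of_hull H hs hxs
    have hxm' := ctr_mem_of_hull H ht hxt
    by_cases hx : x = ctr Z x
    · apply subset_convexHull
      rw [hx]
      simp [hxm, hxm']
    obtain ⟨w, hw, hw2⟩ := hs.top H hsn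
    obtain ⟨u, hu, hu2⟩ := ht.top H htn
    have hcs := Finset.card_erase_add_one hw
    have hct := Finset.card_erase_add_one hu
    rcases hull_top hw hxs with rfl | ⟨z, hz, θ, h0, h1, e⟩
    · rw [(hs.mem _ hw).2] at hx; simp at hx
    rcases hull_top hu hxt with rfl | ⟨z', hz', θ', h0', h1', e'⟩
    · rw [(ht.mem _ hu).2] at hx; simp at hx
    have mono1 : convexHull ℝ ((s.erase w ∩ t : Finset (Euc m)) : Set (Euc m)) ⊆
        convexHull ℝ ((s ∩ t : Finset (Euc m)) : Set (Euc m)) := by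
      apply convexHull_mono
      exact_mod_cast Finset.inter_subset_inter (Finset.erase_subset _ _) (Finset.Subset.refl _)
    have mono2 : convexHull ℝ ((s ∩ t.erase u : Finset (Euc m)) : Set (Euc m)) ⊆
        convexHull ℝ ((s ∩ t : Finset (Euc m)) : Set (Euc m)) := by
      apply convexHull_mono
      exact_mod_cast Finset.inter_subset_inter (Finset.Subset.refl _) (Finset.erase_subset _ _)
    rcases h1.eq_or_lt with h2 | h2
    · have : x = z := by rw [e]; simp [h2]
      subst this
      exact mono1 (ih (s.erase w) t (by omega) (hs.mono (Finset.erase_subset _ _)) ht x hz hxt)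
    rcases h1'.eq_or_lt with h2' | h2'
    · have : x = z' := by rw [e']; simp [h2']
      subst this
      exact mono2 (ih s (t.erase u) (by omega) hs (ht.mono (Finset.erase_subset _ _)) x hxs hz')
    have hzc : inCl (kk Z w) w z := hull_sub (fun v hv => hw2 v (Finset.mem_of_mem_erase hv)) hz
    have hzc' : inCl (kk Z u) u z' := hull_sub (fun v hv => hu2 v (Finset.mem_of_mem_erase hv)) hz'
    obtain ⟨a, b⟩ := open_of_segment (hs.mem w hw) hzc h0.le h2
    obtain ⟨a', b'⟩ := open_of_segment (ht.mem u hu) hzc' h0'.le h2'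
    have c1 := ctr_eq H (hs.mem w hw).1 a b
    have c2 := ctr_eq H (ht.mem u hu).1 a' b'
    rw [← e, (hs.mem w hw).2] at c1
    rw [← e', (ht.mem u hu).2, c1] at c2
    subst c2
    have e2 : θ • (z - w) = θ' • (z' - w) := by
      have := e.symm.trans e'
      simpa using this
    rcases lt_trichotomy θ θ' with hl | hl | hl
    · exact (inter_aux H (ht.mono (Finset.erase_subset w _)) (hs.mem w hw) (by simp) hzc hz'
        h0 hl e2).elim
    · subst hl
      have hzz : z = z' := by
        have := smul_right_injective (Euc m) h0.ne' e2
        simpa using this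
      subst hzz
      have h3 := ih (s.erase w) (t.erase w) (by omega) (hs.mono (Finset.erase_subset _ _))
        (ht.mono (Finset.erase_subset _ _)) z hz hz'
      have h4 : z ∈ convexHull ℝ ((s ∩ t : Finset (Euc m)) : Set (Euc m)) := by
        refine convexHull_mono ?_ h3
        exact_mod_cast Finset.inter_subset_inter (Finset.erase_subset _ _) (Finset.erase_subset _ _)
      have h5 : w ∈ convexHull ℝ ((s ∩ t : Finset (Euc m)) : Set (Euc m)) :=
        subset_convexHull _ _ (by simp [hw, hu])
      rw [e]
      exact (convex_convexHull ℝ _).add_smul_sub_mem h5 h4 ⟨h0.le, h1⟩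
    · exact (inter_aux H (hs.mono (Finset.erase_subset w _)) (hs.mem w hw) (by simp) hzc' hz
        h0' hl e2.symm).elim

/-- a strictly smaller cell has a coordinate at which it is constant on a facet of the bigger one -/
lemma exists_coord (H : Hyp Z) {v w : Euc m} (hv : v ∈ Vx Z) (hw : w ∈ Vx Z)
    (h : inCl (kk Z w) w v) (hne : v ≠ w) : ∃ i, |w i - v i| = 2 ^ (-(kk Z w)) / 2 ∧
      ∀ u, inCl (kk Z v) v u → u i = v i := by
  have hn : ¬ inCl (kk Z w) v w := by
    intro h'
    have := ctr_eq H hw.1 h h'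
    rw [hv.2, hw.2] at this
    exact hne this
  rw [inCl] at hn
  push Not at hn
  obtain ⟨i, hi⟩ := hn
  refine ⟨i, ?_⟩
  obtain ⟨a, b⟩ := h i
  have hc := Vx_apply hw i
  have hp : (0:ℝ) < 2 ^ kk Z w := by positivity
  -- the coordinate of v is an integer
  have hint : (v i * 2 ^ kk Z w = (⌊w i * 2 ^ kk Z w⌋ : ℤ) ∨
      v i * 2 ^ kk Z w = (⌊w i * 2 ^ kk Z w⌋ : ℤ) + 1) ∧ ⌈w i * 2 ^ kk Z w⌉ = ⌊w i * 2 ^ kk Z w⌋ + 1 := by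
    rcases floor_ceil_cases (w i * 2 ^ kk Z w) with ⟨h1, h2⟩ | ⟨h1, h2, h3⟩
    · exfalso
      rw [h1] at b
      have e : v i * 2 ^ kk Z w = w i * 2 ^ kk Z w := by linarith
      have := hi (by rw [e]; exact Int.floor_le _)
      rw [e] at this
      exact absurd (Int.le_ceil (w i * 2 ^ kk Z w)) (not_le.2 this)
    · refine ⟨?_, h1⟩
      rw [h1] at b
      push_cast at b
      by_contra hcon
      push Not at hcon
      obtain ⟨f1, f2⟩ := fc_of_mem (lt_of_le_of_ne a (Ne.symm hcon.1)) (lt_of_le_of_ne b hcon.2)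
      rw [f1, f2, ← h1] at hi
      exact absurd (Int.le_ceil (w i * 2 ^ kk Z w)) (not_le.2 (hi (Int.floor_le _)))
  constructor
  · rw [hint.2] at hc
    push_cast at hc
    have : |w i - v i| * 2 ^ kk Z w = 1 / 2 := by
      rw [← abs_of_pos hp, ← abs_mul, sub_mul, hc]
      rcases hint.1 with e | e
      · rw [e, abs_of_nonneg] <;> linarith
      · rw [e, abs_of_nonpos] <;> linarith
    rw [zpow_neg]
    field_simp
    linarith
  · intro u hu
    have hu' := hu i
    obtain ⟨z, hz⟩ : ∃ z : ℤ, v i * 2 ^ kk Z w = z := by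
      rcases hint.1 with e | e
      · exact ⟨_, e⟩
      · exact ⟨⌊w i * 2 ^ kk Z w⌋ + 1, by rw [e]; push_cast; rfl⟩
    obtain ⟨n, hn⟩ := Int.le.dest (kk_le_of_inCl H hw.1 h)
    have hz' : v i * 2 ^ kk Z v = ((z * 2 ^ n : ℤ) : ℝ) := by
      rw [← hn, zpow_add₀ (by norm_num), ← mul_assoc, hz]; push_cast; simp
    rw [hz', Int.floor_intCast, Int.ceil_intCast, ← hz'] at hu'
    have := le_antisymm hu'.2 hu'.1
    exact mul_right_cancel₀ (by positivity) this

def bC (m : ℕ) : ℕ → ℝ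
  | 0 => 0
  | N + 1 => 2 * (1 + 2 * √m) * bC m N + 2

lemma bC_nonneg (N : ℕ) : 0 ≤ bC m N := by
  induction N with
  | zero => simp [bC]
  | succ N ih => rw [bC]; positivity

lemma bC_mono : Monotone (bC m) := by
  apply monotone_nat_of_le_succ
  intro N
  have := bC_nonneg (m := m) N
  rw [bC]
  have h2 : 0 ≤ √(m:ℝ) * bC m N := by positivity
  nlinarith

lemma quant (H : Hyp Z) (N : ℕ) : ∀ (s : Finset (Euc m)), s.card = N → IsCh Z s → ∀ w ∈ s,
    (∀ v ∈ s, inCl (kk Z w) w v) → ∀ ν : Euc m → ℝ, ∑ v ∈ s, ν v = 0 → ∀ v ∈ s,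
    |ν v| * 2 ^ (-(kk Z w)) ≤ bC m N * ‖∑ v ∈ s, ν v • v‖ := by
  classical
  induction N with
  | zero => intro s hs _ w hw; simp [Finset.card_eq_zero.1 hs] at hw
  | succ N ih =>
    intro s hcard hs w hw hw2 ν hν
    have hcs := Finset.card_erase_add_one hw
    have hs' := hs.mono (Finset.erase_subset w s)
    set X := ∑ v ∈ s, ν v • v with hX
    have h2k : (0:ℝ) < 2 ^ (-(kk Z w)) := by positivity
    have hXn := norm_nonneg X
    rcases (s.erase w).eq_empty_or_nonempty with he | hne
    · have : s = {w} := by rw [← Finset.insert_erase hw, he]; simp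
      intro v hv
      rw [this] at hν hv
      simp at hν hv
      rw [hv, hν]
      have := bC_nonneg (m := m) (N+1)
      simp
      positivity
    · obtain ⟨w', hw', hw2'⟩ := hs'.top H hne
      have hw's := Finset.mem_of_mem_erase hw'
      have hle := hw2 w' hw's
      obtain ⟨i, hi1, hi2⟩ := exists_coord H (hs.mem w' hw's) (hs.mem w hw) hle
        (Finset.ne_of_mem_erase hw')
      have hsum : ν w + ∑ v ∈ s.erase w, ν v = 0 := by rw [Finset.add_sum_erase _ _ hw, hν]
      have hXe : X = ν w • w + ∑ v ∈ s.erase w, ν v • v := (Finset.add_sum_erase _ _ hw).symm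
      have hXi : X i = ν w * (w i - w' i) := by
        rw [hXe]
        have : (∑ v ∈ s.erase w, ν v • v) i = (∑ v ∈ s.erase w, ν v) * w' i := by
          rw [Finset.sum_mul]
          have : (∑ v ∈ s.erase w, ν v • v) i = ∑ v ∈ s.erase w, ν v * v i := by
            simp
          rw [this]
          exact Finset.sum_congr rfl (fun v hv => by rw [hi2 v (hw2' v hv)])
        have e : ∑ v ∈ s.erase w, ν v = - ν w := by linarith
        rw [PiLp.add_apply, this, e]
        simp; ring
      have h1 : |ν w| * 2 ^ (-(kk Z w)) ≤ 2 * ‖X‖ := by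
        have := coord_le_norm X i
        rw [hXi, abs_mul, hi1] at this
        linarith
      set ν' : Euc m → ℝ := fun v => if v = w' then ν w' + ν w else ν v with hν'
      have e1 : ∑ v ∈ s.erase w, ν' v = 0 := by
        rw [← Finset.add_sum_erase _ _ hw'] at hsum ⊢
        have : ∑ v ∈ (s.erase w).erase w', ν' v = ∑ v ∈ (s.erase w).erase w', ν v := by
          apply Finset.sum_congr rfl
          intro v hv
          simp [hν', Finset.ne_of_mem_erase hv]
        rw [this]
        simp only [hν', if_true]
        linarith
      have e2 : ∑ v ∈ s.erase w, ν' v • v = X + ν w • (w' - w) := by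
        rw [hXe, ← Finset.add_sum_erase _ _ hw', ← Finset.add_sum_erase _ (fun v => ν v • v) hw']
        have : ∑ v ∈ (s.erase w).erase w', ν' v • v = ∑ v ∈ (s.erase w).erase w', ν v • v := by
          apply Finset.sum_congr rfl
          intro v hv
          simp [hν', Finset.ne_of_mem_erase hv]
        rw [this]
        simp only [hν', if_true, add_smul, smul_sub]
        abel
      have h3 : ‖∑ v ∈ s.erase w, ν' v • v‖ ≤ (1 + 2 * √m) * ‖X‖ := by
        rw [e2]
        refine (norm_add_le _ _).trans ?_
        rw [norm_smul, Real.norm_eq_abs, ← dist_eq_norm]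
        have := dist_le hle (inCl_refl (kk Z w) w)
        have h5 := mul_le_mul_of_nonneg_left this (abs_nonneg (ν w))
        have h6 := mul_le_mul_of_nonneg_left h1 (Real.sqrt_nonneg (m:ℝ))
        nlinarith
      have h4 := ih (s.erase w) (by omega) hs' w' hw' hw2' ν' e1
      have h5 : (2:ℝ) ^ (-(kk Z w)) / 2 ≤ 2 ^ (-(kk Z w')) := by
        rw [← two_zpow_neg_succ]
        apply zpow_le_zpow_right₀ (by norm_num)
        have := kk_le_succ_of_inCl H (hs.mem w hw).1 hle
        omega
      have hb := bC_nonneg (m := m) N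
      have h6 : ∀ v ∈ s.erase w, |ν' v| * 2 ^ (-(kk Z w)) ≤ 2 * (1 + 2 * √m) * bC m N * ‖X‖ := by
        intro v hv
        have a1 := h4 v hv
        have a2 := mul_le_mul_of_nonneg_left h3 hb
        have a3 := mul_le_mul_of_nonneg_left h5 (abs_nonneg (ν' v))
        linarith
      have hb' : 0 ≤ 2 * (1 + 2 * √m) * bC m N * ‖X‖ := by positivity
      intro v hv
      rw [bC, add_mul]
      by_cases hvw : v = w
      · rw [hvw]; linarith
      · have hve : v ∈ s.erase w := Finset.mem_erase.2 ⟨hvw, hv⟩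
        have a1 := h6 v hve
        by_cases hvw' : v = w'
        · have a2 : |ν v| ≤ |ν' v| + |ν w| := by
            have : ν v = ν' v - ν w := by simp [hν', hvw']
            rw [this]; exact abs_sub _ _
          have := mul_le_mul_of_nonneg_right a2 h2k.le
          linarith
        · have : ν' v = ν v := by simp [hν', hvw']
          rw [this] at a1
          linarith

lemma quant' (H : Hyp Z) {s : Finset (Euc m)} (hs : IsCh Z s) {w : Euc m} (hw : w ∈ s)
    (hw2 : ∀ v ∈ s, inCl (kk Z w) w v) {N : ℕ} (hN : s.card ≤ N) (ν : Euc m → ℝ)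
    (h0 : ∑ v ∈ s, ν v = 0) {v : Euc m} (hv : v ∈ s) :
    |ν v| * 2 ^ (-(kk Z w)) ≤ bC m N * ‖∑ v ∈ s, ν v • v‖ :=
  (quant H _ s rfl hs w hw hw2 ν h0 v hv).trans
    (mul_le_mul_of_nonneg_right (bC_mono hN) (norm_nonneg _))

lemma IsCh.indep (H : Hyp Z) {s : Finset (Euc m)} (hs : IsCh Z s) :
    AffineIndependent ℝ ((↑) : s → Euc m) := by
  classical
  rw [affineIndependent_iff_of_fintype]
  intro w hw hw0 i
  rw [Finset.univ.weightedVSub_eq_linear_combination hw] at hw0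
  set ν : Euc m → ℝ := fun v => if h : v ∈ s then w ⟨v, h⟩ else 0 with hν
  have e1 : ∑ v ∈ s, ν v = 0 := by
    rw [← Finset.sum_coe_sort, ← hw]
    exact Finset.sum_congr rfl (fun v _ => by simp [hν])
  have e2 : ∑ v ∈ s, ν v • v = 0 := by
    rw [← Finset.sum_coe_sort, ← hw0]
    exact Finset.sum_congr rfl (fun v _ => by simp [hν])
  obtain ⟨t, ht, ht2⟩ := hs.top H ⟨i.1, i.2⟩
  have := quant' H hs ht ht2 le_rfl ν e1 i.2
  rw [e2, norm_zero, mul_zero] at this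
  have hp : (0:ℝ) < 2 ^ (-(kk Z t)) := by positivity
  have h3 : |ν i| ≤ 0 := by
    by_contra hc
    push Not at hc
    have := mul_pos hc hp
    linarith
  have := abs_nonpos_iff.1 h3
  simpa [hν] using this

lemma IsCh.card_le (H : Hyp Z) {s : Finset (Euc m)} (hs : IsCh Z s) : s.card ≤ m + 1 := by
  have := (hs.indep H).card_le_finrank_succ
  simp at this
  refine this.trans ?_
  have h := Submodule.finrank_le (vectorSpan ℝ (range (Subtype.val : s → Euc m)))
  simpa using h

def cplx (Z : Set (Euc m)) (H : Hyp Z) : Geometry.SimplicialComplex ℝ (Euc m) where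
  faces := {s | s.Nonempty ∧ IsCh Z s}
  isRelLowerSet_faces := by
    intro s hs
    exact ⟨hs.1, fun t hts htn => ⟨htn, hs.2.mono hts⟩⟩
  indep := fun hs => hs.2.indep H
  inter_subset_convexHull := by
    classical
    intro s t hs ht x hx
    have := inter_hull H _ s t le_rfl hs.2 ht.2 x hx.1 hx.2
    simpa using this

end WT

namespace WT

variable {m : ℕ} {Z : Set (Euc m)}

def isI (k : ℤ) (x : Euc m) (i : Fin m) : Prop := ∃ z : ℤ, x i * 2 ^ k = z

lemma isI_mono {j k : ℤ} (hjk : j ≤ k) {x : Euc m} {i : Fin m} (h : isI j x i) : isI k x i := by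
  obtain ⟨n, rfl⟩ := Int.le.dest hjk
  obtain ⟨z, hz⟩ := h
  exact ⟨z * 2 ^ n, by rw [zpow_add₀ (by norm_num), ← mul_assoc, hz]; push_cast; simp⟩

lemma isI_eq {k : ℤ} {x y : Euc m} {i : Fin m} (h : isI k x i) (hxy : inCl k x y) : y i = x i := by
  obtain ⟨z, hz⟩ := h
  have := hxy i
  rw [hz, Int.floor_intCast, Int.ceil_intCast, ← hz] at this
  exact mul_right_cancel₀ (by positivity) (le_antisymm this.2 this.1)

open Classical in
def fr (k : ℤ) (x : Euc m) : Finset (Fin m) := Finset.univ.filter (fun i => ¬ isI k x i)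

lemma mem_fr {k : ℤ} {x : Euc m} {i : Fin m} : i ∈ fr k x ↔ ¬ isI k x i := by simp [fr]

lemma fr_congr {k : ℤ} {x y : Euc m} (h : inCl k x y) (h' : inCl k y x) : fr k x = fr k y := by
  ext i
  rw [mem_fr, mem_fr, not_iff_not]
  constructor
  · intro hi
    have := isI_eq hi h
    obtain ⟨z, hz⟩ := hi
    exact ⟨z, by rw [this, hz]⟩
  · intro hi
    have := isI_eq hi h'
    obtain ⟨z, hz⟩ := hi
    exact ⟨z, by rw [this, hz]⟩

lemma Vx_free {v : Euc m} (hv : v ∈ Vx Z) {i : Fin m} (hi : ¬ isI (kk Z v) v i) :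
    v i * 2 ^ kk Z v = (⌊v i * 2 ^ kk Z v⌋ : ℤ) + 1 / 2 ∧
      ⌈v i * 2 ^ kk Z v⌉ = ⌊v i * 2 ^ kk Z v⌋ + 1 := by
  have hc := Vx_apply hv i
  rcases floor_ceil_cases (v i * 2 ^ kk Z v) with ⟨h1, h2⟩ | ⟨h1, h2, h3⟩
  · exact (hi ⟨_, h2⟩).elim
  · refine ⟨?_, h1⟩
    rw [h1] at hc
    push_cast at hc
    linarith

lemma bdry {w x : Euc m} (hw : w ∈ Vx Z) (hx : inCl (kk Z w) w x)
    (hne : (fr (kk Z w) w).Nonempty) : ∃ y i, inCl (kk Z w) w y ∧ i ∈ fr (kk Z w) w ∧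
      isI (kk Z w) y i ∧ ∃ θ : ℝ, 0 ≤ θ ∧ θ ≤ 1 ∧ x = w + θ • (y - w) := by
  classical
  obtain ⟨i1, hi1⟩ := hne
  have hp : (0:ℝ) < 2 ^ kk Z w := by positivity
  by_cases hxw : x = w
  · refine ⟨WithLp.toLp 2 (Function.update (fun i => w i) i1 ((⌊w i1 * 2 ^ kk Z w⌋ : ℤ) / 2 ^ kk Z w)),
      i1, ?_, hi1, ?_, 0, le_rfl, zero_le_one, by simp [hxw]⟩
    · intro i
      by_cases h : i = i1
      · subst h
        simp only [Function.update_self]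
        rw [div_mul_cancel₀ _ hp.ne']
        refine ⟨le_rfl, ?_⟩
        exact (Int.floor_le _).trans (Int.le_ceil _)
      · simp only [Function.update_of_ne h]
        exact inCl_refl _ _ i
    · refine ⟨⌊w i1 * 2 ^ kk Z w⌋, ?_⟩
      simp only [Function.update_self]
      rw [div_mul_cancel₀ _ hp.ne']
  · obtain ⟨i0, -, hi0⟩ := Finset.exists_max_image Finset.univ (fun i => |x i - w i|) ⟨i1, by simp⟩
    have hM : 0 < |x i0 - w i0| := by
      by_contra hc
      push Not at hc
      apply hxw
      ext i
      have := (hi0 i (by simp)).trans hc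
      have := abs_nonpos_iff.1 this
      linarith
    have hfr : i0 ∈ fr (kk Z w) w := by
      rw [mem_fr]
      intro h
      rw [isI_eq h hx] at hM
      simp at hM
    obtain ⟨hf1, hf2⟩ := Vx_free hw (mem_fr.1 hfr)
    set M := |x i0 - w i0| * (2 * 2 ^ kk Z w) with hMd
    have hMpos : 0 < M := by positivity
    have hM1 : M ≤ 1 := by
      obtain ⟨a, b⟩ := hx i0
      rw [hf2] at b
      push_cast at b
      have : |x i0 - w i0| * 2 ^ kk Z w ≤ 1 / 2 := by
        rw [← abs_of_pos hp, ← abs_mul, sub_mul, abs_le]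
        constructor <;> linarith
      linarith
    have hyc : ∀ i, (w + M⁻¹ • (x - w)) i * 2 ^ kk Z w =
        w i * 2 ^ kk Z w + M⁻¹ * ((x i - w i) * 2 ^ kk Z w) := by
      intro i; simp; ring
    refine ⟨w + M⁻¹ • (x - w), i0, ?_, hfr, ?_, M, hMpos.le, hM1, ?_⟩
    · intro i
      rw [hyc]
      by_cases hi : isI (kk Z w) w i
      · rw [isI_eq hi hx]
        simp
        exact inCl_refl _ _ i
      · obtain ⟨g1, g2⟩ := Vx_free hw hi
        have : |M⁻¹ * ((x i - w i) * 2 ^ kk Z w)| ≤ 1 / 2 := by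
          rw [abs_mul, abs_mul, abs_of_pos hp, abs_of_pos (inv_pos.2 hMpos), inv_mul_le_iff₀ hMpos]
          have := mul_le_mul_of_nonneg_right (hi0 i (by simp)) hp.le
          rw [hMd]; linarith
        rw [abs_le] at this
        rw [g2]
        push_cast
        constructor <;> linarith [this.1, this.2]
    · have : M⁻¹ * ((x i0 - w i0) * 2 ^ kk Z w) = 1 / 2 ∨ M⁻¹ * ((x i0 - w i0) * 2 ^ kk Z w) = - (1 / 2) := by
        have hM0 := hMpos.ne'
        rcases abs_choice (x i0 - w i0) with h | h
        · left
          have : (x i0 - w i0) * 2 ^ kk Z w = M / 2 := by rw [hMd, h]; ring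
          rw [this]; field_simp
        · right
          have : (x i0 - w i0) * 2 ^ kk Z w = - M / 2 := by rw [hMd, h]; ring
          rw [this]; field_simp
      rcases this with h | h
      · refine ⟨⌊w i0 * 2 ^ kk Z w⌋ + 1, ?_⟩
        rw [hyc, h]; push_cast; linarith
      · refine ⟨⌊w i0 * 2 ^ kk Z w⌋, ?_⟩
        rw [hyc, h]; linarith
    · simp [smul_smul, mul_inv_cancel₀ hMpos.ne']

lemma not_int_half (n z : ℤ) : (n:ℝ) + 1 / 2 ≠ z := by
  intro h
  have : (2 * n + 1 : ℝ) = 2 * z := by linarith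
  have : (2 * n + 1 : ℤ) = 2 * z := by exact_mod_cast this
  omega

lemma half_floor (n : ℤ) : ⌊(n:ℝ) + 1 / 2⌋ = n ∧ ⌈(n:ℝ) + 1 / 2⌉ = n + 1 :=
  fc_of_mem (by linarith) (by linarith)

open Classical in
lemma descent (H : Hyp Z) {w y : Euc m} (hw : w ∈ Vx Z) (hy : inCl (kk Z w) w y) {i0 : Fin m}
    (hi0 : i0 ∈ fr (kk Z w) w) (hint : isI (kk Z w) y i0) :
    ∃ h ∈ Vx Z, fr (kk Z h) h = (fr (kk Z w) w).erase i0 ∧ inCl (kk Z h) h y ∧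
      inCl (kk Z w) w h ∧ ¬ inCl (kk Z h) h w := by
  set k := kk Z w with hk
  set l : Fin m → ℤ := fun i => ⌊w i * 2 ^ k⌋ with hl
  set n : Fin m → ℤ := fun i => if y i * 2 ^ (k+1) < 2 * l i + 1 then 2 * l i else 2 * l i + 1 with hn
  set z : Euc m := WithLp.toLp 2 (fun i => if i ∈ (fr k w).erase i0 then
    ((n i : ℝ) + 1 / 2) / 2 ^ (k+1) else y i) with hz
  have hp : (0:ℝ) < 2 ^ (k+1) := by positivity
  have hz1 : ∀ i ∈ (fr k w).erase i0, z i * 2 ^ (k+1) = n i + 1 / 2 := by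
    intro i hi
    simp only [hz, if_pos hi]
    rw [div_mul_cancel₀ _ hp.ne']
  have hz2 : ∀ i, i ∉ (fr k w).erase i0 → z i = y i := by
    intro i hi
    simp only [hz, if_neg hi]
  have hn1 : ∀ i ∈ (fr k w).erase i0, (n i : ℝ) ≤ y i * 2 ^ (k+1) ∧ y i * 2 ^ (k+1) ≤ n i + 1 ∧
      (2 * l i : ℝ) ≤ n i ∧ (n i : ℝ) ≤ 2 * l i + 1 := by
    intro i hi
    obtain ⟨a, b⟩ := hy i
    rw [(Vx_free hw (mem_fr.1 (Finset.mem_of_mem_erase hi))).2] at b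
    push_cast at b
    rw [two_zpow_succ]
    simp only [hn, two_zpow_succ]
    have hl' : ((l i : ℤ) : ℝ) = (⌊w i * 2 ^ k⌋ : ℤ) := rfl
    split_ifs with hc <;> push_cast <;> refine ⟨?_, ?_, ?_, ?_⟩ <;> linarith
  have c1 : inCl k w z := by
    intro i
    by_cases hi : i ∈ (fr k w).erase i0
    · have h1 := hz1 i hi
      obtain ⟨-, -, h2, h3⟩ := hn1 i hi
      rw [(Vx_free hw (mem_fr.1 (Finset.mem_of_mem_erase hi))).2]
      rw [two_zpow_succ] at h1
      have hl' : ((l i : ℤ) : ℝ) = (⌊w i * 2 ^ k⌋ : ℤ) := rfl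
      push_cast
      constructor <;> linarith
    · rw [hz2 i hi]; exact hy i
  have c2 : inCl (k+1) z y := by
    intro i
    by_cases hi : i ∈ (fr k w).erase i0
    · rw [hz1 i hi, (half_floor (n i)).1, (half_floor (n i)).2]
      obtain ⟨h2, h3, -⟩ := hn1 i hi
      push_cast
      exact ⟨h2, h3⟩
    · rw [hz2 i hi]; exact inCl_refl _ _ i
  have k1 : k ≤ kk Z z := kk_le_of_inCl H hw.1 c1
  have k2 : kk Z z ≤ k + 1 := kk_le_succ_of_inCl H hw.1 c1
  have hzZ := notMem_of_inCl H hw.1 c1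
  have hfr : fr (kk Z z) z = (fr k w).erase i0 := by
    ext i
    constructor
    · intro hi
      by_contra hcon
      have hzy := hz2 i hcon
      apply mem_fr.1 hi
      apply isI_mono k1
      by_cases h : i = i0
      · subst h
        obtain ⟨t, ht⟩ := hint
        exact ⟨t, by rw [hzy, ht]⟩
      · have : isI k w i := by
          by_contra h2
          exact hcon (Finset.mem_erase.2 ⟨h, mem_fr.2 h2⟩)
        have e := isI_eq this hy
        obtain ⟨t, ht⟩ := this
        exact ⟨t, by rw [hzy, e, ht]⟩
    · intro hi
      rw [mem_fr]
      intro hI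
      obtain ⟨t, ht⟩ := isI_mono k2 hI
      rw [hz1 i hi] at ht
      exact not_int_half _ _ ht
  obtain ⟨d1, d2⟩ := ctr_inCl (Z := Z) z
  have kh := kk_ctr H hzZ
  have hhy : inCl (kk Z (ctr Z z)) (ctr Z z) y := by
    rw [kh]; exact inCl_trans d2 (inCl_mono k2 c2)
  have hfr' : fr (kk Z (ctr Z z)) (ctr Z z) = (fr k w).erase i0 := by
    rw [kh, ← hfr]; exact (fr_congr d1 d2).symm
  refine ⟨ctr Z z, ctr_mem H hzZ, hfr', hhy, inCl_trans c1 (inCl_mono k1 d1), ?_⟩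
  intro hcon
  have hI : isI (kk Z (ctr Z z)) (ctr Z z) i0 := by
    by_contra h
    have := mem_fr.2 h
    rw [hfr'] at this
    simp at this
  have e1 := isI_eq hI hcon
  have e2 := isI_eq hI hhy
  apply mem_fr.1 hi0
  obtain ⟨t, ht⟩ := hint
  exact ⟨t, by rw [e1, ← e2, ht]⟩

lemma flag (H : Hyp Z) (d : ℕ) : ∀ w ∈ Vx Z, (fr (kk Z w) w).card = d → ∀ x,
    inCl (kk Z w) w x → ∃ s : Finset (Euc m), IsCh Z s ∧ s.card = d + 1 ∧ w ∈ s ∧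
      (∀ v ∈ s, inCl (kk Z w) w v) ∧ x ∈ convexHull ℝ (s : Set (Euc m)) := by
  classical
  induction d with
  | zero =>
    intro w hw hd x hx
    have : x = w := by
      ext i
      apply isI_eq _ hx
      by_contra h
      have := mem_fr.2 h
      rw [Finset.card_eq_zero.1 hd] at this
      simp at this
    subst this
    refine ⟨{x}, ⟨?_, ?_⟩, by simp, by simp, ?_, by simp⟩
    · simpa using hw
    · simp [inCl_refl]
    · simp [inCl_refl]
  | succ d ih =>
    intro w hw hd x hx
    obtain ⟨y, i, hy, hi, hint, θ, h0, h1, rfl⟩ := bdry hw hx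
      (by rw [← Finset.card_pos]; omega)
    obtain ⟨h, hh, hfr, hhy, hwh, hnot⟩ := descent H hw hy hi hint
    obtain ⟨s, hs, hcard, hhs, hs2, hys⟩ := ih h hh
      (by rw [hfr, Finset.card_erase_of_mem hi]; omega) y hhy
    have hle : ∀ v ∈ s, inCl (kk Z w) w v := fun v hv => le_tr H hw.1 hwh (hs2 v hv)
    have hws : w ∉ s := fun hc => hnot (hs2 w hc)
    refine ⟨insert w s, ⟨?_, ?_⟩, ?_, by simp, ?_, ?_⟩
    · intro v hv
      rcases Finset.mem_insert.1 hv with rfl | hv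
      · exact hw
      · exact hs.mem v hv
    · intro u hu v hv
      rcases Finset.mem_insert.1 hu with hu1 | hu1
      · rcases Finset.mem_insert.1 hv with hv1 | hv1
        · rw [hu1, hv1]; exact Or.inl (inCl_refl _ _)
        · rw [hu1]; exact Or.inr (hle v hv1)
      · rcases Finset.mem_insert.1 hv with hv1 | hv1
        · rw [hv1]; exact Or.inl (hle u hu1)
        · exact hs.tot u hu1 v hv1
    · rw [Finset.card_insert_of_notMem hws, hcard]
    · intro v hv
      rcases Finset.mem_insert.1 hv with rfl | hv
      · exact inCl_refl _ _
      · exact hle v hv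
    · apply (convex_convexHull ℝ _).add_smul_sub_mem _ _ ⟨h0, h1⟩
      · exact subset_convexHull _ _ (by simp)
      · exact convexHull_mono (by simp) hys

lemma cover (H : Hyp Z) {x : Euc m} (hx : x ∉ Z) : ∃ s : Finset (Euc m), IsCh Z s ∧
    s.card = m + 1 ∧ x ∈ convexHull ℝ (s : Set (Euc m)) := by
  classical
  obtain ⟨K, hK⟩ := exists_small (3 * √m) (infDist_pos H.cl H.ne hx)
  have hp : (0:ℝ) < 2 ^ K := by positivity
  set z : Euc m := WithLp.toLp 2 (fun i => (((⌊x i * 2 ^ K⌋ : ℤ) : ℝ) + 1 / 2) / 2 ^ K) with hz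
  have hzi : ∀ i, z i * 2 ^ K = ((⌊x i * 2 ^ K⌋ : ℤ) : ℝ) + 1 / 2 := by
    intro i
    simp only [hz]
    rw [div_mul_cancel₀ _ hp.ne']
  have c1 : inCl K z x := by
    intro i
    rw [hzi, (half_floor _).1, (half_floor _).2]
    push_cast
    exact ⟨Int.floor_le _, (Int.lt_floor_add_one _).le⟩
  have hd : 2 * √m * 2 ^ (-K) ≤ infDist z Z := by
    have h1 := infDist_le_infDist_add_dist (s := Z) (x := x) (y := z)
    have h2 := dist_le c1 (inCl_refl _ _)
    linarith
  have hzZ : z ∉ Z := by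
    rw [H.cl.notMem_iff_infDist_pos H.ne]
    have := sqrt_m_pos H.hm
    have : (0:ℝ) < 2 * √m * 2 ^ (-K) := by positivity
    linarith
  have hkz : kk Z z ≤ K := (kk_le_iff H hzZ).2 ⟨z, inCl_refl _ _, hd⟩
  obtain ⟨d1, d2⟩ := ctr_inCl (Z := Z) z
  have kh := kk_ctr H hzZ
  have hfr : fr (kk Z (ctr Z z)) (ctr Z z) = Finset.univ := by
    rw [kh, ← fr_congr d1 d2]
    ext i
    simp only [Finset.mem_univ, iff_true]
    rw [mem_fr]
    intro hI
    obtain ⟨t, ht⟩ := isI_mono hkz hI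
    rw [hzi] at ht
    exact not_int_half _ _ ht
  obtain ⟨s, hs, hc, -, -, hxs⟩ := flag H m (ctr Z z) (ctr_mem H hzZ) (by rw [hfr]; simp) x
    (by rw [kh]; exact inCl_trans d2 (inCl_mono hkz c1))
  exact ⟨s, hs, hc, hxs⟩

end WT

namespace WT

variable {m : ℕ} {Z : Set (Euc m)}

lemma span_fin {t : Finset (Euc m)} {y : Euc m}
    (hy : y ∈ affineSpan ℝ (t : Set (Euc m))) :
    ∃ μ : Euc m → ℝ, ∑ v ∈ t, μ v = 1 ∧ y = ∑ v ∈ t, μ v • v := by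
  classical
  have hr : (t : Set (Euc m)) = range (Subtype.val : t → Euc m) := by simp
  rw [hr] at hy
  obtain ⟨w, hw, e⟩ := eq_affineCombination_of_mem_affineSpan_of_fintype hy
  rw [Finset.affineCombination_eq_linear_combination _ _ _ hw] at e
  refine ⟨fun v => if h : v ∈ t then w ⟨v, h⟩ else 0, ?_, ?_⟩
  · rw [← Finset.sum_coe_sort, ← hw]
    exact Finset.sum_congr rfl (fun v _ => by simp)
  · rw [← Finset.sum_coe_sort, e]
    exact Finset.sum_congr rfl (fun v _ => by simp)

lemma centroid_sum {ω : Finset (Euc m)} (h : ω.Nonempty) :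
    ω.centroid ℝ id = ∑ v ∈ ω, ((ω.card : ℝ)⁻¹) • v := by
  rw [Finset.centroid_def, Finset.affineCombination_eq_linear_combination]
  · simp [Finset.centroidWeights]
  · exact ω.sum_centroidWeights_eq_one_of_nonempty ℝ h

def BB (m : ℕ) : ℝ := bC m (m+1)

lemma BB_pos : 2 ≤ BB m := by
  rw [BB, bC]
  have := bC_nonneg (m := m) m
  have : 0 ≤ 2 * (1 + 2 * √m) * bC m m := by positivity
  linarith

lemma beta_low (H : Hyp Z) {σ : Finset (Euc m)} (hs : IsCh Z σ) {w : Euc m} (hw : w ∈ σ)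
    (hw2 : ∀ v ∈ σ, inCl (kk Z w) w v) {ω t : Finset (Euc m)} (hω : ω ⊆ σ) (hω2 : 2 ≤ ω.card)
    (ht : t ⊆ ω) (htc : t.card = ω.card - 1) :
    2 ^ (-(kk Z w)) / ((m + 1) * BB m) ≤ infDist (ω.centroid ℝ id)
      ((affineSpan ℝ (t : Set (Euc m)) : AffineSubspace ℝ (Euc m)) : Set (Euc m)) := by
  classical
  have htn : t.Nonempty := by rw [← Finset.card_pos]; omega
  have hωn : ω.Nonempty := by rw [← Finset.card_pos]; omega
  have hB := BB_pos (m := m)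
  obtain ⟨v0, hv0, hv0t⟩ : ∃ v ∈ ω, v ∉ t := by
    by_contra! hc
    have := Finset.card_le_card (show ω ⊆ t from hc)
    omega
  rw [le_infDist]
  swap
  · obtain ⟨v, hv⟩ := htn
    exact ⟨v, subset_affineSpan _ _ hv⟩
  intro y hy
  obtain ⟨μ, h1, e⟩ := span_fin hy
  set ν : Euc m → ℝ := fun v => (if v ∈ ω then ((ω.card : ℝ)⁻¹) else 0) - (if v ∈ t then μ v else 0)
    with hν
  have hN0 : (ω.card : ℝ) ≠ 0 := by
    have := hωn.card_pos
    positivity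
  have e1 : ∑ v ∈ σ, ν v = 0 := by
    simp only [hν]
    rw [Finset.sum_sub_distrib, Finset.sum_ite_mem, Finset.sum_ite_mem,
      Finset.inter_eq_right.2 hω, Finset.inter_eq_right.2 (ht.trans hω), h1]
    simp [hN0]
  have e2 : ∑ v ∈ σ, ν v • v = ω.centroid ℝ id - y := by
    simp only [hν, sub_smul, ite_smul, zero_smul]
    rw [Finset.sum_sub_distrib, Finset.sum_ite_mem, Finset.sum_ite_mem,
      Finset.inter_eq_right.2 hω, Finset.inter_eq_right.2 (ht.trans hω), e, centroid_sum hωn]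
  have q := quant' H hs hw hw2 (hs.card_le H) ν e1 (hω hv0)
  rw [e2, ← dist_eq_norm] at q
  have hνv : ν v0 = (ω.card : ℝ)⁻¹ := by simp [hν, hv0, hv0t]
  rw [hνv, abs_of_nonneg (by positivity)] at q
  have hc : (ω.card : ℝ) ≤ m + 1 := by
    exact_mod_cast (hs.mono hω).card_le H
  rw [div_le_iff₀ (by positivity)]
  have hcp : (0:ℝ) < ω.card := by exact_mod_cast hωn.card_pos
  rw [inv_mul_eq_div, div_le_iff₀ hcp] at q
  refine q.trans ?_
  change BB m * _ * _ ≤ _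
  have : 0 ≤ BB m * dist (ω.centroid ℝ id) y := by positivity
  nlinarith

lemma hull_bdd (s : Finset (Euc m)) : Bornology.IsBounded (convexHull ℝ (s : Set (Euc m))) :=
  (isBounded_convexHull).2 s.finite_toSet.isBounded

lemma beta_high {σ : Finset (Euc m)} {ω t : Finset (Euc m)} (hω : ω ⊆ σ) (hω2 : 2 ≤ ω.card)
    (ht : t ⊆ ω) (htc : t.card = ω.card - 1) :
    infDist (ω.centroid ℝ id)
      ((affineSpan ℝ (t : Set (Euc m)) : AffineSubspace ℝ (Euc m)) : Set (Euc m)) ≤ simpDiam m σ := by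
  have htn : t.Nonempty := by rw [← Finset.card_pos]; omega
  have hωn : ω.Nonempty := by rw [← Finset.card_pos]; omega
  obtain ⟨v, hv⟩ := htn
  refine (infDist_le_dist_of_mem (subset_affineSpan _ _ (by exact_mod_cast hv))).trans ?_
  apply dist_le_diam_of_mem (hull_bdd σ)
  · exact convexHull_mono (by exact_mod_cast hω) (ω.centroid_mem_convexHull hωn)
  · exact subset_convexHull _ _ (by exact_mod_cast hω (ht hv))

lemma betas {σ : Finset (Euc m)} (hc : 2 ≤ σ.card) {a b : ℝ} (ha : 0 < a)
    (h : ∀ ω ⊆ σ, 2 ≤ ω.card → ∀ t ⊆ ω, t.card = ω.card - 1 →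
      a ≤ infDist (ω.centroid ℝ id)
      ((affineSpan ℝ (t : Set (Euc m)) : AffineSubspace ℝ (Euc m)) : Set (Euc m)) ∧
      infDist (ω.centroid ℝ id)
      ((affineSpan ℝ (t : Set (Euc m)) : AffineSubspace ℝ (Euc m)) : Set (Euc m)) ≤ b) :
    a ≤ betaLow m σ ∧ betaLow m σ ≤ betaHigh m σ ∧ betaHigh m σ ≤ b := by
  classical
  have hex : ∀ ω : Finset (Euc m), 2 ≤ ω.card → ∃ t ⊆ ω, t.card = ω.card - 1 :=
    fun ω _ => Finset.exists_subset_card_eq (by omega)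
  have A : ∀ ω ⊆ σ, 2 ≤ ω.card → a ≤ faceBetaMin m ω ∧ faceBetaMin m ω ≤ faceBetaMax m ω ∧
      faceBetaMax m ω ≤ b := by
    intro ω hω h2
    obtain ⟨t, ht, htc⟩ := hex ω h2
    have h1 := h ω hω h2
    have hne : { d | ∃ t ⊆ ω, t.card = ω.card - 1 ∧
      d = Metric.infDist (ω.centroid ℝ id)
          ((affineSpan ℝ (t : Set (Euc m)) : AffineSubspace ℝ (Euc m)) : Set (Euc m)) }.Nonempty :=
      ⟨_, t, ht, htc, rfl⟩
    refine ⟨le_csInf hne ?_, ?_, csSup_le hne ?_⟩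
    · rintro _ ⟨t, ht, htc, rfl⟩; exact (h1 t ht htc).1
    · refine (csInf_le (a := infDist (ω.centroid ℝ id)
          ((affineSpan ℝ (t : Set (Euc m)) : AffineSubspace ℝ (Euc m)) : Set (Euc m)))
          (?_ : BddBelow {d | ∃ t ⊆ ω, t.card = ω.card - 1 ∧
            d = infDist (ω.centroid ℝ id) ((affineSpan ℝ (t : Set (Euc m)) :
              AffineSubspace ℝ (Euc m)) : Set (Euc m))}) (⟨t, ht, htc, rfl⟩)).trans
          (le_csSup (?_ : BddAbove {d | ∃ t ⊆ ω, t.card = ω.card - 1 ∧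
            d = infDist (ω.centroid ℝ id) ((affineSpan ℝ (t : Set (Euc m)) :
              AffineSubspace ℝ (Euc m)) : Set (Euc m))}) (⟨t, ht, htc, rfl⟩))
      · refine ⟨a, ?_⟩
        rintro _ ⟨t, ht, htc, rfl⟩; exact (h1 t ht htc).1
      · refine ⟨b, ?_⟩
        rintro _ ⟨t, ht, htc, rfl⟩; exact (h1 t ht htc).2
    · rintro _ ⟨t, ht, htc, rfl⟩; exact (h1 t ht htc).2
  have Aσ := A σ (Finset.Subset.refl _) hc
  refine ⟨le_csInf ⟨_, σ, Finset.Subset.refl _, hc, rfl⟩ ?_, ?_,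
    csSup_le ⟨_, σ, Finset.Subset.refl _, hc, rfl⟩ ?_⟩
  · rintro _ ⟨ω, hω, h2, rfl⟩; exact (A ω hω h2).1
  · refine (csInf_le (a := faceBetaMin m σ)
      (?_ : BddBelow {b | ∃ ω ⊆ σ, 2 ≤ ω.card ∧ b = faceBetaMin m ω})
      (⟨σ, Finset.Subset.refl _, hc, rfl⟩)).trans (Aσ.2.1.trans
      (le_csSup (?_ : BddAbove {b | ∃ ω ⊆ σ, 2 ≤ ω.card ∧ b = faceBetaMax m ω})
      (⟨σ, Finset.Subset.refl _, hc, rfl⟩)))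
    · refine ⟨a, ?_⟩
      rintro _ ⟨ω, hω, h2, rfl⟩; exact (A ω hω h2).1
    · refine ⟨b, ?_⟩
      rintro _ ⟨ω, hω, h2, rfl⟩; exact (A ω hω h2).2.2
  · rintro _ ⟨ω, hω, h2, rfl⟩; exact (A ω hω h2).2.2

lemma dist_ge (H : Hyp Z) {v w : Euc m} (hv : v ∈ Vx Z) (hw : w ∈ Vx Z)
    (h : inCl (kk Z w) w v) (hne : v ≠ w) : 2 ^ (-(kk Z w)) / 2 ≤ dist w v := by
  obtain ⟨i, hi, -⟩ := exists_coord H hv hw h hne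
  rw [← hi, dist_eq_norm]
  exact coord_le_norm (w - v) i

lemma whitney (H : Hyp Z) :
    WhitneyConclusions m (1/2) (√m * ((m + 1) * BB m) + 1) Z (cplx Z H) := by
  classical
  refine ⟨fun s hs => hs.2.card_le H, ?_, ?_⟩
  · ext x
    simp only [skel, mem_iUnion, exists_prop, mem_ofPred_eq, mem_compl_iff]
    constructor
    · rintro ⟨s, ⟨hs, -⟩, hx⟩
      exact hull_notMem H hs.2 hx
    · intro hx
      obtain ⟨s, hs, hc, hxs⟩ := cover H hx
      exact ⟨s, ⟨⟨by rw [← Finset.card_pos]; omega, hs⟩, hc⟩, hxs⟩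
  · intro σ hσ hcard
    obtain ⟨hne, hs⟩ := hσ
    have hm := H.hm
    have hB := BB_pos (m := m)
    obtain ⟨w, hw, hw2⟩ := hs.top H hne
    have hwV := hs.mem w hw
    have hsm := sqrt_m_pos H.hm
    have h2k : (0:ℝ) < 2 ^ (-(kk Z w)) := by positivity
    have hdU : simpDiam m σ ≤ √m * 2 ^ (-(kk Z w)) := by
      apply diam_le_of_forall_dist_le (by positivity)
      intro x hx y hy
      exact dist_le (hull_sub hw2 hx) (hull_sub hw2 hy)
    have hdL : 2 ^ (-(kk Z w)) / 2 ≤ simpDiam m σ := by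
      obtain ⟨v, hv, hvw⟩ : ∃ v ∈ σ, v ≠ w := by
        by_contra! hc
        have := Finset.card_le_card (show σ ⊆ {w} from fun v hv => by simp [hc v hv])
        simp at this
        omega
      exact (dist_ge H (hs.mem v hv) hwV (hw2 v hv) hvw).trans
        (dist_le_diam_of_mem (hull_bdd σ) (subset_convexHull _ _ (by exact_mod_cast hw))
          (subset_convexHull _ _ (by exact_mod_cast hv)))
    have hwh : w ∈ convexHull ℝ (σ : Set (Euc m)) := subset_convexHull _ _ (by exact_mod_cast hw)
    have hset : √m * 2 ^ (-(kk Z w)) ≤ setDist m (convexHull ℝ (σ : Set (Euc m))) Z := by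
      obtain ⟨z, hz⟩ := H.ne
      refine le_csInf (s := Set.image2 dist (convexHull ℝ (σ : Set (Euc m))) Z)
        ⟨_, w, hwh, z, hz, rfl⟩ ?_
      rintro _ ⟨p, hp, z, hz, rfl⟩
      exact (good_infDist (kk_good H hwV.1) (hull_sub hw2 hp)).trans (infDist_le_dist_of_mem hz)
    have hset2 : setDist m (convexHull ℝ (σ : Set (Euc m))) Z ≤ 4 * √m * 2 ^ (-(kk Z w)) := by
      obtain ⟨z, hz, e⟩ := H.cl.exists_infDist_eq_dist H.ne w
      have h1 := infDist_lt H hwV.1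
      rw [e] at h1
      refine (csInf_le (s := Set.image2 dist (convexHull ℝ (σ : Set (Euc m))) Z)
        ⟨0, ?_⟩ ⟨w, hwh, z, hz, rfl⟩).trans h1.le
      rintro _ ⟨p, hp, z, hz, rfl⟩
      exact dist_nonneg
    have ha : 0 < 2 ^ (-(kk Z w)) / ((m + 1) * BB m) := by positivity
    obtain ⟨b1, b2, b3⟩ := betas (σ := σ) (by omega) ha
      (fun ω hω h2 t ht htc => ⟨beta_low H hs hw hw2 hω h2 ht htc, beta_high hω h2 ht htc⟩)
    have hlp : 0 < betaLow m σ := ha.trans_le b1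
    have hhp : 0 < betaHigh m σ := hlp.trans_le b2
    have hdp : 0 < simpDiam m σ := by linarith
    refine ⟨hdU.trans hset, hset2.trans ?_, ?_, ?_, ?_⟩
    · have := mul_le_mul_of_nonneg_left hdL hsm.le
      nlinarith
    · rw [lt_div_iff₀ hhp]; linarith
    · exact div_le_div_of_nonneg_left hdp.le hlp b2
    · have : simpDiam m σ / betaLow m σ ≤ √m * ((m + 1) * BB m) := by
        rw [div_le_iff₀ hlp]
        refine hdU.trans ?_
        have := mul_le_mul_of_nonneg_left b1 (show 0 ≤ √m * ((m + 1) * BB m) by positivity)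
        refine le_trans (le_of_eq ?_) this
        field_simp
      linarith

end WT

namespace WT

lemma scale_diff {E : Type*} [NormedAddCommGroup E] [NormedSpace ℝ E] (u v : E) {a b : ℝ}
    (ha : 0 < a) (hb : 0 < b) :
    ‖a⁻¹ • u - b⁻¹ • v‖ ≤ a⁻¹ * (‖u - v‖ + |b - a| * (b⁻¹ * ‖v‖)) := by
  have e : a⁻¹ • u - b⁻¹ • v = a⁻¹ • ((u - v) + (b - a) • (b⁻¹ • v)) := by
    simp only [smul_add, smul_sub, smul_smul]
    rw [show a⁻¹ * ((b - a) * b⁻¹) = a⁻¹ - b⁻¹ by field_simp, sub_smul]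
    abel
  rw [e, norm_smul, Real.norm_of_nonneg (by positivity)]
  refine mul_le_mul_of_nonneg_left ((norm_add_le _ _).trans ?_) (by positivity)
  rw [norm_smul, norm_smul, Real.norm_of_nonneg (show 0 ≤ b⁻¹ by positivity), Real.norm_eq_abs]

/-- `A u = (u, -∑ u)`. -/
def Amap (k : ℕ) (u : Euc (k+1)) : Fin (k+2) → ℝ :=
  Fin.snoc (α := fun _ => ℝ) (fun i => u i) (-∑ i, u i)

lemma Amap_sum (k : ℕ) (u : Euc (k+1)) : ∑ i, Amap k u i = 0 := by
  rw [Fin.sum_univ_castSucc]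
  simp [Amap]

lemma Amap_smul (k : ℕ) (t : ℝ) (u : Euc (k+1)) : Amap k (t • u) = t • Amap k u := by
  ext i
  refine Fin.lastCases ?_ (fun i => ?_) i
  · simp [Amap, Finset.mul_sum]
  · simp [Amap]

lemma Amap_sub (k : ℕ) (v u : Euc (k+1)) : Amap k (v - u) = Amap k v - Amap k u := by
  ext i
  refine Fin.lastCases ?_ (fun i => ?_) i
  · simp [Amap]; ring
  · simp [Amap]

lemma Amap_coord (k : ℕ) (u : Euc (k+1)) (i) : |Amap k u i| ≤ (k+1) * ‖u‖ := by
  refine Fin.lastCases ?_ (fun i => ?_) i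
  · simp only [Amap, Fin.snoc_last, abs_neg]
    refine (Finset.abs_sum_le_sum_abs _ _).trans ?_
    refine (Finset.sum_le_card_nsmul _ _ ‖u‖ (fun i _ => coord_le_norm u i)).trans ?_
    simp
  · simp only [Amap, Fin.snoc_castSucc]
    refine (coord_le_norm u i).trans ?_
    have := norm_nonneg u
    have hk : (0:ℝ) ≤ k := by positivity
    nlinarith

lemma Amap_norm (k : ℕ) (u : Euc (k+1)) : ‖Amap k u‖ ≤ (k+1) * ‖u‖ := by
  rw [pi_norm_le_iff_of_nonneg (by positivity)]
  exact fun i => Amap_coord k u i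

def gmap (k : ℕ) (u : Euc (k+1)) : ℝ :=
  Finset.univ.sup' Finset.univ_nonempty (fun i => -((k+2) * Amap k u i))

lemma le_gmap (k : ℕ) (u : Euc (k+1)) (i) : -((k+2) * Amap k u i) ≤ gmap k u :=
  Finset.le_sup' (fun i => -((k+2) * Amap k u i)) (Finset.mem_univ i)

lemma gmap_eq (k : ℕ) (u : Euc (k+1)) : ∃ i, gmap k u = -((k+2) * Amap k u i) := by
  obtain ⟨i, -, h⟩ := Finset.exists_mem_eq_sup' Finset.univ_nonempty
    (fun i => -((k+2) * Amap k u i))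
  exact ⟨i, h⟩

lemma gmap_lip (k : ℕ) (u v : Euc (k+1)) :
    |gmap k u - gmap k v| ≤ (k+2) * (k+1) * ‖u - v‖ := by
  have key : ∀ u v : Euc (k+1), gmap k u - gmap k v ≤ (k+2) * (k+1) * ‖u - v‖ := by
    intro u v
    obtain ⟨i, hi⟩ := gmap_eq k u
    have h1 := le_gmap k v i
    have h2 := (abs_le.1 (Amap_coord k (u - v) i)).1
    rw [Amap_sub, Pi.sub_apply] at h2
    have hk : (0:ℝ) ≤ k + 2 := by positivity
    have h3 := mul_le_mul_of_nonneg_left h2 hk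
    linarith
  rw [abs_le]
  have h2 := key v u
  rw [norm_sub_rev] at h2
  exact ⟨by linarith, key u v⟩

lemma gmap_low (k : ℕ) (u : Euc (k+1)) : ‖u‖ ≤ (k+1) * gmap k u := by
  have hk : (0:ℝ) ≤ k := by positivity
  set t := gmap k u with ht
  have hlow : ∀ i, -(t / (k+2)) ≤ Amap k u i := by
    intro i
    have := le_gmap k u i
    rw [neg_le, le_div_iff₀ (by positivity)]
    linarith
  have hsum := Amap_sum k u
  have ht0 : 0 ≤ t := by
    by_contra! hlt
    have : 0 < ∑ i, Amap k u i := by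
      apply Finset.sum_pos _ Finset.univ_nonempty
      intro i _
      refine lt_of_lt_of_le ?_ (hlow i)
      rw [neg_pos]
      exact div_neg_of_neg_of_pos hlt (by positivity)
    linarith
  have hup : ∀ i, Amap k u i ≤ t := by
    intro i
    rw [← Finset.add_sum_erase _ _ (Finset.mem_univ i)] at hsum
    have h1 : ((Finset.univ : Finset (Fin (k+2))).erase i).card • (-(t/(k+2))) ≤
        ∑ j ∈ Finset.univ.erase i, Amap k u j :=
      Finset.card_nsmul_le_sum _ _ _ (fun j _ => hlow j)
    rw [Finset.card_erase_of_mem (Finset.mem_univ i)] at h1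
    simp only [Finset.card_univ, Fintype.card_fin, nsmul_eq_mul, Nat.add_succ_sub_one] at h1
    have h2 : (k+1) * (t/(k+2)) ≤ t := by
      rw [← mul_div_assoc, div_le_iff₀ (by positivity)]
      nlinarith
    push_cast at h1
    linarith
  have hlow' : ∀ i, -t ≤ Amap k u i := by
    intro i
    refine le_trans ?_ (hlow i)
    rw [neg_le_neg_iff, div_le_iff₀ (by positivity)]
    nlinarith
  rw [EuclideanSpace.norm_eq]
  refine Real.sqrt_le_iff.2 ⟨by positivity, ?_⟩
  have h1 : ∑ i, ‖u i‖ ^ 2 ≤ ∑ _i : Fin (k+1), t ^ 2 := by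
    apply Finset.sum_le_sum
    intro i _
    have a1 := hup i.castSucc
    have a2 := hlow' i.castSucc
    simp only [Amap, Fin.snoc_castSucc] at a1 a2
    rw [Real.norm_eq_abs]
    exact pow_le_pow_left₀ (abs_nonneg _) (abs_le.2 ⟨a2, a1⟩) 2
  refine h1.trans ?_
  simp only [Finset.sum_const, Finset.card_univ, Fintype.card_fin, nsmul_eq_mul]
  push_cast
  nlinarith [sq_nonneg t, mul_nonneg hk (sq_nonneg t)]

def phi (k : ℕ) (u : Euc (k+1)) : Fin (k+2) → ℝ :=
  (fun _ => ((k:ℝ)+2)⁻¹) + (gmap k u)⁻¹ • Amap k u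

def sBdry (k : ℕ) : Set (Fin (k+2) → ℝ) := {x | x ∈ stdSimplex ℝ (Fin (k+2)) ∧ ∃ i, x i = 0}

lemma gmap_sphere (k : ℕ) {u : Euc (k+1)} (hu : u ∈ sphere (0 : Euc (k+1)) 1) :
    ((k:ℝ)+1)⁻¹ ≤ gmap k u := by
  have := gmap_low k u
  rw [mem_sphere_zero_iff_norm] at hu
  rw [hu] at this
  rw [inv_le_iff_one_le_mul₀' (by positivity)]
  exact this

lemma phi_mem (k : ℕ) {u : Euc (k+1)} (hu : u ∈ sphere (0 : Euc (k+1)) 1) :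
    phi k u ∈ sBdry k := by
  have hg : 0 < gmap k u := lt_of_lt_of_le (by positivity) (gmap_sphere k hu)
  refine ⟨⟨fun i => ?_, ?_⟩, ?_⟩
  · have := le_gmap k u i
    simp only [phi, Pi.add_apply, Pi.smul_apply, smul_eq_mul]
    have e : ((k:ℝ)+2)⁻¹ + (gmap k u)⁻¹ * Amap k u i
      = (gmap k u + (k+2) * Amap k u i) * (((k:ℝ)+2)⁻¹ * (gmap k u)⁻¹) := by field_simp
    rw [e]
    apply mul_nonneg (by linarith) (by positivity)
  · simp only [phi, Pi.add_apply, Pi.smul_apply, smul_eq_mul]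
    rw [Finset.sum_add_distrib, ← Finset.mul_sum, Amap_sum]
    simp
    field_simp
  · obtain ⟨i, hi⟩ := gmap_eq k u
    refine ⟨i, ?_⟩
    simp only [phi, Pi.add_apply, Pi.smul_apply, smul_eq_mul]
    have e : ((k:ℝ)+2)⁻¹ + (gmap k u)⁻¹ * Amap k u i
      = (gmap k u + (k+2) * Amap k u i) * (((k:ℝ)+2)⁻¹ * (gmap k u)⁻¹) := by field_simp
    rw [e]
    have : gmap k u + (k+2) * Amap k u i = 0 := by linarith
    rw [this, zero_mul]

def phiC (k : ℕ) : ℝ := ((k:ℝ)+1) * ((k+1) + (k+2) * (k+1) * ((k+1) * (k+1)))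

lemma phi_lip (k : ℕ) {u v : Euc (k+1)} (hu : u ∈ sphere (0 : Euc (k+1)) 1)
    (hv : v ∈ sphere (0 : Euc (k+1)) 1) : dist (phi k u) (phi k v) ≤ phiC k * dist u v := by
  have hgu := gmap_sphere k hu
  have hgv := gmap_sphere k hv
  have hg : 0 < gmap k u := lt_of_lt_of_le (by positivity) hgu
  have hg' : 0 < gmap k v := lt_of_lt_of_le (by positivity) hgv
  rw [dist_eq_norm, dist_eq_norm]
  simp only [phi]
  rw [add_sub_add_left_eq_sub]
  refine (scale_diff _ _ hg hg').trans ?_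
  have i1 : (gmap k u)⁻¹ ≤ k + 1 := by
    rw [inv_le_comm₀ hg (by positivity)]; exact hgu
  have i2 : (gmap k v)⁻¹ ≤ k + 1 := by
    rw [inv_le_comm₀ hg' (by positivity)]; exact hgv
  have n1 : ‖Amap k u - Amap k v‖ ≤ (k+1) * ‖u - v‖ := by
    rw [← Amap_sub]; exact Amap_norm k _
  have n2 : ‖Amap k v‖ ≤ k + 1 := by
    have := Amap_norm k v
    rw [mem_sphere_zero_iff_norm] at hv
    rw [hv] at this
    linarith
  have n3 : |gmap k v - gmap k u| ≤ (k+2) * (k+1) * ‖u - v‖ := by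
    rw [norm_sub_rev]; exact gmap_lip k v u
  calc (gmap k u)⁻¹ * (‖Amap k u - Amap k v‖ + |gmap k v - gmap k u| * ((gmap k v)⁻¹ * ‖Amap k v‖))
      ≤ ((k:ℝ)+1) * ((k+1) * ‖u - v‖ + (k+2) * (k+1) * ‖u - v‖ * ((k+1) * (k+1))) := by
        gcongr
    _ = _ := by rw [phiC]; ring

def Bmap (k : ℕ) (x : Fin (k+2) → ℝ) : Euc (k+1) :=
  WithLp.toLp 2 (fun i => x i.castSucc - ((k:ℝ)+2)⁻¹)

lemma Bmap_lip (k : ℕ) (x y : Fin (k+2) → ℝ) : ‖Bmap k x - Bmap k y‖ ≤ (k+1) * ‖x - y‖ := by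
  rw [EuclideanSpace.norm_eq]
  refine Real.sqrt_le_iff.2 ⟨by positivity, ?_⟩
  have h1 : ∑ i, ‖(Bmap k x - Bmap k y) i‖ ^ 2 ≤ ∑ _i : Fin (k+1), ‖x - y‖ ^ 2 := by
    apply Finset.sum_le_sum
    intro i _
    refine pow_le_pow_left₀ (norm_nonneg _) ?_ 2
    have := norm_le_pi_norm (x - y) i.castSucc
    simpa [Bmap] using this
  refine h1.trans ?_
  simp only [Finset.sum_const, Finset.card_univ, Fintype.card_fin, nsmul_eq_mul]
  push_cast
  have hk : (0:ℝ) ≤ k := by positivity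
  nlinarith [sq_nonneg ‖x - y‖, mul_nonneg hk (sq_nonneg ‖x - y‖)]

lemma Amap_Bmap (k : ℕ) {x : Fin (k+2) → ℝ} (hx : ∑ i, x i = 1) (i) :
    Amap k (Bmap k x) i = x i - ((k:ℝ)+2)⁻¹ := by
  refine Fin.lastCases ?_ (fun i => ?_) i
  · simp only [Amap, Fin.snoc_last, Bmap]
    rw [Finset.sum_sub_distrib]
    rw [Fin.sum_univ_castSucc] at hx
    simp
    have : ((k:ℝ)+1) * ((k:ℝ)+2)⁻¹ = 1 - ((k:ℝ)+2)⁻¹ := by field_simp; ring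
    rw [this]
    linarith
  · simp [Amap, Bmap]

def rr (k : ℕ) : ℝ := (((k:ℝ)+2) * (k+1))⁻¹

lemma rr_pos (k : ℕ) : 0 < rr k := by unfold rr; positivity

def psi (k : ℕ) (x : Fin (k+2) → ℝ) : Euc (k+1) := (max (rr k) ‖Bmap k x‖)⁻¹ • Bmap k x

lemma psi_lip (k : ℕ) (x y : Fin (k+2) → ℝ) :
    dist (psi k x) (psi k y) ≤ (rr k)⁻¹ * (2 * (k+1)) * dist x y := by
  have hr := rr_pos k
  rw [dist_eq_norm, dist_eq_norm]
  have ha : 0 < max (rr k) ‖Bmap k x‖ := lt_max_of_lt_left hr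
  have hb : 0 < max (rr k) ‖Bmap k y‖ := lt_max_of_lt_left hr
  refine (scale_diff _ _ ha hb).trans ?_
  have h1 := Bmap_lip k x y
  have h2 : |max (rr k) ‖Bmap k y‖ - max (rr k) ‖Bmap k x‖| ≤ (k+1) * ‖x - y‖ := by
    rw [max_comm (rr k), max_comm (rr k)]
    refine (abs_max_sub_max_le_abs _ _ _).trans ?_
    refine (abs_norm_sub_norm_le _ _).trans ?_
    rw [norm_sub_rev]; exact h1
  have h3 : (max (rr k) ‖Bmap k y‖)⁻¹ * ‖Bmap k y‖ ≤ 1 := by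
    rw [inv_mul_le_iff₀ hb, mul_one]; exact le_max_right _ _
  have h4 : (max (rr k) ‖Bmap k x‖)⁻¹ ≤ (rr k)⁻¹ := inv_anti₀ hr (le_max_left _ _)
  calc _ ≤ (rr k)⁻¹ * ((k+1) * ‖x - y‖ + (k+1) * ‖x - y‖ * 1) := by gcongr
    _ = _ := by ring

lemma psi_ball (k : ℕ) (x : Fin (k+2) → ℝ) : psi k x ∈ closedBall (0 : Euc (k+1)) 1 := by
  have hr := rr_pos k
  have ha : 0 < max (rr k) ‖Bmap k x‖ := lt_max_of_lt_left hr
  rw [mem_closedBall_zero_iff, psi, norm_smul, Real.norm_of_nonneg (by positivity),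
    inv_mul_le_iff₀ ha, mul_one]
  exact le_max_right _ _

lemma psi_bdry (k : ℕ) {x : Fin (k+2) → ℝ} (hx : x ∈ sBdry k) :
    psi k x ∈ sphere (0 : Euc (k+1)) 1 ∧ phi k (psi k x) = x := by
  obtain ⟨⟨h0, h1⟩, i0, hi0⟩ := hx
  have hA := Amap_Bmap k h1
  set u := Bmap k x with hu
  have hun : rr k ≤ ‖u‖ := by
    have := Amap_coord k u i0
    rw [hA, hi0, zero_sub, abs_neg, abs_of_nonneg (by positivity)] at this
    rw [rr, mul_inv, ← div_eq_mul_inv, div_le_iff₀ (by positivity)]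
    linarith
  have hup : 0 < ‖u‖ := (rr_pos k).trans_le hun
  have hpsi : psi k x = ‖u‖⁻¹ • u := by rw [psi, ← hu, max_eq_right hun]
  refine ⟨?_, ?_⟩
  · rw [hpsi, mem_sphere_zero_iff_norm, norm_smul, norm_inv, norm_norm]
    field_simp
  · have hg : gmap k (‖u‖⁻¹ • u) = ‖u‖⁻¹ := by
      apply le_antisymm
      · apply Finset.sup'_le
        intro i _
        rw [Amap_smul, Pi.smul_apply, smul_eq_mul, hA]
        have e : -(((k:ℝ)+2) * (‖u‖⁻¹ * (x i - ((k:ℝ)+2)⁻¹))) = ‖u‖⁻¹ * (1 - (k+2) * x i) := by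
          field_simp; ring
        rw [e]
        have := h0 i
        have : 0 ≤ ((k:ℝ)+2) * x i := by positivity
        have hui : 0 < ‖u‖⁻¹ := by positivity
        nlinarith
      · have := le_gmap k (‖u‖⁻¹ • u) i0
        rw [Amap_smul, Pi.smul_apply, smul_eq_mul, hA, hi0] at this
        refine le_trans (le_of_eq ?_) this
        field_simp; ring
    rw [hpsi, phi, hg, Amap_smul]
    ext i
    simp only [Pi.add_apply, Pi.smul_apply, smul_eq_mul, hA, inv_inv]
    field_simp
    ring

/-- Lipschitz on facets implies Lipschitz on the boundary. -/
lemma bdry_lip (k : ℕ) {Y : Type} [MetricSpace Y] {l : ℝ} (hl : 0 ≤ l) (h : (Fin (k+2) → ℝ) → Y)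
    (hf : ∀ i, ∀ x ∈ stdSimplex ℝ (Fin (k+2)), ∀ y ∈ stdSimplex ℝ (Fin (k+2)), x i = 0 → y i = 0 →
      dist (h x) (h y) ≤ l * dist x y)
    (hv : ∀ i j, dist (h (Pi.single i 1)) (h (Pi.single j 1)) ≤ l) :
    ∀ x ∈ sBdry k, ∀ y ∈ sBdry k, dist (h x) (h y) ≤ 3 * l * dist x y := by
  rintro x ⟨hx, a, hxa⟩ y ⟨hy, b, hyb⟩
  have hd := dist_nonneg (x := x) (y := y)
  have hld := mul_nonneg hl hd
  by_cases hab : a = b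
  · subst hab
    have := hf a x hx y hy hxa hyb
    nlinarith
  by_cases hc : ∃ c, c ≠ a ∧ c ≠ b
  · obtain ⟨c, hca, hcb⟩ := hc
    have hxb : |x b| ≤ dist x y := by
      have := dist_le_pi_dist x y b
      rwa [hyb, Real.dist_0_eq_abs] at this
    set z : Fin (k+2) → ℝ := x + x b • (Pi.single c 1 - Pi.single b 1) with hz
    have hz' : ∀ i, z i = x i + x b * ((if i = c then 1 else 0) - (if i = b then 1 else 0)) := by
      intro i
      simp [hz, Pi.single_apply]
    have hzS : z ∈ stdSimplex ℝ (Fin (k+2)) := by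
      refine ⟨fun i => ?_, ?_⟩
      · rw [hz']
        have h1 := hx.1 i
        have h2 := hx.1 b
        by_cases hib : i = b
        · subst hib; simp [hcb.symm]
        · by_cases hic : i = c
          · subst hic; simp [hib]; linarith
          · simp [hib, hic]; linarith
      · simp only [hz', mul_sub, Finset.sum_add_distrib, Finset.sum_sub_distrib]
        simp [hx.2]
    have hxz : dist x z ≤ dist x y := by
      rw [dist_pi_le_iff hd]
      intro i
      rw [hz', Real.dist_eq]
      refine le_trans ?_ hxb
      rw [sub_add_cancel_left, abs_neg, abs_mul]
      refine mul_le_of_le_one_right (abs_nonneg _) ?_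
      by_cases hib : i = b
      · subst hib; simp [hcb.symm]
      · by_cases hic : i = c
        · subst hic; simp [hib]
        · simp [hib, hic]
    have hzy : dist z y ≤ 2 * dist x y := by
      have := dist_triangle z x y
      rw [dist_comm z x] at this
      linarith
    have h1 := hf a x hx z hzS hxa (by rw [hz']; simp [hca.symm, hab, hxa])
    have h2 := hf b z hzS y hy (by rw [hz']; simp [hcb.symm]) hyb
    have h3 := dist_triangle (h x) (h z) (h y)
    have h4 := mul_le_mul_of_nonneg_left hxz hl
    have h5 := mul_le_mul_of_nonneg_left hzy hl
    linarith
  · push Not at hc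
    have hun : (Finset.univ : Finset (Fin (k+2))) = {a, b} := by
      ext c
      simp only [Finset.mem_univ, Finset.mem_insert, Finset.mem_singleton, true_iff]
      by_cases h : c = a
      · exact Or.inl h
      · exact Or.inr (hc c h)
    have hxe : x = Pi.single b 1 := by
      have := hx.2
      rw [hun, Finset.sum_pair hab, hxa, zero_add] at this
      ext c
      by_cases h : c = a
      · subst h; simp [hxa, hab]
      · rw [hc c h, this]; simp
    have hye : y = Pi.single a 1 := by
      have := hy.2
      rw [hun, Finset.sum_pair hab, hyb, add_zero] at this
      ext c
      by_cases h : c = a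
      · rw [h, this]; simp
      · rw [hc c h, hyb]; simp [Ne.symm hab]
    have h1 : 1 ≤ dist x y := by
      have := dist_le_pi_dist x y a
      rw [hxa, hye] at this
      rw [hye]
      simpa using this
    have h2 := hv b a
    rw [hxe, hye] at *
    nlinarith

def MM (c : ℝ) (k : ℕ) : ℝ := |c| * (phiC k * 3) * ((rr k)⁻¹ * (2 * (k+1)))

lemma MM_nonneg (c : ℝ) (k : ℕ) : 0 ≤ MM c k := by
  have := rr_pos k
  unfold MM phiC
  positivity

lemma std_ext {n : ℕ} {c : ℝ} {Y : Type} [MetricSpace Y] (hY : LipschitzConnected n c Y)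
    {k : ℕ} (hk : k < n) {l : ℝ} (hl : 0 ≤ l) (h : (Fin (k+2) → ℝ) → Y)
    (hf : ∀ i, ∀ x ∈ stdSimplex ℝ (Fin (k+2)), ∀ y ∈ stdSimplex ℝ (Fin (k+2)), x i = 0 → y i = 0 →
      dist (h x) (h y) ≤ l * dist x y)
    (hv : ∀ i j, dist (h (Pi.single i 1)) (h (Pi.single j 1)) ≤ l) :
    ∃ G : (Fin (k+2) → ℝ) → Y, (∀ x y, dist (G x) (G y) ≤ MM c k * l * dist x y) ∧
      ∀ x ∈ sBdry k, G x = h x := by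
  have hb := bdry_lip k hl h hf hv
  have hp : 0 ≤ phiC k := by unfold phiC; positivity
  obtain ⟨F, hF1, hF2⟩ := hY k hk (3 * l * phiC k) (by positivity) (h ∘ phi k) (by
    intro x hx y hy
    refine (hb _ (phi_mem k hx) _ (phi_mem k hy)).trans ?_
    have := mul_le_mul_of_nonneg_left (phi_lip k hx hy) (show 0 ≤ 3 * l by positivity)
    linarith)
  refine ⟨F ∘ psi k, fun x y => ?_, fun x hx => ?_⟩
  · refine (hF1 _ (psi_ball k x) _ (psi_ball k y)).trans ?_
    have h1 : c * (3 * l * phiC k) ≤ |c| * (3 * l * phiC k) :=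
      mul_le_mul_of_nonneg_right (le_abs_self c) (by positivity)
    calc _ ≤ |c| * (3 * l * phiC k) * ((rr k)⁻¹ * (2 * (k+1)) * dist x y) :=
          mul_le_mul h1 (psi_lip k x y) dist_nonneg (by positivity)
      _ = _ := by rw [MM]; ring
  · obtain ⟨h1, h2⟩ := psi_bdry k hx
    simp only [Function.comp]
    rw [hF2 _ h1]
    simp [h2]

end WT

namespace WT
variable {m : ℕ} {Z : Set (Euc m)}

def NN (m : ℕ) (c : ℝ) (k : ℕ) : ℝ := MM c k * (((k:ℝ)+2) * √m) * BB m

lemma NN_nonneg (m : ℕ) (c : ℝ) (k : ℕ) : 0 ≤ NN m c k := by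
  have := MM_nonneg c k
  have := BB_pos (m := m)
  unfold NN
  positivity

lemma face_ext (H : Hyp Z) {n : ℕ} {c : ℝ} {Y : Type} [MetricSpace Y]
    (hY : LipschitzConnected n c Y) {k : ℕ} (hk : k < n) {s : Finset (Euc m)} (hs : IsCh Z s)
    (hcard : s.card = k + 2) {l : ℝ} (hl : 0 ≤ l) (G : Euc m → Y)
    (hf : ∀ t ⊆ s, t.card = k + 1 → ∀ x ∈ convexHull ℝ (t : Set (Euc m)),
      ∀ y ∈ convexHull ℝ (t : Set (Euc m)), dist (G x) (G y) ≤ l * dist x y)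
    (hv : ∀ v ∈ s, ∀ w ∈ s, dist (G v) (G w) ≤ l * dist v w) :
    ∃ G' : Euc m → Y, (∀ x ∈ convexHull ℝ (s : Set (Euc m)),
      ∀ y ∈ convexHull ℝ (s : Set (Euc m)), dist (G' x) (G' y) ≤ NN m c k * l * dist x y) ∧
      ∀ t ⊆ s, t.card = k + 1 → ∀ x ∈ convexHull ℝ (t : Set (Euc m)), G' x = G x := by
  classical
  have hne : s.Nonempty := by rw [← Finset.card_pos]; omega
  obtain ⟨w, hw, hw2⟩ := hs.top H hne
  set S : ℝ := 2 ^ (-(kk Z w)) with hS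
  have hSp : 0 < S := by positivity
  have hsm := sqrt_m_pos H.hm
  have hB := BB_pos (m := m)
  let e : s ≃ Fin (k+2) := s.equivFinOfCardEq hcard
  set P : Fin (k+2) → Euc m := fun i => (e.symm i : Euc m) with hP
  have hPs : ∀ i, P i ∈ s := fun i => (e.symm i).2
  have hPi : Function.Injective P := fun i j h => e.symm.injective (Subtype.ext h)
  have hPsur : ∀ v ∈ s, ∃ i, P i = v := fun v hv => ⟨e ⟨v, hv⟩, by simp [hP]⟩
  have hsum : ∀ {E : Type} [AddCommMonoid E] (F : Euc m → E), ∑ v ∈ s, F v = ∑ i, F (P i) := by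
    intro E _ F
    rw [← Finset.sum_coe_sort s F, ← Equiv.sum_comp e.symm]
  set Λ : (Fin (k+2) → ℝ) → Euc m := fun x => ∑ i, x i • P i with hΛ
  have hΛsub : ∀ x y, Λ x - Λ y = ∑ i, (x i - y i) • P i := by
    intro x y
    simp only [hΛ, sub_smul, Finset.sum_sub_distrib]
  have hPw : ∀ i, ‖P i - w‖ ≤ √m * S := by
    intro i
    rw [← dist_eq_norm]
    exact dist_le (hw2 _ (hPs i)) (hw2 _ hw)
  have hup : ∀ x ∈ stdSimplex ℝ (Fin (k+2)), ∀ y ∈ stdSimplex ℝ (Fin (k+2)),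
      dist (Λ x) (Λ y) ≤ (((k:ℝ)+2) * √m) * S * dist x y := by
    intro x hx y hy
    have e1 : Λ x - Λ y = ∑ i, (x i - y i) • (P i - w) := by
      rw [hΛsub]
      simp only [smul_sub, Finset.sum_sub_distrib, ← Finset.sum_smul]
      rw [hx.2, hy.2]
      simp
    rw [dist_eq_norm, e1]
    refine (norm_sum_le _ _).trans ?_
    refine (Finset.sum_le_card_nsmul _ _ (dist x y * (√m * S)) (fun i _ => ?_)).trans ?_
    · rw [norm_smul]
      have := dist_le_pi_dist x y i
      rw [dist_eq_norm] at this
      exact mul_le_mul this (hPw i) (norm_nonneg _) dist_nonneg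
    · simp only [Finset.card_univ, Fintype.card_fin, nsmul_eq_mul]
      push_cast
      apply le_of_eq; ring
  have hlow : ∀ x ∈ stdSimplex ℝ (Fin (k+2)), ∀ y ∈ stdSimplex ℝ (Fin (k+2)),
      S * dist x y ≤ BB m * dist (Λ x) (Λ y) := by
    intro x hx y hy
    have key : ∀ i, dist (x i) (y i) ≤ BB m * dist (Λ x) (Λ y) / S := by
      intro i
      set ν : Euc m → ℝ := fun v => ∑ j, if P j = v then x j - y j else 0 with hν
      have hνP : ∀ i, ν (P i) = x i - y i := by
        intro i
        simp [hν, hPi.eq_iff]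
      have q := quant' H hs hw hw2 (hs.card_le H) ν (by
        rw [hsum]
        simp only [hνP]
        rw [Finset.sum_sub_distrib, hx.2, hy.2, sub_self]) (hPs i)
      rw [hsum (fun v => ν v • v)] at q
      simp only [hνP] at q
      rw [← hΛsub, ← dist_eq_norm, ← hS] at q
      rw [le_div_iff₀ hSp, Real.dist_eq]
      exact q
    have := (dist_pi_le_iff (by positivity)).2 key
    rw [le_div_iff₀ hSp] at this
    linarith
  have hinj : ∀ x ∈ stdSimplex ℝ (Fin (k+2)), ∀ y ∈ stdSimplex ℝ (Fin (k+2)),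
      Λ x = Λ y → x = y := by
    intro x hx y hy h
    have := hlow x hx y hy
    rw [h, dist_self, mul_zero] at this
    apply dist_le_zero.1
    by_contra! hc
    have := mul_pos hSp hc
    linarith
  have hrep : ∀ t ⊆ s, ∀ x ∈ convexHull ℝ (t : Set (Euc m)), ∃ y ∈ stdSimplex ℝ (Fin (k+2)),
      Λ y = x ∧ ∀ i, P i ∉ t → y i = 0 := by
    intro t ht x hx
    rw [Finset.mem_convexHull'] at hx
    obtain ⟨a, ha0, ha1, hax⟩ := hx
    have h1 : ∑ v ∈ s, (if v ∈ t then a v else 0) = 1 := by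
      rw [Finset.sum_ite_mem, Finset.inter_eq_right.2 ht, ha1]
    have h2 : ∑ v ∈ s, (if v ∈ t then a v else 0) • v = x := by
      simp only [ite_smul, zero_smul]
      rw [Finset.sum_ite_mem, Finset.inter_eq_right.2 ht, hax]
    refine ⟨fun i => if P i ∈ t then a (P i) else 0, ⟨fun i => ?_, ?_⟩, ?_, ?_⟩
    · dsimp only
      split_ifs with h
      · exact ha0 _ h
      · exact le_rfl
    · rw [hsum (fun v => if v ∈ t then a v else 0)] at h1
      exact h1
    · rw [hsum (fun v => (if v ∈ t then a v else 0) • v)] at h2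
      exact h2
    · intro i hi
      simp [hi]
  have hmemF : ∀ x ∈ stdSimplex ℝ (Fin (k+2)), ∀ i, x i = 0 →
      Λ x ∈ convexHull ℝ ((s.erase (P i) : Finset (Euc m)) : Set (Euc m)) := by
    intro x hx i hi
    have : Λ x = ∑ j ∈ Finset.univ.erase i, x j • P j := by
      simp only [hΛ]
      rw [← Finset.add_sum_erase _ _ (Finset.mem_univ i), hi, zero_smul, zero_add]
    rw [this]
    apply (convex_convexHull ℝ _).sum_mem (fun j _ => hx.1 j)
    · have := hx.2
      rw [← Finset.add_sum_erase _ _ (Finset.mem_univ i), hi, zero_add] at this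
      exact this
    · intro j hj
      apply subset_convexHull
      rw [Finset.mem_coe, Finset.mem_erase]
      exact ⟨fun h => (Finset.ne_of_mem_erase hj) (hPi h), hPs j⟩
  have hsingle : ∀ i, Λ (Pi.single i 1) = P i := by
    intro i
    simp [hΛ, Pi.single_apply]
  set U : ℝ := (((k:ℝ)+2) * √m) * S with hU
  have hUp : 0 ≤ U := by positivity
  obtain ⟨G2, hG1, hG2⟩ := std_ext hY hk (mul_nonneg hl hUp) (G ∘ Λ) (by
      intro i x hx y hy hxi hyi
      refine (hf (s.erase (P i)) (Finset.erase_subset _ _)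
        (by rw [Finset.card_erase_of_mem (hPs i)]; omega) _ (hmemF x hx i hxi) _
        (hmemF y hy i hyi)).trans ?_
      rw [mul_assoc]
      exact mul_le_mul_of_nonneg_left (hup x hx y hy) hl) (by
      intro i j
      simp only [Function.comp, hsingle]
      refine (hv _ (hPs i) _ (hPs j)).trans ?_
      refine mul_le_mul_of_nonneg_left ?_ hl
      refine (dist_le (hw2 _ (hPs i)) (hw2 _ (hPs j))).trans ?_
      rw [hU, ← hS]
      have hk0 : (0:ℝ) ≤ k := by positivity
      have : 0 < √m * S := by positivity
      nlinarith)
  have hex : ∀ x, ∃ y, x ∈ convexHull ℝ (s : Set (Euc m)) →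
      (y ∈ stdSimplex ℝ (Fin (k+2)) ∧ Λ y = x) := by
    intro x
    by_cases h : x ∈ convexHull ℝ (s : Set (Euc m))
    · obtain ⟨y, h1, h2, -⟩ := hrep s (Finset.Subset.refl _) x h
      exact ⟨y, fun _ => ⟨h1, h2⟩⟩
    · exact ⟨0, fun h' => absurd h' h⟩
  choose τ hτ using hex
  refine ⟨G2 ∘ τ, ?_, ?_⟩
  · intro x hx y hy
    refine (hG1 _ _).trans ?_
    have q := hlow _ (hτ x hx).1 _ (hτ y hy).1
    rw [(hτ x hx).2, (hτ y hy).2] at q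
    have hM := MM_nonneg c k
    have := mul_le_mul_of_nonneg_left q (show 0 ≤ MM c k * l * ((k+2) * √m) by positivity)
    calc _ = MM c k * l * ((k+2) * √m) * (S * dist (τ x) (τ y)) := by rw [hU]; ring
      _ ≤ _ := this
      _ = _ := by rw [NN]; ring
  · intro t ht htc x hx
    have hxs : x ∈ convexHull ℝ (s : Set (Euc m)) := convexHull_mono (by exact_mod_cast ht) hx
    obtain ⟨y, hy, hyx, hy0⟩ := hrep t ht x hx
    have e1 : τ x = y := hinj _ (hτ x hxs).1 _ hy ((hτ x hxs).2.trans hyx.symm)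
    obtain ⟨v, hvs, hvt⟩ : ∃ v ∈ s, v ∉ t := by
      by_contra! hc
      have := Finset.card_le_card (show s ⊆ t from hc)
      omega
    obtain ⟨i, rfl⟩ := hPsur v hvs
    simp only [Function.comp, e1]
    rw [hG2 y ⟨hy, i, hy0 i hvt⟩]
    simp [hyx]

def EE (m : ℕ) : ℝ := 2 + 16 * √m

lemma base_lip (H : Hyp Z) {Y : Type} [MetricSpace Y] {L : ℝ} (hL : 0 ≤ L) {f : Euc m → Y}
    (hf : ∀ x ∈ Z, ∀ y ∈ Z, dist (f x) (f y) ≤ L * dist x y) {zz : Euc m → Euc m}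
    (hz : ∀ a, zz a ∈ Z ∧ dist (zz a) a = infDist a Z) {v w : Euc m} (hv : v ∈ Vx Z)
    (hw : w ∈ Vx Z) (h : inCl (kk Z w) w v) :
    dist (f (zz v)) (f (zz w)) ≤ EE m * L * dist v w := by
  by_cases hne : v = w
  · subst hne; simp
  have h1 := dist_ge H hv hw h hne
  have h2 := infDist_lt H hw.1
  have h3 : infDist v Z ≤ infDist w Z + dist v w := infDist_le_infDist_add_dist
  have h4 := dist_triangle4 (zz v) v w (zz w)
  rw [(hz v).2, dist_comm w, (hz w).2] at h4
  have hsm := sqrt_m_pos H.hm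
  have h5 := mul_le_mul_of_nonneg_left h1 hsm.le
  rw [dist_comm w v] at h5
  have h6 : dist (zz v) (zz w) ≤ EE m * dist v w := by
    unfold EE
    nlinarith
  refine (hf _ (hz v).1 _ (hz w).1).trans ?_
  have := mul_le_mul_of_nonneg_left h6 hL
  linarith

def CC (m : ℕ) (c : ℝ) : ℕ → ℝ
  | 0 => EE m
  | k+1 => max (CC m c k) (NN m c k * CC m c k)

lemma EE_le_CC (m : ℕ) (c : ℝ) (k : ℕ) : EE m ≤ CC m c k := by
  induction k with
  | zero => exact le_rfl
  | succ k ih => exact ih.trans (le_max_left _ _)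

lemma one_le_CC (m : ℕ) (c : ℝ) (k : ℕ) : 1 ≤ CC m c k := by
  refine le_trans ?_ (EE_le_CC m c k)
  have := Real.sqrt_nonneg m
  unfold EE
  linarith

lemma skel_ext (H : Hyp Z) {n : ℕ} {c : ℝ} {Y : Type} [MetricSpace Y]
    (hY : LipschitzConnected n c Y) {L : ℝ} (hL : 0 ≤ L) {f : Euc m → Y}
    (hf : ∀ x ∈ Z, ∀ y ∈ Z, dist (f x) (f y) ≤ L * dist x y) {zz : Euc m → Euc m}
    (hz : ∀ a, zz a ∈ Z ∧ dist (zz a) a = infDist a Z) (k : ℕ) (hk : k ≤ n) :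
    ∃ G : Euc m → Y, (∀ v ∈ Vx Z, G v = f (zz v)) ∧
      ∀ s : Finset (Euc m), IsCh Z s → s.card = k + 1 →
        ∀ x ∈ convexHull ℝ (s : Set (Euc m)), ∀ y ∈ convexHull ℝ (s : Set (Euc m)),
          dist (G x) (G y) ≤ CC m c k * L * dist x y := by
  classical
  induction k with
  | zero =>
    refine ⟨fun v => f (zz v), fun _ _ => rfl, ?_⟩
    intro s _ hc x hx y hy
    obtain ⟨v, rfl⟩ := Finset.card_eq_one.1 hc
    simp only [Finset.coe_singleton, convexHull_singleton, mem_singleton_iff] at hx hy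
    subst hx; subst hy
    simp
  | succ k ih =>
    obtain ⟨G, hGv, hGl⟩ := ih (by omega)
    have hC := one_le_CC m c k
    have hE := EE_le_CC m c k
    have hl : 0 ≤ CC m c k * L := by positivity
    have hface : ∀ s : Finset (Euc m), ∃ G' : Euc m → Y, IsCh Z s → s.card = k + 2 →
        (∀ x ∈ convexHull ℝ (s : Set (Euc m)), ∀ y ∈ convexHull ℝ (s : Set (Euc m)),
          dist (G' x) (G' y) ≤ NN m c k * (CC m c k * L) * dist x y) ∧
        ∀ t ⊆ s, t.card = k + 1 → ∀ x ∈ convexHull ℝ (t : Set (Euc m)), G' x = G x := by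
      intro s
      by_cases h : IsCh Z s ∧ s.card = k + 2
      · obtain ⟨hs, hc⟩ := h
        obtain ⟨G', h1, h2⟩ := face_ext H hY (show k < n by omega) hs hc hl G
          (fun t ht htc => hGl t (hs.mono ht) htc) (by
            intro v hv w hw
            rw [hGv v (hs.mem v hv), hGv w (hs.mem w hw)]
            have key : dist (f (zz v)) (f (zz w)) ≤ EE m * L * dist v w := by
              rcases hs.tot v hv w hw with h | h
              · exact base_lip H hL hf hz (hs.mem v hv) (hs.mem w hw) h
              · rw [dist_comm, dist_comm v w]
                exact base_lip H hL hf hz (hs.mem w hw) (hs.mem v hv) h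
            refine key.trans ?_
            gcongr)
        exact ⟨G', fun _ _ => ⟨h1, h2⟩⟩
      · exact ⟨G, fun h1 h2 => absurd ⟨h1, h2⟩ h⟩
    choose Hs hHs using hface
    have hsmall : ∀ s, IsCh Z s → s.card = k + 2 → ∀ u ⊆ s, u.card ≤ k + 1 →
        ∀ x ∈ convexHull ℝ (u : Set (Euc m)), Hs s x = G x := by
      intro s hs hc u hu huc x hx
      obtain ⟨t, hut, hts, htc⟩ := Finset.exists_subsuperset_card_eq hu huc (by omega)
      exact (hHs s hs hc).2 t hts htc x (convexHull_mono (by exact_mod_cast hut) hx)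
    set G' : Euc m → Y := fun x =>
      if h : ∃ s, IsCh Z s ∧ s.card = k + 2 ∧ x ∈ convexHull ℝ (s : Set (Euc m))
      then Hs h.choose x else G x with hG'
    have hG's : ∀ s, IsCh Z s → s.card = k + 2 → ∀ x ∈ convexHull ℝ (s : Set (Euc m)),
        G' x = Hs s x := by
      intro s hs hc x hx
      have h : ∃ s, IsCh Z s ∧ s.card = k + 2 ∧ x ∈ convexHull ℝ (s : Set (Euc m)) :=
        ⟨s, hs, hc, hx⟩
      have e : G' x = Hs h.choose x := by simp only [hG']; rw [dif_pos h]
      rw [e]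
      obtain ⟨hs', hc', hx'⟩ := h.choose_spec
      set s' := h.choose
      by_cases hss : s' = s
      · rw [hss]
      have hI := inter_hull H _ s' s le_rfl hs' hs x hx' hx
      have hcI : (s' ∩ s).card ≤ k + 1 := by
        by_contra! hlt
        have e1 : s' ∩ s = s' := Finset.eq_of_subset_of_card_le Finset.inter_subset_left (by omega)
        have e2 : s' ∩ s = s := Finset.eq_of_subset_of_card_le Finset.inter_subset_right (by omega)
        exact hss (e1.symm.trans e2)
      rw [hsmall s' hs' hc' _ Finset.inter_subset_left hcI x hI,
        hsmall s hs hc _ Finset.inter_subset_right hcI x hI]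
    refine ⟨G', ?_, ?_⟩
    · intro v hv
      rw [← hGv v hv]
      by_cases h : ∃ s, IsCh Z s ∧ s.card = k + 2 ∧ v ∈ convexHull ℝ (s : Set (Euc m))
      · obtain ⟨s, hs, hc, hx⟩ := h
        rw [hG's s hs hc v hx]
        have hsv : IsCh Z {v} := ⟨by simpa using hv, by
          simp only [Finset.mem_singleton]
          rintro a rfl b rfl
          exact Or.inl (inCl_refl _ _)⟩
        have hI := inter_hull H _ {v} s le_rfl hsv hs v (by simp) hx
        refine hsmall s hs hc _ Finset.inter_subset_right ?_ v hI
        refine (Finset.card_le_card Finset.inter_subset_left).trans ?_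
        simp
      · simp only [hG']; rw [dif_neg h]
    · intro s hs hc x hx y hy
      rw [hG's s hs hc x hx, hG's s hs hc y hy]
      refine ((hHs s hs hc).1 x hx y hy).trans ?_
      rw [← mul_assoc]
      gcongr
      exact le_max_right _ _

end WT

/-- **Lemma (Lipschitz extension to the `n`-skeleton of the Whitney triangulation).**
For `m > n ≥ 1` and `γ ≥ 1` there is `C̃ ≥ 1` depending only on `m, n, γ` such that for
every nonempty proper closed `Z ⊊ ℝ^m` there is a Whitney triangulation `Σ` of
`ℝ^m ∖ Z` such that every `L`-Lipschitz map `f : Z → Y` into a Lipschitz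
`(n−1)`-connected space `Y` (with constant `γ`) extends to
`f̃ : Z ∪ Σ^{(n)} → Y` which is `LC̃`-Lipschitz on every `n`-simplex of `Σ`, and maps
every vertex `a` of `Σ` to `f(z_a)` for some nearest point `z_a ∈ Z` to `a`. -/
theorem lipschitz_extension_to_skeleton
    (m n : ℕ) (hn : 1 ≤ n) (hmn : n < m) (c : ℝ) (hc : 1 ≤ c) :
    ∃ Ct : ℝ, 1 ≤ Ct ∧ ∃ D₁ D₂ : ℝ, 0 < D₁ ∧ 0 < D₂ ∧
      ∀ Z : Set (Euc m), IsClosed Z → Z.Nonempty → Z ≠ Set.univ →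
        ∃ K : Geometry.SimplicialComplex ℝ (Euc m),
          WhitneyConclusions m D₁ D₂ Z K ∧
          ∀ (Y : Type) [MetricSpace Y], LipschitzConnected n c Y →
            ∀ L : ℝ, 0 ≤ L → ∀ f : Euc m → Y,
              (∀ x ∈ Z, ∀ y ∈ Z, dist (f x) (f y) ≤ L * dist x y) →
              ∃ ft : Euc m → Y,
                (∀ x ∈ Z, ft x = f x) ∧
                (∀ σ ∈ K.faces, σ.card = n + 1 →
                  ∀ x ∈ convexHull ℝ (σ : Set (Euc m)),
                    ∀ y ∈ convexHull ℝ (σ : Set (Euc m)),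
                      dist (ft x) (ft y) ≤ L * Ct * dist x y) ∧
                (∀ a : Euc m, ({a} : Finset (Euc m)) ∈ K.faces →
                  ∃ za ∈ Z, dist za a = Metric.infDist a Z ∧ ft a = f za) := by
  classical
  have hB := WT.BB_pos (m := m)
  refine ⟨WT.CC m c n, WT.one_le_CC m c n, 1/2, √m * ((m + 1) * WT.BB m) + 1, by norm_num,
    by positivity, ?_⟩
  intro Z hcl hne _
  have H : WT.Hyp Z := ⟨by omega, hcl, hne⟩
  refine ⟨WT.cplx Z H, WT.whitney H, ?_⟩
  intro Y _ hY L hL f hf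
  have hzz : ∀ a : Euc m, ∃ z, z ∈ Z ∧ dist z a = Metric.infDist a Z := by
    intro a
    obtain ⟨z, hz, e⟩ := hcl.exists_infDist_eq_dist hne a
    exact ⟨z, hz, by rw [e, dist_comm]⟩
  choose zz hz using hzz
  obtain ⟨G, hGv, hGl⟩ := WT.skel_ext H hY hL hf hz n le_rfl
  refine ⟨fun x => if x ∈ Z then f x else G x, fun x hx => by simp [hx], ?_, ?_⟩
  · intro σ hσ hcard x hx y hy
    have h1 := WT.hull_notMem H hσ.2 hx
    have h2 := WT.hull_notMem H hσ.2 hy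
    simp only [h1, h2, if_false]
    refine (hGl σ hσ.2 hcard x hx y hy).trans (le_of_eq (by ring))
  · intro a ha
    have haV : a ∈ WT.Vx Z := ha.2.mem a (by simp)
    refine ⟨zz a, (hz a).1, (hz a).2, ?_⟩
    simp only [haV.1, if_false]
    exact hGv a haV

end
end

section
/- For every integer m ≥ 2 there is a constant μ ≥ 1 depending only on m such that for every nonempty closed set Z ⊊ ℝ^m there exists an m-dimensional simplicial complex Σ with Σ^{(m)} = ℝ^m ∖ Z satisfying the Whitney triangulation conclusions, and with the following property: for every j ∈ {1,…,m−1}, every (j+1)-simplex ω ∈ Σ, any two j-faces ω₁ and ω₂ of ω, and any points x ∈ ω₁ and y ∈ ω₂, there exists a point v ∈ ω₁ ∩ ω₂ such that |x−v| + |v−y| ≤ μ|x−y|. -/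
open MeasureTheory Metric Set
noncomputable section

namespace Whit

def icl (k : ℤ) (s t : ℝ) : Prop :=
  (⌊(2:ℝ)^k * s⌋ : ℝ) ≤ (2:ℝ)^k * t ∧ (2:ℝ)^k * t ≤ (⌈(2:ℝ)^k * s⌉ : ℝ)

def near (k : ℤ) (s t : ℝ) : Prop :=
  ∃ a : ℤ, (a:ℝ) ≤ (2:ℝ)^k * s ∧ (2:ℝ)^k * s ≤ a + 1 ∧ (a:ℝ) ≤ (2:ℝ)^k * t ∧ (2:ℝ)^k * t ≤ a + 1

def ctr (k : ℤ) (t : ℝ) : ℝ := ((⌊(2:ℝ)^k * t⌋ : ℝ) + (⌈(2:ℝ)^k * t⌉ : ℝ)) / 2 * (2:ℝ)^(-k)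

lemma p2 (k : ℤ) : (0:ℝ) < (2:ℝ)^k := by positivity

lemma pow_split {k l : ℤ} (h : k ≤ l) : ∃ D : ℤ, 0 < D ∧ (2:ℝ)^l = D * (2:ℝ)^k := by
  obtain ⟨d, rfl⟩ := Int.le.dest h
  refine ⟨2^d, by positivity, ?_⟩
  rw [zpow_add₀ (by norm_num)]
  push_cast
  rw [zpow_natCast]; ring

lemma icl_self (k : ℤ) (s : ℝ) : icl k s s := ⟨Int.floor_le _, Int.le_ceil _⟩

lemma icl_trans {k : ℤ} {r s t : ℝ} (h : icl k r s) (h' : icl k s t) : icl k r t := by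
  refine ⟨le_trans ?_ h'.1, le_trans h'.2 ?_⟩
  · exact_mod_cast Int.le_floor.2 h.1
  · exact_mod_cast Int.ceil_le.2 h.2

lemma icl_mono {k l : ℤ} (hkl : k ≤ l) {s t : ℝ} (h : icl l s t) : icl k s t := by
  obtain ⟨D, hD, e⟩ := pow_split hkl
  have hD' : (0:ℝ) < D := by exact_mod_cast hD
  unfold icl at *
  rw [e, mul_assoc, mul_assoc] at h
  set S := (2:ℝ)^k * s
  set T := (2:ℝ)^k * t
  have h1 : D * ⌊S⌋ ≤ ⌊D * S⌋ := by
    apply Int.le_floor.2; push_cast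
    exact mul_le_mul_of_nonneg_left (Int.floor_le _) hD'.le
  have h2 : ⌈D * S⌉ ≤ D * ⌈S⌉ := by
    apply Int.ceil_le.2; push_cast
    exact mul_le_mul_of_nonneg_left (Int.le_ceil _) hD'.le
  have h1' : (D:ℝ) * ⌊S⌋ ≤ ⌊D * S⌋ := by exact_mod_cast h1
  have h2' : (⌈D * S⌉:ℝ) ≤ D * ⌈S⌉ := by exact_mod_cast h2
  constructor
  · exact le_of_mul_le_mul_left (h1'.trans h.1) hD'
  · exact le_of_mul_le_mul_left (h.2.trans h2') hD'

lemma near_of_icl {k : ℤ} {s t : ℝ} (h : icl k s t) : near k s t := by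
  have : (⌈(2:ℝ)^k * s⌉:ℝ) ≤ ⌊(2:ℝ)^k * s⌋ + 1 := by exact_mod_cast Int.ceil_le_floor_add_one _
  exact ⟨⌊(2:ℝ)^k * s⌋, Int.floor_le _, (Int.lt_floor_add_one _).le, h.1, h.2.trans this⟩

lemma near_of_icl_near {k : ℤ} {x y p : ℝ} (h : icl k y x) (h' : near k y p) : near k x p := by
  obtain ⟨a, h1, h2, h3, h4⟩ := h'
  refine ⟨a, le_trans ?_ h.1, h.2.trans ?_, h3, h4⟩
  · exact_mod_cast Int.le_floor.2 h1
  · have : ⌈(2:ℝ)^k * y⌉ ≤ a + 1 := Int.ceil_le.2 (by push_cast; exact h2)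
    exact_mod_cast this

lemma near_mono {k l : ℤ} (hkl : k ≤ l) {s t : ℝ} (h : near l s t) : near k s t := by
  obtain ⟨D, hD, e⟩ := pow_split hkl
  have hD' : (0:ℝ) < D := by exact_mod_cast hD
  unfold near at *
  rw [e, mul_assoc, mul_assoc] at h
  set S := (2:ℝ)^k * s
  set T := (2:ℝ)^k * t
  obtain ⟨a, h1, h2, h3, h4⟩ := h
  have e1 : D * (a / D) ≤ a := Int.mul_ediv_self_le hD.ne'
  have e2 : a + 1 ≤ D * (a / D + 1) := by
    have := Int.lt_mul_ediv_self_add (x := a) hD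
    linarith
  have e1' : (D:ℝ) * ((a / D : ℤ) : ℝ) ≤ a := by exact_mod_cast e1
  have e2' : (a:ℝ) + 1 ≤ D * (((a / D : ℤ) : ℝ) + 1) := by exact_mod_cast e2
  refine ⟨a / D, ?_, ?_, ?_, ?_⟩ <;> refine le_of_mul_le_mul_left ?_ hD' <;> linarith

lemma near_dist {k : ℤ} {s t : ℝ} (h : near k s t) : |s - t| ≤ (2:ℝ)^(-k) := by
  obtain ⟨a, h1, h2, h3, h4⟩ := h
  have : |(2:ℝ)^k * (s - t)| ≤ 1 := by rw [abs_le]; constructor <;> linarith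
  rw [abs_mul, abs_of_pos (p2 k)] at this
  rw [zpow_neg, ← one_div, le_div_iff₀ (p2 k)]; linarith

lemma icl_symm_floor {k : ℤ} {s t : ℝ} (h : icl k s t) (h' : icl k t s) :
    ⌊(2:ℝ)^k * s⌋ = ⌊(2:ℝ)^k * t⌋ ∧ ⌈(2:ℝ)^k * s⌉ = ⌈(2:ℝ)^k * t⌉ :=
  ⟨le_antisymm (Int.le_floor.2 h.1) (Int.le_floor.2 h'.1),
   le_antisymm (Int.ceil_le.2 h'.2) (Int.ceil_le.2 h.2)⟩

lemma icl_comb {k : ℤ} {v u a b : ℝ} (h : icl k v u) (ha : 0 < a) (hb : 0 ≤ b) (hab : a + b = 1) :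
    icl k v (a * v + b * u) ∧ icl k (a * v + b * u) v := by
  unfold icl at *
  have e : (2:ℝ)^k * (a * v + b * u) = a * ((2:ℝ)^k * v) + b * ((2:ℝ)^k * u) := by ring
  rw [e]
  set V := (2:ℝ)^k * v
  set U := (2:ℝ)^k * u
  have hb1 : b = 1 - a := by linarith
  have f1 := Int.floor_le V
  have f2 := Int.le_ceil V
  refine ⟨⟨?_, ?_⟩, ?_, ?_⟩
  · subst hb1; nlinarith [h.1, h.2]
  · subst hb1; nlinarith [h.1, h.2]
  · by_cases hc : V = ⌊V⌋
    · have h3 : (⌈V⌉:ℝ) = ⌊V⌋ := by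
        rw [hc]; simp
      have : U = V := by linarith [h.1, h.2]
      rw [this]
      have : a * V + b * V = V := by rw [← add_mul, hab, one_mul]
      rw [this]; exact f1
    · have h4 : (⌈V⌉:ℝ) ≤ ⌊V⌋ + 1 := by exact_mod_cast Int.ceil_le_floor_add_one _
      have h5 : a * V + b * U < ⌊V⌋ + 1 := by
        have := Int.lt_floor_add_one V
        subst hb1; nlinarith [h.1, h.2]
      have : ⌊a * V + b * U⌋ < ⌊V⌋ + 1 := Int.floor_lt.2 (by push_cast; exact h5)
      have : (⌊a * V + b * U⌋:ℝ) ≤ ⌊V⌋ := by exact_mod_cast Int.lt_add_one_iff.1 this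
      linarith
  · by_cases hc : V = ⌊V⌋
    · have h3 : (⌈V⌉:ℝ) = ⌊V⌋ := by
        rw [hc]; simp
      have : U = V := by linarith [h.1, h.2]
      rw [this]
      have : a * V + b * V = V := by rw [← add_mul, hab, one_mul]
      rw [this]; exact f2
    · have h4 : (⌈V⌉:ℝ) ≤ ⌊V⌋ + 1 := by exact_mod_cast Int.ceil_le_floor_add_one _
      have h5 : (⌈V⌉:ℝ) - 1 < a * V + b * U := by
        have h6 : (⌊V⌋:ℝ) < V := lt_of_le_of_ne f1 (Ne.symm hc)
        subst hb1; nlinarith [h.1, h.2]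
      have : ⌈V⌉ - 1 < ⌈a * V + b * U⌉ := Int.lt_ceil.2 (by push_cast; exact h5)
      have : (⌈V⌉:ℝ) ≤ ⌈a * V + b * U⌉ := by exact_mod_cast Int.sub_one_lt_iff.1 this
      linarith

/-- perturbation -/
lemma pert {n N : ℤ} (h : n ≤ N) {v t : ℝ} (ht : icl n v t)
    (hv : ⌊(2:ℝ)^n * v⌋ ≠ ⌈(2:ℝ)^n * v⌉) :
    ∃ t', icl n v t' ∧ ⌊(2:ℝ)^N * t'⌋ ≠ ⌈(2:ℝ)^N * t'⌉ ∧ icl N t' t := by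
  by_cases hc : ⌊(2:ℝ)^N * t⌋ ≠ ⌈(2:ℝ)^N * t⌉
  · exact ⟨t, ht, hc, icl_self _ _⟩
  push Not at hc
  obtain ⟨D, hD, e⟩ := pow_split h
  have hD' : (0:ℝ) < D := by exact_mod_cast hD
  set b := ⌊(2:ℝ)^N * t⌋ with hb
  have hbt : (2:ℝ)^N * t = b := by
    apply le_antisymm
    · have := Int.le_ceil ((2:ℝ)^N * t)
      rwa [← hc] at this
    · exact Int.floor_le _
  set A := ⌊(2:ℝ)^n * v⌋ with hA
  set B := ⌈(2:ℝ)^n * v⌉ with hB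
  have hAB : A < B := lt_of_le_of_ne (Int.floor_le_ceil _) hv
  have h1 : D * A ≤ b := by
    have := mul_le_mul_of_nonneg_left ht.1 hD'.le
    rw [← mul_assoc, ← e, hbt] at this
    exact_mod_cast this
  have h2 : b ≤ D * B := by
    have := mul_le_mul_of_nonneg_left ht.2 hD'.le
    rw [← mul_assoc, ← e, hbt] at this
    exact_mod_cast this
  have h3 : D * A < D * B := by nlinarith
  -- choose integer b' with unit interval [b', b'+1] inside and containing b
  obtain ⟨c, hc1, hc2, hc3, hc4⟩ : ∃ c : ℤ, D * A ≤ c ∧ c + 1 ≤ D * B ∧ c ≤ b ∧ b ≤ c + 1 := by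
    by_cases hlt : b < D * B
    · exact ⟨b, h1, by omega, le_rfl, by omega⟩
    · exact ⟨b - 1, by omega, by omega, by omega, by omega⟩
  have key : (2:ℝ)^N * (((c:ℝ) + 1/2) * (2:ℝ)^(-N)) = c + 1/2 := by
    rw [zpow_neg]; field_simp
  have key2 : (D:ℝ) * ((2:ℝ)^n * (((c:ℝ) + 1/2) * (2:ℝ)^(-N))) = c + 1/2 := by
    rw [← mul_assoc, ← e, key]
  have fl : ⌊(c:ℝ) + 1/2⌋ = c := by rw [Int.floor_eq_iff]; constructor <;> linarith
  have cl : ⌈(c:ℝ) + 1/2⌉ = c + 1 := by rw [Int.ceil_eq_iff]; push_cast; constructor <;> linarith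
  have c1 : (D:ℝ) * A ≤ c := by exact_mod_cast hc1
  have c2 : (c:ℝ) + 1 ≤ D * B := by exact_mod_cast hc2
  have c3 : (c:ℝ) ≤ b := by exact_mod_cast hc3
  have c4 : (b:ℝ) ≤ c + 1 := by exact_mod_cast hc4
  refine ⟨((c:ℝ) + 1/2) * (2:ℝ)^(-N), ⟨?_, ?_⟩, ?_, ?_, ?_⟩
  · refine le_of_mul_le_mul_left ?_ hD'
    rw [key2]; linarith
  · refine le_of_mul_le_mul_left ?_ hD'
    rw [key2]; linarith
  · rw [key, fl, cl]; omega
  · rw [key, fl, hbt]; exact c3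
  · rw [key, cl, hbt]; push_cast; exact c4

/-- integrality passes to finer scales -/
lemma fixed_mono {k l : ℤ} (hkl : k ≤ l) {s : ℝ} (h : ⌊(2:ℝ)^k * s⌋ = ⌈(2:ℝ)^k * s⌉) :
    ⌊(2:ℝ)^l * s⌋ = ⌈(2:ℝ)^l * s⌉ := by
  obtain ⟨D, hD, e⟩ := pow_split hkl
  have hs : (2:ℝ)^k * s = ⌊(2:ℝ)^k * s⌋ := by
    apply le_antisymm
    · have := Int.le_ceil ((2:ℝ)^k * s)
      rwa [← h] at this
    · exact Int.floor_le _
  have : (2:ℝ)^l * s = ((D * ⌊(2:ℝ)^k * s⌋ : ℤ) : ℝ) := by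
    rw [e, mul_assoc]; push_cast; rw [← hs]
  rw [this, Int.floor_intCast, Int.ceil_intCast]

lemma icl_fixed {k : ℤ} {s t : ℝ} (h : ⌊(2:ℝ)^k * s⌋ = ⌈(2:ℝ)^k * s⌉) (h' : icl k s t) : t = s := by
  have h1 := Int.floor_le ((2:ℝ)^k * s)
  have h2 := Int.le_ceil ((2:ℝ)^k * s)
  have h3 := h'.1
  have h4 := h'.2
  rw [← h] at h2 h4
  exact mul_left_cancel₀ (p2 k).ne' (by linarith)

lemma fixed_of_end {k : ℤ} {s : ℝ} {a : ℤ} (h : (2:ℝ)^k * s = a) :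
    ⌊(2:ℝ)^k * s⌋ = ⌈(2:ℝ)^k * s⌉ := by rw [h]; simp

lemma ceil_free {k : ℤ} {s : ℝ} (h : ⌊(2:ℝ)^k * s⌋ ≠ ⌈(2:ℝ)^k * s⌉) :
    ⌈(2:ℝ)^k * s⌉ = ⌊(2:ℝ)^k * s⌋ + 1 := by
  have := Int.floor_le_ceil ((2:ℝ)^k * s)
  have := Int.ceil_le_floor_add_one ((2:ℝ)^k * s)
  omega

lemma icl_ctr (k : ℤ) (t : ℝ) : icl k t (ctr k t) ∧ icl k (ctr k t) t := by
  have e : (2:ℝ)^k * ctr k t = ((⌊(2:ℝ)^k * t⌋ : ℝ) + (⌈(2:ℝ)^k * t⌉ : ℝ)) / 2 := by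
    unfold ctr; rw [zpow_neg]; field_simp
  by_cases h : ⌊(2:ℝ)^k * t⌋ = ⌈(2:ℝ)^k * t⌉
  · have : ctr k t = t := by
      apply mul_left_cancel₀ (p2 k).ne'
      have h1 := Int.floor_le ((2:ℝ)^k * t)
      have h2 := Int.le_ceil ((2:ℝ)^k * t)
      rw [e]; rw [← h] at h2 ⊢; linarith
    rw [this]; exact ⟨icl_self _ _, icl_self _ _⟩
  · have hc := ceil_free h
    have h1 := Int.floor_le ((2:ℝ)^k * t)
    have h2 := Int.le_ceil ((2:ℝ)^k * t)
    unfold icl; rw [e, hc]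
    rw [hc] at h2
    set c := ⌊(2:ℝ)^k * t⌋
    push_cast at *
    have e2 : ((c:ℝ) + (c + 1)) / 2 = c + 1/2 := by ring
    rw [e2]
    have fl : ⌊(c:ℝ) + 1/2⌋ = c := by rw [Int.floor_eq_iff]; constructor <;> linarith
    have cl : ⌈(c:ℝ) + 1/2⌉ = c + 1 := by rw [Int.ceil_eq_iff]; push_cast; constructor <;> linarith
    rw [fl, cl]; push_cast
    refine ⟨⟨?_, ?_⟩, ?_, ?_⟩ <;> linarith

lemma ctr_congr {k : ℤ} {s t : ℝ} (h : icl k s t) (h' : icl k t s) : ctr k s = ctr k t := by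
  obtain ⟨h1, h2⟩ := icl_symm_floor h h'
  unfold ctr; rw [h1, h2]


variable {m : ℕ}

def cl (k : ℤ) (x y : Euc m) : Prop := ∀ i, icl k (x i) (y i)

def PP (Z : Set (Euc m)) (k : ℤ) (x : Euc m) : Prop :=
  ∀ p : Euc m, (∀ i, near k (x i) (p i)) → Real.sqrt m * (2:ℝ)^(-k) ≤ infDist p Z

lemma cl_self (k : ℤ) (x : Euc m) : cl k x x := fun _ => icl_self _ _

lemma cl_trans {k : ℤ} {x y z : Euc m} (h : cl k x y) (h' : cl k y z) : cl k x z :=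
  fun i => icl_trans (h i) (h' i)

lemma cl_mono {k l : ℤ} (hkl : k ≤ l) {x y : Euc m} (h : cl l x y) : cl k x y :=
  fun i => icl_mono hkl (h i)

lemma PP_of_cl {Z : Set (Euc m)} {k : ℤ} {x y : Euc m} (h : cl k y x) (hx : PP Z k x) : PP Z k y :=
  fun p hp => hx p (fun i => near_of_icl_near (h i) (hp i))

lemma dist_le_of_coord {x y : Euc m} {c : ℝ} (hc : 0 ≤ c) (h : ∀ i, |x i - y i| ≤ c) :
    dist x y ≤ Real.sqrt m * c := by
  rw [EuclideanSpace.dist_eq]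
  have : ∑ i, dist (x i) (y i) ^ 2 ≤ m * c^2 := by
    calc ∑ i, dist (x i) (y i) ^ 2 ≤ ∑ i : Fin m, c^2 := by
          apply Finset.sum_le_sum
          intro i _
          rw [Real.dist_eq]
          exact pow_le_pow_left₀ (abs_nonneg _) (h i) 2
      _ = m * c^2 := by simp
  calc Real.sqrt (∑ i, dist (x i) (y i) ^ 2) ≤ Real.sqrt (m * c^2) := Real.sqrt_le_sqrt this
    _ = Real.sqrt m * c := by rw [Real.sqrt_mul (by positivity), Real.sqrt_sq hc]

lemma coord_le_dist (x y : Euc m) (i : Fin m) : |x i - y i| ≤ dist x y := by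
  have := PiLp.norm_apply_le (x - y) i
  rw [dist_eq_norm]; simpa using this

lemma near_self (k : ℤ) (s : ℝ) : near k s s := near_of_icl (icl_self _ _)

lemma PP_infDist {Z : Set (Euc m)} {k : ℤ} {x : Euc m} (h : PP Z k x) :
    Real.sqrt m * (2:ℝ)^(-k) ≤ infDist x Z := h x (fun _ => near_self _ _)

lemma PP_of_dist {Z : Set (Euc m)} {k : ℤ} {x : Euc m}
    (h : Real.sqrt m * (2:ℝ)^(-k) * 2 ≤ infDist x Z) : PP Z k x := by
  intro p hp
  have h1 : dist x p ≤ Real.sqrt m * (2:ℝ)^(-k) :=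
    dist_le_of_coord (p2 _).le (fun i => near_dist (hp i))
  have := infDist_le_infDist_add_dist (s := Z) (x := x) (y := p)
  linarith

lemma exists_least (hm : 2 ≤ m) {Z : Set (Euc m)} (hZ : IsClosed Z) (hne : Z.Nonempty)
    {x : Euc m} (hx : x ∉ Z) : ∃ n, IsLeast {k | PP Z k x} n := by
  have hd : 0 < infDist x Z := (hZ.notMem_iff_infDist_pos hne).1 hx
  have hs : 0 < Real.sqrt m := Real.sqrt_pos.2 (by exact_mod_cast (by omega : 0 < m))
  obtain ⟨b, hb⟩ : ∃ b : ℤ, ∀ k, PP Z k x → b ≤ k := by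
    obtain ⟨N, hN⟩ := pow_unbounded_of_one_lt (infDist x Z / Real.sqrt m) (one_lt_two)
    refine ⟨-N, fun k hk => ?_⟩
    by_contra hlt
    have h1 := PP_infDist hk
    rw [div_lt_iff₀ hs] at hN
    have : (2:ℝ)^(N:ℤ) ≤ (2:ℝ)^(-k) := zpow_le_zpow_right₀ (by norm_num) (by omega)
    rw [zpow_natCast] at this
    nlinarith
  have hex : ∃ k, PP Z k x := by
    obtain ⟨N, hN⟩ := pow_unbounded_of_one_lt (Real.sqrt m * 2 / infDist x Z) (one_lt_two)
    refine ⟨N, PP_of_dist ?_⟩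
    rw [div_lt_iff₀ hd] at hN
    rw [zpow_neg, zpow_natCast]
    have : (0:ℝ) < 2^N := by positivity
    have e : Real.sqrt m * ((2:ℝ)^N)⁻¹ * 2 = Real.sqrt m * 2 / 2^N := by field_simp
    rw [e, div_le_iff₀ this]; linarith
  obtain ⟨n, h1, h2⟩ := Int.exists_least_of_bdd ⟨b, hb⟩ hex
  exact ⟨n, h1, h2⟩

open Classical in
def nn (Z : Set (Euc m)) (x : Euc m) : ℤ :=
  if h : ∃ n, IsLeast {k | PP Z k x} n then h.choose else 0

/-- Standing data -/
structure Dat (Z : Set (Euc m)) : Prop where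
  hm : 2 ≤ m
  hZ : IsClosed Z
  hne : Z.Nonempty

variable {Z : Set (Euc m)}

lemma nn_spec (D : Dat Z) {x : Euc m} (hx : x ∉ Z) : IsLeast {k | PP Z k x} (nn Z x) := by
  have h := exists_least D.hm D.hZ D.hne hx
  unfold nn; rw [dif_pos h]; exact h.choose_spec

lemma PP_notMem (D : Dat Z) {k : ℤ} {x : Euc m} (h : PP Z k x) : x ∉ Z := by
  rw [D.hZ.notMem_iff_infDist_pos D.hne]
  have hs : 0 < Real.sqrt m := Real.sqrt_pos.2 (by exact_mod_cast (by have := D.hm; omega : 0 < m))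
  exact lt_of_lt_of_le (mul_pos hs (p2 _)) (PP_infDist h)

lemma nn_le (D : Dat Z) {k : ℤ} {x : Euc m} (h : PP Z k x) : nn Z x ≤ k :=
  (nn_spec D (PP_notMem D h)).2 h

lemma nn_PP (D : Dat Z) {x : Euc m} (hx : x ∉ Z) : PP Z (nn Z x) x := (nn_spec D hx).1

/-- closed cell of `v` contains `u` -/
def sub (Z : Set (Euc m)) (u v : Euc m) : Prop := cl (nn Z v) v u

lemma sub_infDist (D : Dat Z) {u v : Euc m} (hv : v ∉ Z) (h : sub Z u v) :
    Real.sqrt m * (2:ℝ)^(-(nn Z v)) ≤ infDist u Z :=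
  nn_PP D hv u (fun i => near_of_icl (h i))

lemma sub_notMem (D : Dat Z) {u v : Euc m} (hv : v ∉ Z) (h : sub Z u v) : u ∉ Z := by
  rw [D.hZ.notMem_iff_infDist_pos D.hne]
  have hs : 0 < Real.sqrt m := Real.sqrt_pos.2 (by exact_mod_cast (by have := D.hm; omega : 0 < m))
  exact lt_of_lt_of_le (mul_pos hs (p2 _)) (sub_infDist D hv h)

lemma sub_nn (D : Dat Z) {u v : Euc m} (hv : v ∉ Z) (h : sub Z u v) : nn Z v ≤ nn Z u := by
  by_contra hlt
  push Not at hlt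
  have := PP_of_cl (cl_mono hlt.le h) (nn_PP D (sub_notMem D hv h))
  exact absurd (nn_le D this) (not_le.2 hlt)

lemma sub_nn_le (D : Dat Z) {u v : Euc m} (hv : v ∉ Z) (h : sub Z u v) : nn Z u ≤ nn Z v + 1 := by
  apply nn_le D
  apply PP_of_dist
  refine le_trans (le_of_eq ?_) (sub_infDist D hv h)
  rw [neg_add, zpow_add₀ (by norm_num)]; norm_num; ring

lemma sub_trans (D : Dat Z) {u v w : Euc m} (hw : w ∉ Z) (h : sub Z v w) (h' : sub Z u v) :
    sub Z u w := cl_trans h (cl_mono (sub_nn D hw h) h')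

lemma nn_eq (D : Dat Z) {v x : Euc m} (hv : v ∉ Z) (h : cl (nn Z v) v x) (h' : cl (nn Z v) x v) :
    nn Z x = nn Z v :=
  le_antisymm (nn_le D (PP_of_cl h' (nn_PP D hv))) (sub_nn D hv h)

structure isV (Z : Set (Euc m)) (v : Euc m) : Prop where
  nm : v ∉ Z
  c : ∀ i, v i = ctr (nn Z v) (v i)

/-- equal open cells -/
lemma V_unique (D : Dat Z) {v w x : Euc m} (hv : isV Z v) (hw : isV Z w)
    (h : cl (nn Z v) v x) (h' : cl (nn Z v) x v) (g : cl (nn Z w) w x) (g' : cl (nn Z w) x w) :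
    v = w := by
  have e1 := nn_eq D hv.nm h h'
  have e2 := nn_eq D hw.nm g g'
  ext i
  rw [hv.c i, hw.c i, ← e1, ← e2]
  rw [← e1] at h h'
  rw [← e2] at g g'
  rw [ctr_congr (h i) (h' i), ctr_congr (g i) (g' i)]

open Classical in
def Free (Z : Set (Euc m)) (v : Euc m) : Finset (Fin m) :=
  Finset.univ.filter (fun i => ⌊(2:ℝ)^(nn Z v) * v i⌋ ≠ ⌈(2:ℝ)^(nn Z v) * v i⌉)

lemma mem_Free {v : Euc m} {i : Fin m} :
    i ∈ Free Z v ↔ ⌊(2:ℝ)^(nn Z v) * v i⌋ ≠ ⌈(2:ℝ)^(nn Z v) * v i⌉ := by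
  simp [Free]

/-- `p` is on the wall in direction `i` of cell of `v` -/
def wall (Z : Set (Euc m)) (v p : Euc m) (i : Fin m) : Prop :=
  i ∈ Free Z v ∧ ((2:ℝ)^(nn Z v) * p i = ⌊(2:ℝ)^(nn Z v) * v i⌋ ∨
    (2:ℝ)^(nn Z v) * p i = ⌈(2:ℝ)^(nn Z v) * v i⌉)

lemma exists_wall (D : Dat Z) {u v : Euc m} (hu : isV Z u) (hv : isV Z v) (h : sub Z u v)
    (hne : u ≠ v) : ∃ i, wall Z v u i := by
  by_contra hcon
  push Not at hcon
  apply hne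
  refine V_unique D hu hv (cl_self _ _) (cl_self _ _) h ?_
  intro i
  by_cases hi : i ∈ Free Z v
  · have h1 := hcon i
    simp only [wall, hi, true_and, not_or] at h1
    have h2 := h i
    have h3 := ceil_free (mem_Free.1 hi)
    have f1 := Int.floor_le ((2:ℝ)^(nn Z v) * v i)
    have f2 := Int.le_ceil ((2:ℝ)^(nn Z v) * v i)
    have l1 := lt_of_le_of_ne h2.1 (Ne.symm h1.1)
    have l2 := lt_of_le_of_ne h2.2 h1.2
    rw [h3] at l2 f2
    constructor
    · refine le_trans ?_ f1
      have : ⌊(2:ℝ)^(nn Z v) * u i⌋ < ⌊(2:ℝ)^(nn Z v) * v i⌋ + 1 := Int.floor_lt.2 l2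
      exact_mod_cast Int.lt_add_one_iff.1 this
    · refine le_trans f2 ?_
      have : ⌊(2:ℝ)^(nn Z v) * v i⌋ < ⌈(2:ℝ)^(nn Z v) * u i⌉ := Int.lt_ceil.2 l1
      exact_mod_cast Int.add_one_le_iff.2 this
  · have h1 : ⌊(2:ℝ)^(nn Z v) * v i⌋ = ⌈(2:ℝ)^(nn Z v) * v i⌉ := by
      by_contra h1; exact hi (mem_Free.2 h1)
    rw [icl_fixed h1 (h i)]; exact icl_self _ _

lemma fixed_of_wall {v p : Euc m} {i : Fin m} (h : wall Z v p i) :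
    ⌊(2:ℝ)^(nn Z v) * p i⌋ = ⌈(2:ℝ)^(nn Z v) * p i⌉ := by
  rcases h.2 with h | h <;> exact fixed_of_end h

lemma Free_mono (D : Dat Z) {u v : Euc m} (hv : v ∉ Z) (h : sub Z u v) : Free Z u ⊆ Free Z v := by
  intro i hi
  rw [mem_Free] at *
  intro hc
  apply hi
  have := icl_fixed hc (h i)
  rw [this]
  exact fixed_mono (sub_nn D hv h) hc

lemma wall_not_Free (D : Dat Z) {u v : Euc m} (hv : v ∉ Z) (h : sub Z u v) {i : Fin m}
    (hw : wall Z v u i) : i ∉ Free Z u := by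
  rw [mem_Free, not_not]
  exact fixed_mono (sub_nn D hv h) (fixed_of_wall hw)

lemma Free_ssub (D : Dat Z) {u v : Euc m} (hu : isV Z u) (hv : isV Z v) (h : sub Z u v)
    (hne : u ≠ v) : Free Z u ⊂ Free Z v := by
  obtain ⟨i, hi⟩ := exists_wall D hu hv h hne
  refine (Finset.ssubset_iff_of_subset (Free_mono D hv.nm h)).2 ⟨i, hi.1, wall_not_Free D hv.nm h hi⟩

lemma dim_lt (D : Dat Z) {u v : Euc m} (hu : isV Z u) (hv : isV Z v) (h : sub Z u v)
    (hne : u ≠ v) : (Free Z u).card < (Free Z v).card := Finset.card_lt_card (Free_ssub D hu hv h hne)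

/-- distance description -/
lemma half_dist {v p : Euc m} (hv : isV Z v) (h : sub Z p v) (i : Fin m) :
    |p i - v i| ≤ (2:ℝ)^(-(nn Z v)) / 2 := by
  have h1 := h i
  have hc := hv.c i
  set n := nn Z v
  have h2 : (⌈(2:ℝ)^n * v i⌉:ℝ) ≤ ⌊(2:ℝ)^n * v i⌋ + 1 := by
    exact_mod_cast Int.ceil_le_floor_add_one _
  have h3 : (2:ℝ)^n * v i = ((⌊(2:ℝ)^n * v i⌋ : ℝ) + (⌈(2:ℝ)^n * v i⌉ : ℝ)) / 2 := by
    conv_lhs => rw [hc]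
    unfold ctr; rw [zpow_neg]; field_simp
  have : |(2:ℝ)^n * (p i - v i)| ≤ 1/2 := by
    rw [abs_le, mul_sub]; constructor <;> linarith [h1.1, h1.2]
  rw [abs_mul, abs_of_pos (p2 n)] at this
  rw [zpow_neg, ← one_div, div_div, le_div_iff₀ (by have := p2 n; positivity)]; linarith

lemma wall_dist {v p : Euc m} (hv : isV Z v) {i : Fin m} (h : wall Z v p i) :
    |p i - v i| = (2:ℝ)^(-(nn Z v)) / 2 := by
  have hc := hv.c i
  have hcf := ceil_free (mem_Free.1 h.1)
  have hw := h.2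
  set n := nn Z v
  have h3 : (2:ℝ)^n * v i = ((⌊(2:ℝ)^n * v i⌋ : ℝ) + (⌈(2:ℝ)^n * v i⌉ : ℝ)) / 2 := by
    conv_lhs => rw [hc]
    unfold ctr; rw [zpow_neg]; field_simp
  rw [hcf] at hw h3
  push_cast at hw h3
  have : |(2:ℝ)^n * (p i - v i)| = 1/2 := by
    rw [mul_sub]
    rcases hw with hw | hw
    · have : (2:ℝ)^n * p i - (2:ℝ)^n * v i = -(1/2) := by linarith
      rw [this, abs_neg, abs_of_pos (by norm_num)]
    · have : (2:ℝ)^n * p i - (2:ℝ)^n * v i = (1/2) := by linarith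
      rw [this, abs_of_pos (by norm_num)]
  rw [abs_mul, abs_of_pos (p2 n)] at this
  rw [zpow_neg, ← one_div, div_div, eq_div_iff (by have := p2 n; positivity)]; linarith

/-- converse -/
lemma wall_of_dist {v p : Euc m} (hv : isV Z v) {i : Fin m} (hi : i ∈ Free Z v)
    (h : |p i - v i| = (2:ℝ)^(-(nn Z v)) / 2) : wall Z v p i := by
  refine ⟨hi, ?_⟩
  have hc := hv.c i
  have hcf := ceil_free (mem_Free.1 hi)
  set n := nn Z v
  have h3 : (2:ℝ)^n * v i = ((⌊(2:ℝ)^n * v i⌋ : ℝ) + (⌈(2:ℝ)^n * v i⌉ : ℝ)) / 2 := by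
    conv_lhs => rw [hc]
    unfold ctr; rw [zpow_neg]; field_simp
  rw [hcf] at h3 ⊢
  push_cast at h3 ⊢
  have e : (2:ℝ)^n * (2:ℝ)^(-n) = 1 := by rw [zpow_neg]; field_simp
  rcases (abs_eq (by have := p2 (-n); positivity)).1 h with h | h
  · right
    have : p i = v i + (2:ℝ)^(-n) / 2 := by linarith
    rw [this, mul_add, mul_div_assoc', e]; linarith
  · left
    have : p i = v i - (2:ℝ)^(-n) / 2 := by linarith
    rw [this, mul_sub, mul_div_assoc', e]; linarith

lemma sub_of_dist {v p : Euc m} (hv : isV Z v) 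
    (h1 : ∀ i ∈ Free Z v, |p i - v i| ≤ (2:ℝ)^(-(nn Z v)) / 2)
    (h2 : ∀ i, i ∉ Free Z v → p i = v i) : sub Z p v := by
  intro i
  by_cases hi : i ∈ Free Z v
  · have h := h1 i hi
    have hc := hv.c i
    have hcf := ceil_free (mem_Free.1 hi)
    set n := nn Z v
    have h3 : (2:ℝ)^n * v i = ((⌊(2:ℝ)^n * v i⌋ : ℝ) + (⌈(2:ℝ)^n * v i⌉ : ℝ)) / 2 := by
      conv_lhs => rw [hc]
      unfold ctr; rw [zpow_neg]; field_simp
    unfold icl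
    rw [hcf] at h3 ⊢
    push_cast at h3 ⊢
    have e : (2:ℝ)^n * (2:ℝ)^(-n) = 1 := by rw [zpow_neg]; field_simp
    rw [abs_le] at h
    have g1 := mul_le_mul_of_nonneg_left h.1 (p2 n).le
    have g2 := mul_le_mul_of_nonneg_left h.2 (p2 n).le
    rw [mul_neg, mul_div_assoc', e, mul_sub] at g1
    rw [mul_div_assoc', e, mul_sub] at g2
    constructor <;> linarith
  · rw [h2 i hi]; exact icl_self _ _

lemma not_Free_eq {v p : Euc m} (h : sub Z p v) {i : Fin m} (hi : i ∉ Free Z v) : p i = v i := by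
  rw [mem_Free, not_not] at hi
  exact icl_fixed hi (h i)

lemma convex_sub (v : Euc m) : Convex ℝ {p | sub Z p v} := by
  intro x hx y hy a b ha hb hab i
  have h1 := hx i
  have h2 := hy i
  have e : (a • x + b • y) i = a * x i + b * y i := by simp
  rw [e]
  unfold icl at *
  have hb1 : b = 1 - a := by linarith
  subst hb1
  constructor <;> nlinarith [h1.1, h1.2, h2.1, h2.2]

/-- A cell of `v` center -/
lemma exists_center (D : Dat Z) {y : Euc m} (hy : y ∉ Z) :
    ∃ v, isV Z v ∧ nn Z v = nn Z y ∧ cl (nn Z y) y v ∧ cl (nn Z y) v y := by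
  let v : Euc m := WithLp.toLp 2 (fun i => ctr (nn Z y) (y i))
  have h1 : cl (nn Z y) y v := fun i => (icl_ctr _ _).1
  have h2 : cl (nn Z y) v y := fun i => (icl_ctr _ _).2
  have e := nn_eq D hy h1 h2
  refine ⟨v, ⟨sub_notMem D hy h1, fun i => ?_⟩, e, h1, h2⟩
  rw [e, ← ctr_congr (h1 i) (h2 i)]


lemma pert0 (N : ℤ) (t : ℝ) :
    ∃ t', ⌊(2:ℝ)^N * t'⌋ ≠ ⌈(2:ℝ)^N * t'⌉ ∧ icl N t' t := by
  set c := ⌊(2:ℝ)^N * t⌋ with hc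
  have key : (2:ℝ)^N * (((c:ℝ) + 1/2) * (2:ℝ)^(-N)) = c + 1/2 := by
    rw [zpow_neg]; field_simp
  have fl : ⌊(c:ℝ) + 1/2⌋ = c := by rw [Int.floor_eq_iff]; constructor <;> linarith
  have cl : ⌈(c:ℝ) + 1/2⌉ = c + 1 := by rw [Int.ceil_eq_iff]; push_cast; constructor <;> linarith
  refine ⟨((c:ℝ) + 1/2) * (2:ℝ)^(-N), ?_, ?_, ?_⟩
  · rw [key, fl, cl]; omega
  · rw [key, fl]; exact Int.floor_le _
  · rw [key, cl]; push_cast; exact (Int.lt_floor_add_one _).le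

lemma Free_congr {u y : Euc m} (e : nn Z u = nn Z y) (h : cl (nn Z y) y u) (h' : cl (nn Z y) u y) :
    Free Z u = Free Z y := by
  ext i
  rw [mem_Free, mem_Free, e]
  obtain ⟨h1, h2⟩ := icl_symm_floor (h i) (h' i)
  rw [h1, h2]

lemma exists_top (D : Dat Z) {x : Euc m} (hx : x ∉ Z) :
    ∃ v, isV Z v ∧ (Free Z v).card = m ∧ sub Z x v := by
  choose f hf1 hf2 using fun i => pert0 (nn Z x) (x i)
  let y : Euc m := WithLp.toLp 2 f
  have hyx : cl (nn Z x) y x := fun i => hf2 i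
  have hP := PP_of_cl hyx (nn_PP D hx)
  have hle := nn_le D hP
  obtain ⟨v, hv, e, h1, h2⟩ := exists_center D (PP_notMem D hP)
  refine ⟨v, hv, ?_, ?_⟩
  · rw [Free_congr e h1 h2]
    have : Free Z y = Finset.univ := by
      ext i
      simp only [Finset.mem_univ, iff_true, mem_Free]
      exact fun h => hf1 i (fixed_mono hle h)
    rw [this]; simp
  · unfold sub; rw [e]
    exact cl_trans h2 (cl_mono hle hyx)

lemma exists_facet (D : Dat Z) {v p : Euc m} (hv : isV Z v) (hp : sub Z p v) {i₀ : Fin m}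
    (hw : wall Z v p i₀) :
    ∃ u, isV Z u ∧ sub Z u v ∧ (Free Z u).card + 1 = (Free Z v).card ∧ sub Z p u := by
  classical
  have hpZ := sub_notMem D hv.nm hp
  have hnN := sub_nn D hv.nm hp
  have hex : ∀ i, ∃ t', icl (nn Z v) (v i) t' ∧ icl (nn Z p) t' (p i) ∧
      ((i ∈ Free Z v ∧ i ≠ i₀) → ⌊(2:ℝ)^(nn Z p) * t'⌋ ≠ ⌈(2:ℝ)^(nn Z p) * t'⌉) ∧
      (i = i₀ → t' = p i) := by
    intro i
    by_cases hi : i ∈ Free Z v ∧ i ≠ i₀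
    · obtain ⟨t', h1, h2, h3⟩ := pert hnN (hp i) (mem_Free.1 hi.1)
      exact ⟨t', h1, h3, fun _ => h2, fun h => absurd h hi.2⟩
    · exact ⟨p i, hp i, icl_self _ _, fun h => absurd h hi, fun _ => rfl⟩
  choose f hf1 hf2 hf3 hf4 using hex
  let y : Euc m := WithLp.toLp 2 f
  have hyp : cl (nn Z p) y p := fun i => hf2 i
  have hvy : sub Z y v := fun i => hf1 i
  have hP := PP_of_cl hyp (nn_PP D hpZ)
  have hle := nn_le D hP
  have hny := sub_nn D hv.nm hvy
  obtain ⟨u, hu, e, h1, h2⟩ := exists_center D (PP_notMem D hP)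
  refine ⟨u, hu, ?_, ?_, ?_⟩
  · exact cl_trans hvy (cl_mono hny h1)
  · rw [Free_congr e h1 h2]
    have : Free Z y = (Free Z v).erase i₀ := by
      ext i
      rw [Finset.mem_erase]
      constructor
      · intro h
        refine ⟨?_, Free_mono D hv.nm hvy h⟩
        rintro rfl
        refine wall_not_Free D hv.nm hvy ⟨hw.1, ?_⟩ h
        have : y i = p i := hf4 i rfl
        rw [this]; exact hw.2
      · rintro ⟨h1, h2⟩
        rw [mem_Free]
        exact fun h => hf3 i ⟨h2, h1⟩ (fixed_mono hle h)
    rw [this, Finset.card_erase_add_one hw.1]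
  · unfold sub; rw [e]
    exact cl_trans h2 (cl_mono hle hyp)

/-- project to the boundary -/
lemma exists_proj {v x : Euc m} (hv : isV Z v) (hx : sub Z x v) (hF : (Free Z v).Nonempty) :
    ∃ p i, sub Z p v ∧ wall Z v p i ∧ x ∈ segment ℝ v p := by
  classical
  set h := (2:ℝ)^(-(nn Z v)) / 2 with hh
  have hpos : 0 < h := by have := p2 (-(nn Z v)); positivity
  obtain ⟨i, hi, hmax⟩ := Finset.exists_max_image (Free Z v) (fun i => |x i - v i|) hF
  by_cases h0 : |x i - v i| = 0
  · have hxv : x = v := by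
      ext j
      by_cases hj : j ∈ Free Z v
      · have := hmax j hj
        rw [h0] at this
        have := abs_nonpos_iff.1 this
        linarith
      · exact not_Free_eq hx hj
    let p : Euc m := WithLp.toLp 2 (fun j => if j = i then v j + h else v j)
    have hpi : p i = v i + h := by simp [p]
    have hpj : ∀ j, j ≠ i → p j = v j := fun j hj => by simp [p, hj]
    refine ⟨p, i, sub_of_dist hv ?_ ?_, wall_of_dist hv hi ?_, ?_⟩
    · intro j _
      by_cases hj : j = i
      · subst hj; rw [hpi, add_sub_cancel_left, abs_of_pos hpos]
      · rw [hpj j hj, sub_self, abs_zero]; exact hpos.le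
    · intro j hj
      exact hpj j (by rintro rfl; exact hj hi)
    · rw [hpi, add_sub_cancel_left, abs_of_pos hpos]
    · rw [hxv]; exact left_mem_segment _ _ _
  · have hM : 0 < |x i - v i| := lt_of_le_of_ne (abs_nonneg _) (Ne.symm h0)
    have hMh : |x i - v i| ≤ h := half_dist hv hx i
    set M := |x i - v i| with hMdef
    let p : Euc m := v + (h / M) • (x - v)
    have hp : ∀ j, p j - v j = (h / M) * (x j - v j) := fun j => by simp [p]
    have hpa : ∀ j, |p j - v j| = (h / M) * |x j - v j| := fun j => by
      rw [hp, abs_mul, abs_of_pos (by positivity)]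
    refine ⟨p, i, sub_of_dist hv ?_ ?_, wall_of_dist hv hi ?_, ?_⟩
    · intro j hj
      rw [hpa]
      calc h / M * |x j - v j| ≤ h / M * M := mul_le_mul_of_nonneg_left (hmax j hj) (by positivity)
        _ = h := by field_simp
    · intro j hj
      have := hp j
      rw [not_Free_eq hx hj] at this
      linarith
    · rw [hpa, ← hMdef, ← hh]; field_simp
    · rw [segment_eq_image']
      refine ⟨M / h, ⟨by positivity, by rw [div_le_one hpos]; exact hMh⟩, ?_⟩
      simp only [p, add_sub_cancel_left, smul_smul]
      have : M / h * (h / M) = 1 := by field_simp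
      rw [this]; simp

structure Chain (Z : Set (Euc m)) (s : Finset (Euc m)) : Prop where
  V : ∀ v ∈ s, isV Z v
  tot : ∀ u ∈ s, ∀ v ∈ s, sub Z u v ∨ sub Z v u

lemma Chain.mono {s t : Finset (Euc m)} (h : Chain Z s) (hts : t ⊆ s) : Chain Z t :=
  ⟨fun v hv => h.V v (hts hv), fun u hu v hv => h.tot u (hts hu) v (hts hv)⟩

lemma exists_chain (D : Dat Z) (k : ℕ) : ∀ v x : Euc m, isV Z v → sub Z x v →
    (Free Z v).card = k → ∃ s : Finset (Euc m), Chain Z s ∧ s.card = k + 1 ∧ (∀ u ∈ s, sub Z u v) ∧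
      x ∈ convexHull ℝ (s : Set (Euc m)) := by
  classical
  induction k with
  | zero =>
    intro v x hv hx hk
    have hF : Free Z v = ∅ := Finset.card_eq_zero.1 hk
    have hxv : x = v := by
      ext j
      exact not_Free_eq hx (by simp [hF])
    refine ⟨{v}, ⟨?_, ?_⟩, by simp, ?_, by simp [hxv]⟩
    · simpa using hv
    · intro u hu w hw
      simp only [Finset.mem_singleton] at hu hw
      subst hu; subst hw; left; exact cl_self _ _
    · intro u hu
      simp only [Finset.mem_singleton] at hu
      subst hu; exact cl_self _ _
  | succ k ih =>
    intro v x hv hx hk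
    obtain ⟨p, i, hp, hw, hseg⟩ := exists_proj hv hx (Finset.card_pos.1 (by omega))
    obtain ⟨u, hu, huv, hcard, hpu⟩ := exists_facet D hv hp hw
    obtain ⟨s, hs, hsc, hsu, hps⟩ := ih u p hu hpu (by omega)
    have hsv : ∀ w ∈ s, sub Z w v := fun w hw => sub_trans D hv.nm huv (hsu w hw)
    have hvs : v ∉ s := by
      intro h
      have := Finset.card_le_card (Free_mono D hu.nm (hsu v h))
      omega
    refine ⟨insert v s, ⟨?_, ?_⟩, by rw [Finset.card_insert_of_notMem hvs, hsc], ?_, ?_⟩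
    · intro w hw
      rcases Finset.mem_insert.1 hw with rfl | hw
      · exact hv
      · exact hs.V w hw
    · intro w hw z hz
      rcases Finset.mem_insert.1 hw with rfl | hw
      · right
        rcases Finset.mem_insert.1 hz with rfl | hz
        · exact cl_self _ _
        · exact hsv z hz
      · rcases Finset.mem_insert.1 hz with e | hz
        · left; rw [e]; exact hsv w hw
        · exact hs.tot w hw z hz
    · intro w hw
      rcases Finset.mem_insert.1 hw with rfl | hw
      · exact cl_self _ _
      · exact hsv w hw
    · have h1 : v ∈ convexHull ℝ ((insert v s : Finset (Euc m)) : Set (Euc m)) :=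
        subset_convexHull _ _ (by simp)
      have h2 : p ∈ convexHull ℝ ((insert v s : Finset (Euc m)) : Set (Euc m)) :=
        convexHull_mono (by simp) hps
      exact (convex_convexHull ℝ _).segment_subset h1 h2 hseg

lemma Chain.top (D : Dat Z) {s : Finset (Euc m)} (h : Chain Z s) (hne : s.Nonempty) :
    ∃ v ∈ s, ∀ u ∈ s, sub Z u v := by
  obtain ⟨v, hv, hmax⟩ := Finset.exists_max_image s (fun v => (Free Z v).card) hne
  refine ⟨v, hv, fun u hu => ?_⟩
  rcases h.tot u hu v hv with h1 | h1
  · exact h1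
  · by_cases e : v = u
    · subst e; exact h1
    · exact absurd (dim_lt D (h.V v hv) (h.V u hu) h1 e) (not_lt.2 (hmax u hu))

lemma Chain.conv_sub {s : Finset (Euc m)} {v x : Euc m}
    (hv : ∀ u ∈ s, sub Z u v) (hx : x ∈ convexHull ℝ (s : Set (Euc m))) : sub Z x v :=
  convexHull_min (fun u hu => hv u hu) (convex_sub v) hx

lemma Chain.bdry (D : Dat Z) {s : Finset (Euc m)} (h : Chain Z s) {v p : Euc m} (hv : v ∈ s)
    (htop : ∀ u ∈ s, sub Z u v) [DecidableEq (Euc m)]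
    (hp : p ∈ convexHull ℝ ((s.erase v : Finset (Euc m)) : Set (Euc m))) :
    ∃ i, wall Z v p i := by
  have hne : (s.erase v).Nonempty := by
    rw [← Finset.coe_nonempty]
    exact convexHull_nonempty_iff.1 ⟨p, hp⟩
  obtain ⟨v', hv', ht'⟩ := (h.mono (Finset.erase_subset v s)).top D hne
  have hv's := Finset.mem_of_mem_erase hv'
  obtain ⟨i, hi⟩ := exists_wall D (h.V v' hv's) (h.V v hv) (htop v' hv's) (Finset.ne_of_mem_erase hv')
  refine ⟨i, hi.1, ?_⟩
  have : p i = v' i := not_Free_eq (Chain.conv_sub ht' hp) (wall_not_Free D (h.V v hv).nm (htop v' hv's) hi)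
  rw [this]; exact hi.2

lemma conv_cases [DecidableEq (Euc m)] {s : Finset (Euc m)} {v x : Euc m} (hv : v ∈ s)
    (hx : x ∈ convexHull ℝ (s : Set (Euc m))) :
    x = v ∨ x ∈ convexHull ℝ ((s.erase v : Finset (Euc m)) : Set (Euc m)) ∨
    ∃ a b : ℝ, 0 < a ∧ 0 < b ∧ a + b = 1 ∧
      ∃ p ∈ convexHull ℝ ((s.erase v : Finset (Euc m)) : Set (Euc m)), x = a • v + b • p := by
  by_cases hne : (s.erase v).Nonempty
  · rw [← Finset.insert_erase hv, Finset.coe_insert, convexHull_insert (by exact_mod_cast hne)] at hx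
    rw [mem_convexJoin] at hx
    obtain ⟨w, hw, p, hp, a, b, ha, hb, hab, rfl⟩ := hx
    rw [Set.mem_singleton_iff] at hw
    subst hw
    rcases ha.eq_or_lt with rfl | ha
    · right; left
      have : b = 1 := by linarith
      subst this; simpa using hp
    · rcases hb.eq_or_lt with rfl | hb
      · left
        have : a = 1 := by linarith
        subst this; simp
      · right; right
        exact ⟨a, b, ha, hb, hab, p, hp, rfl⟩
  · left
    have : s.erase v = ∅ := Finset.not_nonempty_iff_eq_empty.1 hne
    have hs : s = {v} := by rw [← Finset.insert_erase hv, this]; rfl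
    rw [hs] at hx; simpa using hx

/-- comparing two radial representations -/
lemma radial_le {v p q : Euc m} (hv : isV Z v) {i : Fin m} (hp : wall Z v p i) (hq : sub Z q v)
    {a b a' b' : ℝ} (hb : 0 < b) (hab : a + b = 1) (hb' : 0 < b') (hab' : a' + b' = 1)
    (e : a • v + b • p = a' • v + b' • q) : b ≤ b' := by
  have e1 : a * v i + b * p i = a' * v i + b' * q i := by
    have := congrArg (fun z : Euc m => z i) e
    simpa using this
  have ha : a = 1 - b := by linarith
  have ha' : a' = 1 - b' := by linarith
  subst ha; subst ha'
  have e2 : b * (p i - v i) = b' * (q i - v i) := by linarith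
  have e3 : b * |p i - v i| = b' * |q i - v i| := by
    have := congrArg abs e2
    rwa [abs_mul, abs_mul, abs_of_pos hb, abs_of_pos hb'] at this
  have h1 := wall_dist hv hp
  have h2 := half_dist hv hq i
  rw [h1] at e3
  have : 0 < (2:ℝ)^(-(nn Z v)) / 2 := by have := p2 (-(nn Z v)); positivity
  have h3 : b * ((2:ℝ)^(-(nn Z v)) / 2) ≤ b' * ((2:ℝ)^(-(nn Z v)) / 2) := by
    rw [e3]; exact mul_le_mul_of_nonneg_left h2 hb'.le
  exact le_of_mul_le_mul_right h3 this

lemma cl_comb {k : ℤ} {v p : Euc m} (h : cl k v p) {a b : ℝ} (ha : 0 < a) (hb : 0 ≤ b)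
    (hab : a + b = 1) : cl k v (a • v + b • p) ∧ cl k (a • v + b • p) v := by
  constructor
  · intro i
    have := (icl_comb (h i) ha hb hab).1
    simpa using this
  · intro i
    have := (icl_comb (h i) ha hb hab).2
    simpa using this

lemma inter_aux (D : Dat Z) [DecidableEq (Euc m)] (N : ℕ) : ∀ s t : Finset (Euc m), Chain Z s → Chain Z t →
    s.card + t.card ≤ N → ∀ x, x ∈ convexHull ℝ (s : Set (Euc m)) →
    x ∈ convexHull ℝ (t : Set (Euc m)) → x ∈ convexHull ℝ ((s ∩ t : Finset (Euc m)) : Set (Euc m)) := by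
  induction N with
  | zero =>
    intro s t hs ht hN x hx
    have : s = ∅ := Finset.card_eq_zero.1 (by omega)
    subst this; simp at hx
  | succ N ih =>
    intro s t hs ht hN x hxs hxt
    have hsne : s.Nonempty := by
      rw [← Finset.coe_nonempty]; exact convexHull_nonempty_iff.1 ⟨x, hxs⟩
    have htne : t.Nonempty := by
      rw [← Finset.coe_nonempty]; exact convexHull_nonempty_iff.1 ⟨x, hxt⟩
    obtain ⟨v, hv, hvt⟩ := hs.top D hsne
    obtain ⟨w, hw, hwt⟩ := ht.top D htne
    have hcv := Finset.card_erase_add_one hv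
    have hcw := Finset.card_erase_add_one hw
    have hs' := hs.mono (Finset.erase_subset v s)
    have ht' := ht.mono (Finset.erase_subset w t)
    have pos : ∀ {v : Euc m} {s : Finset (Euc m)}, v ∈ s → Chain Z s → (∀ u ∈ s, sub Z u v) →
        (x = v ∨ ∃ a b : ℝ, 0 < a ∧ 0 < b ∧ a + b = 1 ∧
      ∃ p ∈ convexHull ℝ ((s.erase v : Finset (Euc m)) : Set (Euc m)), x = a • v + b • p) →
        cl (nn Z v) v x ∧ cl (nn Z v) x v := by
      intro v s hv hs hvt h
      rcases h with rfl | ⟨a, b, ha, hb, hab, p, hp, rfl⟩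
      · exact ⟨cl_self _ _, cl_self _ _⟩
      · exact cl_comb (Chain.conv_sub (fun u hu => hvt u (Finset.mem_of_mem_erase hu)) hp) ha hb.le hab
    have done1 : x ∈ convexHull ℝ ((s.erase v : Finset (Euc m)) : Set (Euc m)) →
        x ∈ convexHull ℝ ((s ∩ t : Finset (Euc m)) : Set (Euc m)) := fun h =>
      convexHull_mono (by exact_mod_cast Finset.inter_subset_inter_right (Finset.erase_subset v s))
        (ih _ t hs' ht (by omega) x h hxt)
    have done2 : x ∈ convexHull ℝ ((t.erase w : Finset (Euc m)) : Set (Euc m)) →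
        x ∈ convexHull ℝ ((s ∩ t : Finset (Euc m)) : Set (Euc m)) := fun h =>
      convexHull_mono (by exact_mod_cast Finset.inter_subset_inter_left (Finset.erase_subset w t))
        (ih s _ hs ht' (by omega) x hxs h)
    have key1 : x ∈ convexHull ℝ ((s.erase v : Finset (Euc m)) : Set (Euc m)) ∨ (x = v ∨ ∃ a b : ℝ, 0 < a ∧ 0 < b ∧ a + b = 1 ∧
      ∃ p ∈ convexHull ℝ ((s.erase v : Finset (Euc m)) : Set (Euc m)), x = a • v + b • p) := by
      rcases conv_cases hv hxs with h | h | h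
      exacts [Or.inr (Or.inl h), Or.inl h, Or.inr (Or.inr h)]
    have key2 : x ∈ convexHull ℝ ((t.erase w : Finset (Euc m)) : Set (Euc m)) ∨ (x = w ∨ ∃ a b : ℝ, 0 < a ∧ 0 < b ∧ a + b = 1 ∧
      ∃ p ∈ convexHull ℝ ((t.erase w : Finset (Euc m)) : Set (Euc m)), x = a • w + b • p) := by
      rcases conv_cases hw hxt with h | h | h
      exacts [Or.inr (Or.inl h), Or.inl h, Or.inr (Or.inr h)]
    rcases key1 with h | k1
    · exact done1 h
    rcases key2 with h | k2
    · exact done2 h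
    have c1 := pos hv hs hvt k1
    have c2 := pos hw ht hwt k2
    have hvw : v = w := V_unique D (hs.V v hv) (ht.V w hw) c1.1 c1.2 c2.1 c2.2
    subst hvw
    have hvst : v ∈ convexHull ℝ ((s ∩ t : Finset (Euc m)) : Set (Euc m)) :=
      subset_convexHull _ _ (by simp [hv, hw])
    rcases k1 with rfl | ⟨a, b, ha, hb, hab, p, hp, hx1⟩
    · exact hvst
    rcases k2 with rfl | ⟨a', b', ha', hb', hab', q, hq, hx2⟩
    · exact hvst
    have e : a • v + b • p = a' • v + b' • q := by rw [← hx1, ← hx2]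
    obtain ⟨i, hi⟩ := hs.bdry D hv hvt hp
    obtain ⟨j, hj⟩ := ht.bdry D hw hwt hq
    have sp := Chain.conv_sub (fun u hu => hvt u (Finset.mem_of_mem_erase hu)) hp
    have sq := Chain.conv_sub (fun u hu => hwt u (Finset.mem_of_mem_erase hu)) hq
    have hbb : b = b' := le_antisymm (radial_le (hs.V v hv) hi sq hb hab hb' hab' e)
      (radial_le (hs.V v hv) hj sp hb' hab' hb hab e.symm)
    subst hbb
    have haa : a = a' := by linarith
    subst haa
    have hpq : p = q := smul_right_injective _ hb.ne' (add_left_cancel e)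
    subst hpq
    have := ih _ _ hs' ht' (by omega) p hp hq
    have hp2 : p ∈ convexHull ℝ ((s ∩ t : Finset (Euc m)) : Set (Euc m)) :=
      convexHull_mono (by exact_mod_cast Finset.inter_subset_inter (Finset.erase_subset v s) (Finset.erase_subset v t)) this
    rw [hx1]
    exact (convex_convexHull ℝ _) hvst hp2 ha.le hb.le hab

lemma Chain.indep (D : Dat Z) {s : Finset (Euc m)} (h : Chain Z s) :
    AffineIndependent ℝ ((↑) : s → Euc m) := by
  classical
  by_contra hcon
  obtain ⟨I, x, hx1, hx2⟩ := Convex.radon_partition hcon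
  have key : ∀ J : Set s, ∃ t : Finset (Euc m), t ⊆ s ∧ (t : Set (Euc m)) = ((↑) : s → Euc m) '' J := by
    intro J
    refine ⟨(J.toFinite.toFinset).image (↑), ?_, by simp⟩
    intro z hz
    simp only [Finset.mem_image] at hz
    obtain ⟨w, _, rfl⟩ := hz
    exact w.2
  obtain ⟨t1, ht1, e1⟩ := key I
  obtain ⟨t2, ht2, e2⟩ := key Iᶜ
  rw [← e1] at hx1
  rw [← e2] at hx2
  have := inter_aux D _ t1 t2 (h.mono ht1) (h.mono ht2) le_rfl x hx1 hx2
  have hemp : ((t1 ∩ t2 : Finset (Euc m)) : Set (Euc m)) = ∅ := by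
    rw [Finset.coe_inter, e1, e2, ← Set.image_inter Subtype.val_injective]; simp
  rw [hemp] at this; simp at this

def KK (D : Dat Z) : Geometry.SimplicialComplex ℝ (Euc m) where
  faces := {s | s.Nonempty ∧ ∃ t, s ⊆ t ∧ Chain Z t ∧ t.card = m + 1}
  isRelLowerSet_faces := by
    intro s hs
    obtain ⟨h1, t, hst, ht⟩ := hs
    exact ⟨h1, fun r hrs hrn => ⟨hrn, t, Finset.Subset.trans hrs hst, ht⟩⟩
  indep := by
    intro s hs
    obtain ⟨h1, t, hst, ht, _⟩ := hs
    exact (ht.mono hst).indep D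
  inter_subset_convexHull := by
    classical
    intro s t hs ht x hx
    obtain ⟨_, s', hs', hs'', _⟩ := hs
    obtain ⟨_, t', ht', ht'', _⟩ := ht
    have := inter_aux D _ s t (hs''.mono hs') (ht''.mono ht') le_rfl x hx.1 hx.2
    rwa [Finset.coe_inter] at this


/-- heights of affine combinations -/
lemma height_comb {S : AffineSubspace ℝ (Euc m)} {b p : Euc m} (hp : p ∈ S) {a c : ℝ}
    (ha : 0 ≤ a) (hac : a + c = 1) :
    a * infDist b (S : Set (Euc m)) ≤ infDist (a • b + c • p) (S : Set (Euc m)) := by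
  rcases ha.eq_or_lt with rfl | ha
  · rw [zero_mul]; exact infDist_nonneg
  refine (le_infDist ⟨p, hp⟩).2 fun {y} hy => ?_
  have hz : AffineMap.lineMap y p (-(c / a)) ∈ S := AffineMap.lineMap_mem _ hy hp
  have h1 := infDist_le_dist_of_mem (x := b) hz
  have e : b - AffineMap.lineMap y p (-(c / a)) = a⁻¹ • (a • b + c • p - y) := by
    rw [AffineMap.lineMap_apply_module]
    have hc : c = 1 - a := by linarith
    subst hc
    match_scalars <;> field_simp <;> ring
  rw [dist_eq_norm, e, norm_smul, norm_inv, Real.norm_of_nonneg ha.le, ← dist_eq_norm] at h1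
  calc a * infDist b (S : Set (Euc m)) ≤ a * (a⁻¹ * dist (a • b + c • p) y) :=
        mul_le_mul_of_nonneg_left h1 ha.le
    _ = _ := by field_simp

lemma centroid_split [DecidableEq (Euc m)] {ω : Finset (Euc m)} (hω : 2 ≤ ω.card) {b : Euc m} (hb : b ∈ ω) :
    ω.centroid ℝ id = ((ω.card : ℝ)⁻¹) • b + (1 - (ω.card : ℝ)⁻¹) • (ω.erase b).centroid ℝ id := by
  have h1 := Finset.sum_centroidWeights_eq_one_of_card_ne_zero ℝ (s := ω) (by omega)
  have hc := Finset.card_erase_add_one hb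
  have h2 := Finset.sum_centroidWeights_eq_one_of_card_ne_zero ℝ (s := ω.erase b) (by omega)
  rw [Finset.centroid_def, Finset.centroid_def,
    Finset.affineCombination_eq_linear_combination _ _ _ h1,
    Finset.affineCombination_eq_linear_combination _ _ _ h2,
    ← Finset.add_sum_erase _ _ hb]
  simp only [Finset.centroidWeights_apply, id]
  congr 1
  rw [Finset.smul_sum]
  refine Finset.sum_congr rfl fun x _ => ?_
  rw [smul_smul]
  congr 1
  have : (ω.card : ℝ) = (ω.erase b).card + 1 := by exact_mod_cast hc.symm
  rw [this]
  have h3 : (0:ℝ) < (ω.erase b).card := by exact_mod_cast (by omega : 0 < (ω.erase b).card)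
  field_simp
  try ring

lemma eq_erase [DecidableEq (Euc m)] {ω t : Finset (Euc m)} (h : t ⊆ ω) (hc : t.card + 1 = ω.card) :
    ∃ b ∈ ω, t = ω.erase b := by
  obtain ⟨b, hb, rfl⟩ : ∃ b, b ∉ t ∧ insert b t = ω := by
    have : (ω \ t).card = 1 := by rw [Finset.card_sdiff_of_subset h]; omega
    obtain ⟨b, hb⟩ := Finset.card_eq_one.1 this
    have hb' : b ∈ ω \ t := by rw [hb]; simp
    rw [Finset.mem_sdiff] at hb'
    refine ⟨b, hb'.2, Finset.eq_of_subset_of_card_le (Finset.insert_subset hb'.1 h) ?_⟩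
    rw [Finset.card_insert_of_notMem hb'.2]; omega
  exact ⟨b, by simp, (Finset.erase_insert hb).symm⟩

open Classical in
/-- all heights at least `η` -/
def Hts (σ : Finset (Euc m)) (η : ℝ) : Prop :=
  ∀ b ∈ σ, η ≤ infDist b ((affineSpan ℝ ((σ.erase b : Finset (Euc m)) : Set (Euc m)) : AffineSubspace ℝ (Euc m)) : Set (Euc m))

lemma Hts.mono {σ ω : Finset (Euc m)} {η : ℝ} (h : Hts σ η) (hs : ω ⊆ σ) (hc : 2 ≤ ω.card) : Hts ω η := by
  classical
  intro b hb
  refine (h b (hs hb)).trans ?_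
  refine infDist_le_infDist_of_subset ?_ ?_
  · have : affineSpan ℝ ((ω.erase b : Finset (Euc m)) : Set (Euc m)) ≤
      affineSpan ℝ ((σ.erase b : Finset (Euc m)) : Set (Euc m)) :=
        affineSpan_mono ℝ (by exact_mod_cast Finset.erase_subset_erase b hs)
    exact this
  · rw [affineSpan_nonempty]
    have := Finset.card_erase_add_one hb
    have : (ω.erase b).Nonempty := Finset.card_pos.1 (by omega)
    exact Finset.coe_nonempty.2 this

lemma dist_le_simpDiam {σ : Finset (Euc m)} {x y : Euc m} (hx : x ∈ convexHull ℝ (σ : Set (Euc m)))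
    (hy : y ∈ convexHull ℝ (σ : Set (Euc m))) : dist x y ≤ simpDiam m σ :=
  dist_le_diam_of_mem (isBounded_convexHull.2 σ.finite_toSet.isBounded) hx hy

lemma beta_bounds {σ : Finset (Euc m)} (hσ : σ.card = m + 1) (hm : 2 ≤ m) {η : ℝ} (hη : 0 < η)
    (h : Hts σ η) : η / (m + 1) ≤ betaLow m σ ∧ betaLow m σ ≤ betaHigh m σ ∧
      betaHigh m σ ≤ simpDiam m σ := by
  classical
  have key : ∀ ω ⊆ σ, 2 ≤ ω.card → ∀ t ⊆ ω, t.card = ω.card - 1 →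
      η / (m + 1) ≤ infDist (ω.centroid ℝ id)
          ((affineSpan ℝ (t : Set (Euc m)) : AffineSubspace ℝ (Euc m)) : Set (Euc m)) ∧
      infDist (ω.centroid ℝ id)
          ((affineSpan ℝ (t : Set (Euc m)) : AffineSubspace ℝ (Euc m)) : Set (Euc m)) ≤ simpDiam m σ := by
    intro ω hω hc t ht htc
    obtain ⟨b, hb, rfl⟩ := eq_erase ht (by omega)
    constructor
    · rw [centroid_split hc hb]
      have hpos : (0:ℝ) < ω.card := by exact_mod_cast (by omega : 0 < ω.card)
      have hce := Finset.card_erase_add_one hb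
      have h2 := convexHull_subset_affineSpan _
        (Finset.centroid_mem_convexHull (R := ℝ) (ω.erase b) (Finset.card_pos.1 (by omega)))
      refine le_trans ?_ (height_comb (b := b) ?_ (inv_nonneg.2 hpos.le) (by ring))
      · have h3 := (h.mono hω hc) b hb
        have h4 : η / (m + 1) ≤ (ω.card : ℝ)⁻¹ * η := by
          rw [div_eq_inv_mul]
          apply mul_le_mul_of_nonneg_right _ hη.le
          apply inv_anti₀ hpos
          have := Finset.card_le_card hω
          rw [hσ] at this
          exact_mod_cast this
        refine h4.trans (mul_le_mul_of_nonneg_left ?_ (inv_nonneg.2 hpos.le))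
        convert h3
      · exact h2
    · have : (ω.erase b).Nonempty := Finset.card_pos.1 (by omega)
      obtain ⟨q, hq⟩ := this
      refine (infDist_le_dist_of_mem (subset_affineSpan ℝ _ (by exact_mod_cast hq))).trans ?_
      apply dist_le_simpDiam
      · exact convexHull_mono (by exact_mod_cast hω) (Finset.centroid_mem_convexHull _ (Finset.card_pos.1 (by omega)))
      · exact subset_convexHull _ _ (by exact_mod_cast hω (ht hq))
  have ex : ∀ ω : Finset (Euc m), 2 ≤ ω.card → ∃ t ⊆ ω, t.card = ω.card - 1 := by
    intro ω hω
    exact Finset.exists_subset_card_eq (by omega)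
  have lowf : ∀ ω ⊆ σ, 2 ≤ ω.card → η / (m + 1) ≤ faceBetaMin m ω := by
    intro ω hω hc
    obtain ⟨t, ht, htc⟩ := ex ω hc
    refine le_csInf ⟨_, t, ht, htc, rfl⟩ ?_
    rintro d ⟨t, ht, htc, rfl⟩
    exact (key ω hω hc t ht htc).1
  have highf : ∀ ω ⊆ σ, 2 ≤ ω.card → faceBetaMax m ω ≤ simpDiam m σ := by
    intro ω hω hc
    obtain ⟨t, ht, htc⟩ := ex ω hc
    refine csSup_le ⟨_, t, ht, htc, rfl⟩ ?_
    rintro d ⟨t, ht, htc, rfl⟩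
    exact (key ω hω hc t ht htc).2
  have hσ2 : 2 ≤ σ.card := by omega
  refine ⟨?_, ?_, ?_⟩
  · refine le_csInf ⟨_, σ, Finset.Subset.refl _, hσ2, rfl⟩ ?_
    rintro d ⟨ω, hω, hc, rfl⟩
    exact lowf ω hω hc
  · have h1 : betaLow m σ ≤ faceBetaMin m σ := by
      apply csInf_le
      · refine ⟨η / (m + 1), ?_⟩
        rintro d ⟨ω, hω, hc, rfl⟩
        exact lowf ω hω hc
      · exact ⟨σ, Finset.Subset.refl _, hσ2, rfl⟩
    have h3 : faceBetaMax m σ ≤ betaHigh m σ := by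
      apply le_csSup
      · refine ⟨simpDiam m σ, ?_⟩
        rintro d ⟨ω, hω, hc, rfl⟩
        exact highf ω hω hc
      · exact ⟨σ, Finset.Subset.refl _, hσ2, rfl⟩
    refine h1.trans (le_trans ?_ h3)
    obtain ⟨t, ht, htc⟩ := ex σ hσ2
    refine le_trans (csInf_le (a := infDist (σ.centroid ℝ id)
          ((affineSpan ℝ (t : Set (Euc m)) : AffineSubspace ℝ (Euc m)) : Set (Euc m))) ?_ ⟨t, ht, htc, rfl⟩) (le_csSup ?_ ⟨t, ht, htc, rfl⟩)
    · refine ⟨η / (m + 1), ?_⟩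
      rintro d ⟨t, ht, htc, rfl⟩
      exact (key σ (Finset.Subset.refl _) hσ2 t ht htc).1
    · refine ⟨simpDiam m σ, ?_⟩
      rintro d ⟨t, ht, htc, rfl⟩
      exact (key σ (Finset.Subset.refl _) hσ2 t ht htc).2
  · refine csSup_le ⟨_, σ, Finset.Subset.refl _, hσ2, rfl⟩ ?_
    rintro d ⟨ω, hω, hc, rfl⟩
    exact highf ω hω hc

lemma face_path {ω : Finset (Euc m)} {η L μ : ℝ} (hη : 0 < η) (h : Hts ω η)
    (hL : simpDiam m ω ≤ L) (hμ : 1 + 2 * (L / η) ≤ μ) (hμ1 : 1 ≤ μ)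
    {j : ℕ} (hj : 1 ≤ j) (hc : ω.card = j + 2) {ω₁ ω₂ : Finset (Euc m)} (h1 : ω₁ ⊆ ω) (h2 : ω₂ ⊆ ω)
    (hc1 : ω₁.card = j + 1) (hc2 : ω₂.card = j + 1) {x y : Euc m}
    (hx : x ∈ convexHull ℝ (ω₁ : Set (Euc m))) (hy : y ∈ convexHull ℝ (ω₂ : Set (Euc m))) :
    ∃ v ∈ convexHull ℝ (ω₁ : Set (Euc m)) ∩ convexHull ℝ (ω₂ : Set (Euc m)),
      dist x v + dist v y ≤ μ * dist x y := by
  classical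
  obtain ⟨a, ha, rfl⟩ := eq_erase h1 (by omega)
  obtain ⟨b, hb, rfl⟩ := eq_erase h2 (by omega)
  have triv : x ∈ convexHull ℝ ((ω.erase b : Finset (Euc m)) : Set (Euc m)) →
    ∃ v ∈ convexHull ℝ ((ω.erase a : Finset (Euc m)) : Set (Euc m)) ∩ convexHull ℝ ((ω.erase b : Finset (Euc m)) : Set (Euc m)),
      dist x v + dist v y ≤ μ * dist x y := by
    intro hxb
    refine ⟨x, ⟨hx, hxb⟩, ?_⟩
    rw [dist_self, zero_add]
    exact le_mul_of_one_le_left dist_nonneg hμ1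
  by_cases hab : a = b
  · subst hab; exact triv hx
  have hba : b ∈ ω.erase a := Finset.mem_erase.2 ⟨fun h => hab h.symm, hb⟩
  have sub1 : (((ω.erase a).erase b : Finset (Euc m)) : Set (Euc m)) ⊆ ((ω.erase a : Finset (Euc m)) : Set (Euc m)) := by
    exact_mod_cast Finset.erase_subset _ _
  have sub2 : (((ω.erase a).erase b : Finset (Euc m)) : Set (Euc m)) ⊆ ((ω.erase b : Finset (Euc m)) : Set (Euc m)) := by
    exact_mod_cast Finset.erase_subset_erase _ (Finset.erase_subset _ _)
  have main : ∀ α β : ℝ, 0 ≤ α → α + β = 1 → ∀ p ∈ convexHull ℝ (((ω.erase a).erase b : Finset (Euc m)) : Set (Euc m)),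
      x = α • b + β • p → ∃ v ∈ convexHull ℝ ((ω.erase a : Finset (Euc m)) : Set (Euc m)) ∩ convexHull ℝ ((ω.erase b : Finset (Euc m)) : Set (Euc m)),
      dist x v + dist v y ≤ μ * dist x y := by
    intro α β hα hαβ p hp hxp
    refine ⟨p, ⟨convexHull_mono sub1 hp, convexHull_mono sub2 hp⟩, ?_⟩
    have hpS := convexHull_subset_affineSpan _ (convexHull_mono sub2 hp)
    have hyS := convexHull_subset_affineSpan _ hy
    have k1 := height_comb (b := b) hpS hα hαβ
    rw [← hxp] at k1
    have k2 : η ≤ infDist b _ := h b hb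
    have k3 := infDist_le_dist_of_mem (x := x) hyS
    have k4 : α * η ≤ dist x y := by
      refine le_trans (mul_le_mul_of_nonneg_left ?_ hα) (k1.trans k3)
      convert k2
    have k5 : dist b p ≤ L := by
      refine le_trans (dist_le_simpDiam (subset_convexHull _ _ (by exact_mod_cast hb)) ?_) hL
      exact convexHull_mono (by exact_mod_cast h2) (convexHull_mono sub2 hp)
    have k6 : dist x p = α * dist b p := by
      have : x - p = α • (b - p) := by
        rw [hxp]; have : β = 1 - α := by linarith
        rw [this]; module
      rw [dist_eq_norm, this, norm_smul, Real.norm_of_nonneg hα, dist_eq_norm]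
    have k7 : dist x p ≤ L / η * dist x y := by
      have hL0 : 0 ≤ L := le_trans dist_nonneg k5
      calc dist x p = α * dist b p := k6
        _ ≤ α * L := mul_le_mul_of_nonneg_left k5 hα
        _ = L / η * (α * η) := by field_simp
        _ ≤ _ := mul_le_mul_of_nonneg_left k4 (by positivity)
    have k8 := dist_triangle_left p y x
    have k9 := mul_le_mul_of_nonneg_right hμ (dist_nonneg (x := x) (y := y))
    nlinarith
  rcases conv_cases hba hx with hxb | hxb | ⟨α, β, hα, hβ, hαβ, p, hp, hxp⟩
  · have hcc := Finset.card_erase_add_one hba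
    have : ((ω.erase a).erase b).Nonempty := Finset.card_pos.1 (by omega)
    obtain ⟨c, hcm⟩ := this
    exact main 1 0 zero_le_one (by norm_num) c (subset_convexHull _ _ (by exact_mod_cast hcm)) (by simp [hxb])
  · exact triv (convexHull_mono sub2 hxb)
  · exact main α β hα.le hαβ p hp hxp


def gridG (m : ℕ) : Set (Euc m) :=
  Set.range (fun f : Fin m → Fin 5 => (WithLp.toLp 2 (fun i => ((f i : ℕ) : ℝ) / 4) : Euc m))

lemma gridG_fin (m : ℕ) : (gridG m).Finite := Set.finite_range _

lemma fin_pos_lower {ι : Type*} {T : Set ι} (hT : T.Finite) (f : ι → ℝ) :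
    ∃ c : ℝ, 0 < c ∧ ∀ t ∈ T, 0 < f t → c ≤ f t := by
  induction T, hT using Set.Finite.induction_on with
  | empty => exact ⟨1, one_pos, by simp⟩
  | @insert a S _ _ ih =>
    obtain ⟨c, hc, h⟩ := ih
    by_cases ha : 0 < f a
    · refine ⟨min c (f a), lt_min hc ha, ?_⟩
      intro t ht h0
      rcases Set.mem_insert_iff.1 ht with rfl | ht
      · exact min_le_right _ _
      · exact (min_le_left _ _).trans (h t ht h0)
    · refine ⟨c, hc, ?_⟩
      intro t ht h0
      rcases Set.mem_insert_iff.1 ht with rfl | ht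
      · exact absurd h0 ha
      · exact h t ht h0

lemma shape_const (m : ℕ) : ∃ c : ℝ, 0 < c ∧ ∀ (b : Euc m) (T : Set (Euc m)), b ∈ gridG m → T ⊆ gridG m →
    0 < infDist b ((affineSpan ℝ T : AffineSubspace ℝ (Euc m)) : Set (Euc m)) →
    c ≤ infDist b ((affineSpan ℝ T : AffineSubspace ℝ (Euc m)) : Set (Euc m)) := by
  have hfin : ((gridG m) ×ˢ (𝒫 (gridG m))).Finite := (gridG_fin m).prod (gridG_fin m).powerset
  obtain ⟨c, hc, h⟩ := fin_pos_lower hfin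
    (fun q => infDist q.1 ((affineSpan ℝ q.2 : AffineSubspace ℝ (Euc m)) : Set (Euc m)))
  exact ⟨c, hc, fun b T hb hT h0 => h (b, T) ⟨hb, hT⟩ h0⟩

/-- the vertices of a chain, normalised, lie on the grid -/
lemma mem_grid (D : Dat Z) {u v : Euc m} (hu : isV Z u) (hv : isV Z v) (h : sub Z u v) (a : Euc m)
    (ha : ∀ i, a i = ⌊(2:ℝ)^(nn Z v) * v i⌋) : (2:ℝ)^(nn Z v) • u - a ∈ gridG m := by
  have hn1 := sub_nn D hv.nm h
  have hn2 := sub_nn_le D hv.nm h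
  have key : ∀ i, ∃ k : Fin 5, (2:ℝ)^(nn Z v) * u i - a i = ((k : ℕ) : ℝ) / 4 := by
    intro i
    have hc := hu.c i
    have hint : ∃ z : ℤ, 4 * ((2:ℝ)^(nn Z v) * u i) = z := by
      rcases (by omega : nn Z u = nn Z v ∨ nn Z u = nn Z v + 1) with e | e
      · refine ⟨2 * (⌊(2:ℝ)^(nn Z u) * u i⌋ + ⌈(2:ℝ)^(nn Z u) * u i⌉), ?_⟩
        rw [← e]
        conv_lhs => rw [hc]
        unfold ctr; rw [zpow_neg]; push_cast; field_simp; ring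
      · refine ⟨(⌊(2:ℝ)^(nn Z u) * u i⌋ + ⌈(2:ℝ)^(nn Z u) * u i⌉), ?_⟩
        have e2 : (2:ℝ)^(nn Z v) = (2:ℝ)^(nn Z u) / 2 := by
          rw [e, zpow_add₀ (by norm_num)]; simp
        rw [e2]
        conv_lhs => rw [hc]
        unfold ctr; rw [zpow_neg]; push_cast; field_simp; ring
    obtain ⟨z, hz⟩ := hint
    have h1 := h i
    have h2 : (⌈(2:ℝ)^(nn Z v) * v i⌉:ℝ) ≤ ⌊(2:ℝ)^(nn Z v) * v i⌋ + 1 := by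
      exact_mod_cast Int.ceil_le_floor_add_one _
    rw [ha]
    have g1 := h1.1
    have g2 := h1.2
    set A := ⌊(2:ℝ)^(nn Z v) * v i⌋
    have l1 : (4 * A : ℤ) ≤ z := by
      have : ((4 * A : ℤ) : ℝ) ≤ z := by push_cast; linarith
      exact_mod_cast this
    have l2 : z ≤ 4 * A + 4 := by
      have : (z : ℝ) ≤ ((4 * A + 4 : ℤ) : ℝ) := by push_cast; linarith
      exact_mod_cast this
    refine ⟨⟨(z - 4 * A).toNat, by omega⟩, ?_⟩
    have e3 : (((z - 4 * A).toNat : ℤ) : ℝ) = ((z - 4 * A : ℤ) : ℝ) := by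
      rw [Int.toNat_of_nonneg (by omega)]
    have e4 : (((z - 4 * A).toNat : ℕ) : ℝ) = (z : ℝ) - 4 * A := by
      rw [← Int.cast_natCast, e3]; push_cast; ring
    simp only [e4]; linarith
  choose f hf using key
  refine ⟨f, ?_⟩
  ext i
  simp only [PiLp.sub_apply, PiLp.smul_apply, smul_eq_mul]
  exact (hf i).symm

lemma chain_hts (D : Dat Z) {c : ℝ} (hc : ∀ (b : Euc m) (T : Set (Euc m)), b ∈ gridG m → T ⊆ gridG m →
    0 < infDist b ((affineSpan ℝ T : AffineSubspace ℝ (Euc m)) : Set (Euc m)) →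
    c ≤ infDist b ((affineSpan ℝ T : AffineSubspace ℝ (Euc m)) : Set (Euc m)))
    {s : Finset (Euc m)} (hs : Chain Z s) (hcard : 2 ≤ s.card) {v : Euc m} (hv : v ∈ s)
    (htop : ∀ u ∈ s, sub Z u v) : Hts s (c * (2:ℝ)^(-(nn Z v))) := by
  classical
  intro b hb
  set n := nn Z v with hn
  let a : Euc m := WithLp.toLp 2 (fun i => (⌊(2:ℝ)^n * v i⌋ : ℝ))
  let φ : Euc m →ᵃ[ℝ] Euc m := ((2:ℝ)^n • LinearMap.id : Euc m →ₗ[ℝ] Euc m).toAffineMap - AffineMap.const ℝ (Euc m) a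
  have hφ : ∀ x, φ x = (2:ℝ)^n • x - a := fun x => by simp [φ]
  have hgrid : ∀ u ∈ s, φ u ∈ gridG m := fun u hu => by
    rw [hφ]; exact mem_grid D (hs.V u hu) (hs.V v hv) (htop u hu) a (fun i => rfl)
  have hdist : ∀ x y, dist (φ x) (φ y) = (2:ℝ)^n * dist x y := fun x y => by
    rw [hφ, hφ, dist_sub_right, dist_smul₀, Real.norm_of_nonneg (p2 n).le]
  have hce := Finset.card_erase_add_one hb
  have hne : ((s.erase b : Finset (Euc m)) : Set (Euc m)).Nonempty :=
    Finset.coe_nonempty.2 (Finset.card_pos.1 (by omega))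
  have hnot : b ∉ affineSpan ℝ ((s.erase b : Finset (Euc m)) : Set (Euc m)) := by
    have := (hs.indep D).notMem_affineSpan_diff ⟨b, hb⟩ Set.univ
    have e : ((↑) : s → Euc m) '' (Set.univ \ {⟨b, hb⟩}) = ((s.erase b : Finset (Euc m)) : Set (Euc m)) := by
      ext z
      simp only [Set.mem_image, Set.mem_diff, Set.mem_univ, true_and, Set.mem_singleton_iff,
        Finset.coe_erase, Finset.mem_coe, Subtype.exists, Subtype.mk.injEq]
      constructor
      · rintro ⟨w, hw, h1, rfl⟩; exact ⟨hw, h1⟩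
      · rintro ⟨h1, h2⟩; exact ⟨z, h1, h2, rfl⟩
    rwa [e] at this
  have hmap : affineSpan ℝ (φ '' ((s.erase b : Finset (Euc m)) : Set (Euc m))) =
      (affineSpan ℝ ((s.erase b : Finset (Euc m)) : Set (Euc m))).map φ :=
    (AffineSubspace.map_span φ _).symm
  have hpos : 0 < infDist (φ b) ((affineSpan ℝ (φ '' ((s.erase b : Finset (Euc m)) : Set (Euc m))) : AffineSubspace ℝ (Euc m)) : Set (Euc m)) := by
    rw [← (AffineSubspace.closed_of_finiteDimensional _).notMem_iff_infDist_pos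
      ((affineSpan_nonempty ℝ).2 (hne.image φ))]
    rw [hmap]
    intro hcon
    obtain ⟨y, hy, hyb⟩ := hcon
    have : y = b := by
      have h1 := hdist y b
      have h2 : dist (φ y) (φ b) = 0 := by rw [hyb, dist_self]
      rw [h2] at h1
      have := (p2 n).ne'
      have h3 : dist y b = 0 := by
        rcases mul_eq_zero.1 h1.symm with h | h
        · exact absurd h this
        · exact h
      exact dist_eq_zero.1 h3
    rw [this] at hy
    exact hnot hy
  have hlow := hc (φ b) (φ '' ((s.erase b : Finset (Euc m)) : Set (Euc m))) (hgrid b hb) (by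
    rintro _ ⟨u, hu, rfl⟩
    exact hgrid u (Finset.mem_of_mem_erase (Finset.mem_coe.1 hu))) hpos
  refine (le_infDist ((affineSpan_nonempty ℝ).2 ?_)).2 ?_
  · exact hne
  intro y hy
  have hy' : φ y ∈ affineSpan ℝ (φ '' ((s.erase b : Finset (Euc m)) : Set (Euc m))) := by
    rw [hmap]; exact ⟨y, hy, rfl⟩
  have h1 := hlow.trans (infDist_le_dist_of_mem hy')
  rw [hdist] at h1
  rw [zpow_neg, ← div_eq_mul_inv, div_le_iff₀ (p2 n)]; linarith

lemma chain_diam_le {s : Finset (Euc m)} {v : Euc m} (hv : isV Z v)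
    (htop : ∀ u ∈ s, sub Z u v) : simpDiam m s ≤ Real.sqrt m * (2:ℝ)^(-(nn Z v)) := by
  have hp := p2 (-(nn Z v))
  refine diam_le_of_forall_dist_le (by positivity) ?_
  intro x hx y hy
  apply dist_le_of_coord hp.le
  intro i
  have h1 := half_dist hv (Chain.conv_sub htop hx) i
  have h2 := half_dist hv (Chain.conv_sub htop hy) i
  rw [abs_le] at *
  constructor <;> linarith

lemma chain_diam_ge (D : Dat Z) {s : Finset (Euc m)} (hs : Chain Z s) (hcard : 2 ≤ s.card) {v : Euc m} (hv : v ∈ s)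
    (htop : ∀ u ∈ s, sub Z u v) : (2:ℝ)^(-(nn Z v)) / 2 ≤ simpDiam m s := by
  obtain ⟨u, hu, hne⟩ := Finset.exists_mem_ne (by omega : 1 < s.card) v
  obtain ⟨i, hi⟩ := exists_wall D (hs.V u hu) (hs.V v hv) (htop u hu) hne
  rw [← wall_dist (hs.V v hv) hi]
  exact (coord_le_dist u v i).trans (dist_le_simpDiam (subset_convexHull _ _ hu) (subset_convexHull _ _ hv))

lemma setDist_ge (D : Dat Z) {s : Finset (Euc m)} {v : Euc m} (hv : v ∈ s) (hvV : isV Z v)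
    (htop : ∀ u ∈ s, sub Z u v) :
    Real.sqrt m * (2:ℝ)^(-(nn Z v)) ≤ setDist m (convexHull ℝ (s : Set (Euc m))) Z := by
  obtain ⟨z, hz⟩ := D.hne
  refine le_csInf ⟨_, v, subset_convexHull _ _ hv, z, hz, rfl⟩ ?_
  rintro _ ⟨x, hx, z, hz, rfl⟩
  exact (sub_infDist D hvV.nm (Chain.conv_sub htop hx)).trans (infDist_le_dist_of_mem hz)

lemma setDist_le (D : Dat Z) {s : Finset (Euc m)} {v : Euc m} (hv : v ∈ s) (hvV : isV Z v) :
    setDist m (convexHull ℝ (s : Set (Euc m))) Z ≤ 4 * Real.sqrt m * (2:ℝ)^(-(nn Z v)) := by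
  have hnot : ¬ PP Z (nn Z v - 1) v := fun h => by
    have := nn_le D h
    omega
  unfold PP at hnot
  push Not at hnot
  obtain ⟨p, hp, hlt⟩ := hnot
  obtain ⟨z, hz, hpz⟩ := (infDist_lt_iff D.hne).1 hlt
  have h1 : dist v p ≤ Real.sqrt m * (2:ℝ)^(-(nn Z v - 1)) :=
    dist_le_of_coord (p2 _).le (fun i => near_dist (hp i))
  have e : (2:ℝ)^(-(nn Z v - 1)) = 2 * (2:ℝ)^(-(nn Z v)) := by
    rw [neg_sub, sub_eq_add_neg, zpow_add₀ (by norm_num)]; simp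
  have h2 := dist_triangle v p z
  have h3 : setDist m (convexHull ℝ (s : Set (Euc m))) Z ≤ dist v z := by
    refine csInf_le ⟨0, ?_⟩ ⟨v, subset_convexHull _ _ hv, z, hz, rfl⟩
    rintro _ ⟨x, hx, z, hz, rfl⟩
    exact dist_nonneg
  rw [e] at h1 hpz
  linarith

end Whit

/-- **Lemma (uniform quasiconvexity of pairs of faces in the Whitney triangulation).**
For every `m ≥ 2` there is `μ ≥ 1` depending only on `m` such that every nonempty proper
closed `Z ⊊ ℝ^m` admits a Whitney triangulation `Σ` of `ℝ^m ∖ Z` with the property: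
for every `1 ≤ j ≤ m−1`, every `(j+1)`-simplex `ω ∈ Σ`, any two `j`-faces `ω₁, ω₂` of
`ω` and any `x ∈ ω₁`, `y ∈ ω₂`, there is `v ∈ ω₁ ∩ ω₂` with `|x−v| + |v−y| ≤ μ|x−y|`. -/
theorem whitney_triangulation_face_path (m : ℕ) (hm : 2 ≤ m) :
    ∃ μ : ℝ, 1 ≤ μ ∧ ∃ D₁ D₂ : ℝ, 0 < D₁ ∧ 0 < D₂ ∧
      ∀ Z : Set (Euc m), IsClosed Z → Z.Nonempty → Z ≠ Set.univ →
        ∃ K : Geometry.SimplicialComplex ℝ (Euc m),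
          WhitneyConclusions m D₁ D₂ Z K ∧
          ∀ j : ℕ, 1 ≤ j → j ≤ m - 1 →
            ∀ ω ∈ K.faces, ω.card = j + 2 →
              ∀ ω₁ ⊆ ω, ∀ ω₂ ⊆ ω, ω₁.card = j + 1 → ω₂.card = j + 1 →
                ∀ x ∈ convexHull ℝ (ω₁ : Set (Euc m)),
                  ∀ y ∈ convexHull ℝ (ω₂ : Set (Euc m)),
                    ∃ v ∈ convexHull ℝ (ω₁ : Set (Euc m)) ∩ convexHull ℝ (ω₂ : Set (Euc m)),
                      dist x v + dist v y ≤ μ * dist x y := by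
  obtain ⟨c, hc0, hc⟩ := Whit.shape_const m
  have hs0 : 0 < Real.sqrt m := Real.sqrt_pos.2 (by exact_mod_cast (by omega : 0 < m))
  have hμ1 : 1 ≤ 1 + 2 * (Real.sqrt m / c) := by
    have : 0 < Real.sqrt m / c := by positivity
    linarith
  refine ⟨1 + 2 * (Real.sqrt m / c), hμ1, 1 / 2, Real.sqrt m * (m + 1) / c + 1, by norm_num, by positivity, ?_⟩
  intro Z hZ hne _
  have D : Whit.Dat Z := ⟨hm, hZ, hne⟩
  refine ⟨Whit.KK D, ⟨?_, ?_, ?_⟩, ?_⟩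
  · rintro s ⟨_, t, hst, _, ht⟩
    rw [← ht]; exact Finset.card_le_card hst
  · ext x
    simp only [skel, Set.mem_iUnion, Set.mem_compl_iff, Set.mem_setOf_eq, exists_prop]
    constructor
    · rintro ⟨s, ⟨⟨hsn, t, hst, ht, _⟩, _⟩, hx⟩
      have hs := ht.mono hst
      obtain ⟨v, hv, htop⟩ := hs.top D hsn
      exact Whit.sub_notMem D (hs.V v hv).nm (Whit.Chain.conv_sub htop hx)
    · intro hx
      obtain ⟨v, hv, hF, hxv⟩ := Whit.exists_top D hx
      obtain ⟨s, hs, hsc, _, hxs⟩ := Whit.exists_chain D m v x hv hxv hF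
      exact ⟨s, ⟨⟨Finset.card_pos.1 (by omega), s, Finset.Subset.refl _, hs, hsc⟩, hsc⟩, hxs⟩
  · rintro σ ⟨hsn, t, hst, ht, _⟩ hcard
    have hs := ht.mono hst
    obtain ⟨v, hv, htop⟩ := hs.top D hsn
    have hvV := hs.V v hv
    have hp := Whit.p2 (-(Whit.nn Z v))
    have hη : 0 < c * (2:ℝ)^(-(Whit.nn Z v)) := by positivity
    have hH := Whit.chain_hts D hc hs (by omega) hv htop
    obtain ⟨b1, b2, b3⟩ := Whit.beta_bounds hcard hm hη hH
    have d1 := Whit.chain_diam_le hvV htop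
    have d2 := Whit.chain_diam_ge D hs (by omega) hv htop
    have d0 : 0 < simpDiam m σ := lt_of_lt_of_le (by positivity) d2
    have hl0 : 0 < betaLow m σ := lt_of_lt_of_le (by positivity) b1
    have hh0 : 0 < betaHigh m σ := lt_of_lt_of_le hl0 b2
    refine ⟨d1.trans (Whit.setDist_ge D hv hvV htop), ?_, ?_, ?_, ?_⟩
    · refine (Whit.setDist_le D hv hvV).trans ?_
      nlinarith
    · rw [lt_div_iff₀ hh0]; linarith
    · exact div_le_div_of_nonneg_left d0.le hl0 b2
    · rw [div_lt_iff₀ hl0]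
      have h1 : simpDiam m σ ≤ Real.sqrt m * (m + 1) / c * betaLow m σ := by
        calc simpDiam m σ ≤ Real.sqrt m * (2:ℝ)^(-(Whit.nn Z v)) := d1
          _ = Real.sqrt m * (m + 1) / c * (c * (2:ℝ)^(-(Whit.nn Z v)) / (m + 1)) := by field_simp
          _ ≤ _ := mul_le_mul_of_nonneg_left b1 (by positivity)
      rw [add_mul, one_mul]
      linarith
  · rintro j hj1 hj2 ω ⟨hsn, t, hst, ht, htc⟩ hcard ω₁ h1 ω₂ h2 hc1 hc2 x hx y hy
    obtain ⟨v, hv, htop⟩ := ht.top D (Finset.card_pos.1 (by omega))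
    have hvV := ht.V v hv
    have hp := Whit.p2 (-(Whit.nn Z v))
    have hη : 0 < c * (2:ℝ)^(-(Whit.nn Z v)) := by positivity
    have hH := (Whit.chain_hts D hc ht (by omega) hv htop).mono hst (by omega)
    have d1 := Whit.chain_diam_le (s := ω) hvV (fun u hu => htop u (hst hu))
    refine Whit.face_path hη hH d1 (le_of_eq ?_) hμ1 hj1 hcard h1 h2 hc1 hc2 hx hy
    congr 2
    field_simp

end
end
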